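/- arXiv:0708.2684 — 4 statements merged into one kernel-verified Lean document; each statement's English description precedes it below -/
import Mathlib

section
/- Let a > b > 0, let Ω = { x + iy : x²/a² + y²/b² ≤ 1 } ⊂ ℂ, let γ ∈ ℝ and w ∈ ℂ. Consider the set S = { z ∈ ℂ : z ∉ Ω and conj(z) − (1/π)∫_Ω 1/(z − ζ) dA(ζ) − γ z = conj(w) }. If S is finite, then S has at most 4 elements. -/
open Complex MeasureTheory

/-!
Put `c = a ^ 2 - b ^ 2` and `d = 2 * a * b`. Slicing `Ω` into homothetic ellipses of ratio `r`,
the integral `φ r` of the Cauchy kernel at `z ∉ Ω` over such an ellipse satisfies the differential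
equation `(z ^ 2 - c * r ^ 2) * φ' = c * r * φ`. Hence `(z ^ 2 - c * r ^ 2) * φ ^ 2` is constant,
and the deflection `F`, a multiple of `∫ r in 0..1, r * φ r`, is a root of
`c * F ^ 2 - 2 * d * z * F + d ^ 2 = 0`.

At a bright image `F = conj z - γ * z - conj w`. The real and imaginary parts of the quadratic
equation then place `z` on a conic without cross term and on a hyperbola with axis-parallel
asymptotes (or a line), on which one coordinate is a fractional linear function of the other;
substituting it into the conic leaves a polynomial of degree at most four. If `w` lies on a
coordinate axis, the hyperbola breaks up into axis-parallel lines carrying at most two images each.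
It disappears altogether only if `w = 0` and the conic is the boundary of `Ω` or empty, and then
there are no bright images.
-/

open scoped ComplexConjugate Interval

section Calculus

lemma eq_left_of_hasDerivAt_zero {E : Type*} [NormedAddCommGroup E] [NormedSpace ℝ E]
    [CompleteSpace E] {f : ℝ → E} {A B : ℝ} (hf : ∀ x ∈ [[A, B]], HasDerivAt f 0 x) :
    f B = f A := by
  have hFTC := intervalIntegral.integral_eq_sub_of_hasDerivAt hf intervalIntegrable_const
  rw [intervalIntegral.integral_zero] at hFTC
  exact sub_eq_zero.1 hFTC.symm

lemma hasDerivAt_intervalIntegral_of_continuousOn {𝕜 E : Type*} [RCLike 𝕜]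
    [NormedAddCommGroup E] [NormedSpace ℝ E] [NormedSpace 𝕜 E] {F F' : 𝕜 → ℝ → E}
    {s : Set 𝕜} (hs : IsOpen s) {A B : ℝ} (hF : ∀ x ∈ s, ContinuousOn (F x) [[A, B]])
    (hF' : ContinuousOn (Function.uncurry F') (s ×ˢ [[A, B]]))
    (hderiv : ∀ x ∈ s, ∀ t ∈ [[A, B]], HasDerivAt (F · t) (F' x t) x) {x₀ : 𝕜} (hx₀ : x₀ ∈ s) :
    HasDerivAt (fun x ↦ ∫ t in A..B, F x t) (∫ t in A..B, F' x₀ t) x₀ := by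
  obtain ⟨K, hK, hxK, hKs⟩ := exists_compact_subset hs hx₀
  obtain ⟨C, hC⟩ := (hK.prod (isCompact_uIcc (a := A) (b := B))).exists_bound_of_continuousOn
    (hF'.mono (Set.prod_mono_left hKs))
  have hmeas {g : ℝ → E} (hg : ContinuousOn g [[A, B]]) :
      AEStronglyMeasurable g (volume.restrict (Ι A B)) :=
    (hg.mono Set.uIoc_subset_uIcc).aestronglyMeasurable measurableSet_uIoc
  have hF'x₀ : ContinuousOn (F' x₀) [[A, B]] :=
    hF'.comp (f := fun t ↦ (x₀, t)) (by fun_prop) fun t ht ↦ ⟨hx₀, ht⟩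
  refine (intervalIntegral.hasDerivAt_integral_of_dominated_loc_of_deriv_le
    (bound := fun _ ↦ C) (mem_interior_iff_mem_nhds.1 hxK) ?_ (hF x₀ hx₀).intervalIntegrable
    (hmeas hF'x₀) ?_ intervalIntegrable_const ?_).2
  · filter_upwards [hs.mem_nhds hx₀] with x hx using hmeas (hF x hx)
  · exact .of_forall fun t ht x hx ↦ hC (x, t) ⟨hx, Set.uIoc_subset_uIcc ht⟩
  · exact .of_forall fun t ht x hx ↦ hderiv x (hKs hx) t (Set.uIoc_subset_uIcc ht)

lemma setIntegral_closedBall_zero_eq_polar {E : Type*} [NormedAddCommGroup E] [NormedSpace ℝ E]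
    (f : ℂ → E) (R : ℝ) :
    ∫ z in Metric.closedBall 0 R, f z =
      ∫ p in Set.Ioc 0 R ×ˢ Set.Ioo (-Real.pi) Real.pi, p.1 • f (Complex.polarCoord.symm p) := by
  have hset : Set.Ioc 0 R ×ˢ Set.Ioo (-Real.pi) Real.pi =
      polarCoord.target ∩ Set.Iic R ×ˢ Set.univ := by
    rw [polarCoord_target, Set.prod_inter_prod, Set.Ioi_inter_Iic, Set.inter_univ]
  rw [← integral_indicator Metric.isClosed_closedBall.measurableSet,
    ← Complex.integral_comp_polarCoord_symm, hset,
    ← setIntegral_indicator (measurableSet_Iic.prod MeasurableSet.univ)]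
  refine setIntegral_congr_fun polarCoord.open_target.measurableSet fun p hp ↦ ?_
  have hpos : 0 < p.1 := hp.1
  by_cases hpR : p.1 ≤ R
  · simp [Set.indicator, hpR, abs_of_pos hpos]
  · simp [Set.indicator, hpR, abs_of_pos hpos]

end Calculus

/-- The squared elliptic radius of `z`: the ellipse with semi-axes `r * a` and `r * b` is the
level set at height `r ^ 2`. -/
noncomputable def ellipticRadiusSq (a b : ℝ) (z : ℂ) : ℝ :=
  z.re ^ 2 / a ^ 2 + z.im ^ 2 / b ^ 2

/-- The filled ellipse with semi-axes `a` and `b`, i.e. the lens `Ω`. -/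
def closedEllipse (a b : ℝ) : Set ℂ :=
  {z | ellipticRadiusSq a b z ≤ 1}

/-- The standard parametrisation of the ellipse with semi-axes `a` and `b` by the eccentric
anomaly. -/
noncomputable def ellipsePoint (a b t : ℝ) : ℂ :=
  a * Real.cos t + b * Real.sin t * I

/-- The linear map taking the unit circle to the ellipse with semi-axes `a` and `b`. -/
noncomputable def ellipseMap (a b : ℝ) : ℂ →L[ℝ] ℂ :=
  reCLM.smulRight (a : ℂ) + imCLM.smulRight (b * I)

/-- The deflection of a light ray at `z` by the mass distribution of density `1 / π` on `Ω`. -/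
noncomputable def uniformDeflection (Ω : Set ℂ) (z : ℂ) : ℂ :=
  (Real.pi : ℂ)⁻¹ * ∫ ζ in Ω, (z - ζ)⁻¹

/-- The Cauchy kernel at `z` integrated over the ellipse with semi-axes `r * a` and `r * b`, with
respect to the eccentric anomaly. -/
noncomputable def ringIntegral (a b : ℝ) (z : ℂ) (r : ℝ) : ℂ :=
  ∫ t in -Real.pi..Real.pi, (z - r * ellipsePoint a b t)⁻¹

/-- The integral of the Cauchy kernel at `z` over the ellipse with semi-axes `r * a` and `r * b`,
up to the constant factor `a * b`, obtained by slicing it into homothetic ellipses. -/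
noncomputable def ringMoment (a b : ℝ) (z : ℂ) (r : ℝ) : ℂ :=
  ∫ s in (0 : ℝ)..r, (s : ℂ) * ringIntegral a b z s

section Ellipse

variable {a b r : ℝ} {z : ℂ}

lemma ellipseMap_apply (a b : ℝ) (z : ℂ) : ellipseMap a b z = ⟨a * z.re, b * z.im⟩ := by
  apply Complex.ext <;> simp [ellipseMap, mul_comm]

lemma ellipseMap_det (a b : ℝ) : (ellipseMap a b).det = a * b := by
  rw [ContinuousLinearMap.det, ← LinearMap.det_toMatrix basisOneI, Matrix.det_fin_two]
  simp [LinearMap.toMatrix_apply, ellipseMap_apply]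

lemma ellipseMap_injective (ha : a ≠ 0) (hb : b ≠ 0) : Function.Injective (ellipseMap a b) := by
  intro z w hzw
  rw [ellipseMap_apply, ellipseMap_apply, Complex.mk.injEq] at hzw
  exact Complex.ext (mul_left_cancel₀ ha hzw.1) (mul_left_cancel₀ hb hzw.2)

lemma ellipseMap_polarCoord_symm (a b : ℝ) (p : ℝ × ℝ) :
    ellipseMap a b (Complex.polarCoord.symm p) = p.1 * ellipsePoint a b p.2 := by
  rw [Complex.polarCoord_symm_apply, ellipseMap_apply, ellipsePoint]
  apply Complex.ext <;> simp only [mul_re, mul_im, add_re, add_im, ofReal_re, ofReal_im, I_re, I_im]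
    <;> ring

lemma ellipticRadiusSq_ellipseMap (ha : a ≠ 0) (hb : b ≠ 0) (z : ℂ) :
    ellipticRadiusSq a b (ellipseMap a b z) = ‖z‖ ^ 2 := by
  rw [ellipseMap_apply, ellipticRadiusSq, ← normSq_eq_norm_sq, normSq_apply]
  field_simp

lemma ellipseMap_image_closedBall (ha : a ≠ 0) (hb : b ≠ 0) :
    ellipseMap a b '' Metric.closedBall 0 1 = closedEllipse a b := by
  have hsurj (z : ℂ) : ellipseMap a b ⟨z.re / a, z.im / b⟩ = z := by
    rw [ellipseMap_apply, mul_div_cancel₀ _ ha, mul_div_cancel₀ _ hb]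
  ext z
  rw [closedEllipse, Set.mem_ofPred_eq]
  constructor
  · rintro ⟨w, hw, rfl⟩
    rw [ellipticRadiusSq_ellipseMap ha hb]
    exact pow_le_one₀ (norm_nonneg w) (mem_closedBall_zero_iff.1 hw)
  · intro hz
    rw [← hsurj z, ellipticRadiusSq_ellipseMap ha hb, sq_le_one_iff₀ (norm_nonneg _)] at hz
    exact ⟨_, mem_closedBall_zero_iff.2 hz, hsurj z⟩

lemma setIntegral_closedEllipse {E : Type*} [NormedAddCommGroup E] [NormedSpace ℝ E]
    (ha : a ≠ 0) (hb : b ≠ 0) (f : ℂ → E) :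
    ∫ ζ in closedEllipse a b, f ζ = |a * b| •
      ∫ p in Set.Ioc (0 : ℝ) 1 ×ˢ Set.Ioo (-Real.pi) Real.pi,
        p.1 • f (p.1 * ellipsePoint a b p.2) := by
  rw [← ellipseMap_image_closedBall ha hb,
    integral_image_eq_integral_abs_det_fderiv_smul volume
      Metric.isClosed_closedBall.measurableSet
      (fun z _ ↦ (ellipseMap a b).hasFDerivAt.hasFDerivWithinAt)
      (ellipseMap_injective ha hb).injOn,
    integral_smul, ellipseMap_det, setIntegral_closedBall_zero_eq_polar]
  simp only [ellipseMap_polarCoord_symm]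

lemma continuous_ellipsePoint (a b : ℝ) : Continuous (ellipsePoint a b) := by
  unfold ellipsePoint
  fun_prop

lemma hasDerivAt_ellipsePoint (a b t : ℝ) :
    HasDerivAt (ellipsePoint a b) (ellipsePoint a b (t + Real.pi / 2)) t := by
  refine (((Real.hasDerivAt_cos t).ofReal_comp.const_mul (a : ℂ)).add
    (((Real.hasDerivAt_sin t).ofReal_comp.const_mul (b : ℂ)).mul_const I)).congr_deriv ?_
  rw [ellipsePoint, Real.cos_add_pi_div_two, Real.sin_add_pi_div_two]

lemma ellipsePoint_add_pi (a b t : ℝ) :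
    ellipsePoint a b (t + Real.pi) = -ellipsePoint a b t := by
  rw [ellipsePoint, ellipsePoint, Real.cos_add_pi, Real.sin_add_pi]
  push_cast
  ring

lemma ellipsePoint_add_pi_div_two_sq (a b t : ℝ) :
    ellipsePoint a b (t + Real.pi / 2) ^ 2 = (a ^ 2 - b ^ 2) - ellipsePoint a b t ^ 2 := by
  have htrig : (Real.sin t : ℂ) ^ 2 + (Real.cos t : ℂ) ^ 2 = 1 := by
    exact_mod_cast Real.sin_sq_add_cos_sq t
  rw [ellipsePoint, ellipsePoint, Real.cos_add_pi_div_two, Real.sin_add_pi_div_two, ofReal_neg]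
  linear_combination (b ^ 2 * Real.cos t ^ 2 + b ^ 2 * Real.sin t ^ 2 : ℂ) * I_sq +
    ((a : ℂ) ^ 2 - b ^ 2) * htrig

lemma ellipticRadiusSq_mul_ellipsePoint (ha : a ≠ 0) (hb : b ≠ 0) (r t : ℝ) :
    ellipticRadiusSq a b (r * ellipsePoint a b t) = r ^ 2 := by
  rw [← ellipseMap_polarCoord_symm a b (r, t), ellipticRadiusSq_ellipseMap ha hb,
    norm_polarCoord_symm, sq_abs]

lemma sub_mul_ellipsePoint_ne_zero (ha : a ≠ 0) (hb : b ≠ 0)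
    (hr : r ^ 2 < ellipticRadiusSq a b z) (t : ℝ) : z - r * ellipsePoint a b t ≠ 0 := by
  intro h
  rw [sub_eq_zero.1 h, ellipticRadiusSq_mul_ellipsePoint ha hb] at hr
  exact lt_irrefl _ hr

end Ellipse

section RingIntegral

variable {a b r : ℝ} {z : ℂ}

lemma hasDerivAt_ringIntegral (ha : a ≠ 0) (hb : b ≠ 0) (hr : r ^ 2 < ellipticRadiusSq a b z) :
    HasDerivAt (ringIntegral a b z) (∫ t in -Real.pi..Real.pi,
      ellipsePoint a b t / (z - r * ellipsePoint a b t) ^ 2) r := by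
  have hE := continuous_ellipsePoint a b
  have hne {s : ℝ} (hs : s ^ 2 < ellipticRadiusSq a b z) := sub_mul_ellipsePoint_ne_zero ha hb hs
  refine hasDerivAt_intervalIntegral_of_continuousOn
    (F := fun (r : ℝ) t ↦ (z - r * ellipsePoint a b t)⁻¹)
    (F' := fun (r : ℝ) t ↦ ellipsePoint a b t / (z - r * ellipsePoint a b t) ^ 2)
    (s := {s : ℝ | s ^ 2 < ellipticRadiusSq a b z})
    (isOpen_lt (by fun_prop) continuous_const) (fun s hs ↦ ?_) ?_ (fun s hs t _ ↦ ?_) hr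
  · exact ContinuousOn.inv₀ (by fun_prop) fun t _ ↦ hne hs t
  · exact ContinuousOn.div (by fun_prop) (by fun_prop) fun p hp ↦ pow_ne_zero 2 (hne hp.1 p.2)
  · have hlin := ((hasDerivAt_id s).ofReal_comp.mul_const (ellipsePoint a b t)).const_sub z
    exact (hlin.inv (hne hs t)).congr_deriv (by simp)

-- With `E = ellipsePoint a b`, the quotient rule is simplified by `E'' = -E` and the first integral
-- `E' ^ 2 = (a ^ 2 - b ^ 2) - E ^ 2`, which leaves no derivatives of `E` on the right.
lemma hasDerivAt_ellipsePoint_div (ha : a ≠ 0) (hb : b ≠ 0)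
    (hr : r ^ 2 < ellipticRadiusSq a b z) (t : ℝ) :
    HasDerivAt
      (fun t ↦ -z * (ellipsePoint a b (t + Real.pi / 2) / (z - r * ellipsePoint a b t)))
      ((z ^ 2 - (a ^ 2 - b ^ 2) * r ^ 2) *
          (ellipsePoint a b t / (z - r * ellipsePoint a b t) ^ 2) -
        (a ^ 2 - b ^ 2) * r * (z - r * ellipsePoint a b t)⁻¹) t := by
  have hne := sub_mul_ellipsePoint_ne_zero ha hb hr t
  have hE' : HasDerivAt (fun t ↦ ellipsePoint a b (t + Real.pi / 2)) (-ellipsePoint a b t) t := by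
    refine (hasDerivAt_ellipsePoint a b _).comp_add_const t (Real.pi / 2) |>.congr_deriv ?_
    rw [add_assoc, add_halves, ellipsePoint_add_pi]
  refine ((hE'.div (((hasDerivAt_ellipsePoint a b t).const_mul (r : ℂ)).const_sub z)
    hne).const_mul (-z)).congr_deriv ?_
  have hinv : (z - r * ellipsePoint a b t)⁻¹ =
      (z - r * ellipsePoint a b t) / (z - r * ellipsePoint a b t) ^ 2 := by
    rw [pow_two, div_mul_cancel_left₀ hne]
  linear_combination ((a : ℂ) ^ 2 - b ^ 2) * r * hinv +
    (-z * r / (z - r * ellipsePoint a b t) ^ 2) * ellipsePoint_add_pi_div_two_sq a b t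

lemma ringIntegral_ode (ha : a ≠ 0) (hb : b ≠ 0) (hr : r ^ 2 < ellipticRadiusSq a b z) :
    (z ^ 2 - (a ^ 2 - b ^ 2) * r ^ 2) * (∫ t in -Real.pi..Real.pi,
      ellipsePoint a b t / (z - r * ellipsePoint a b t) ^ 2) =
      (a ^ 2 - b ^ 2) * r * ringIntegral a b z r := by
  have hE := continuous_ellipsePoint a b
  have hne := sub_mul_ellipsePoint_ne_zero ha hb hr
  have hsq : Continuous fun t ↦ ellipsePoint a b t / (z - r * ellipsePoint a b t) ^ 2 :=
    hE.div (by fun_prop) fun t ↦ pow_ne_zero 2 (hne t)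
  have hinv : Continuous fun t ↦ (z - r * ellipsePoint a b t)⁻¹ :=
    Continuous.inv₀ (by fun_prop) hne
  have hperiod :
      ellipsePoint a b (Real.pi + Real.pi / 2) / (z - r * ellipsePoint a b Real.pi) =
        ellipsePoint a b (-Real.pi + Real.pi / 2) / (z - r * ellipsePoint a b (-Real.pi)) := by
    simp only [ellipsePoint, Real.cos_neg, Real.sin_neg, Real.sin_pi, neg_zero,
      Real.cos_add_pi_div_two, Real.sin_add_pi_div_two]
  have hFTC := intervalIntegral.integral_eq_sub_of_hasDerivAt (a := -Real.pi) (b := Real.pi)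
    (fun t _ ↦ hasDerivAt_ellipsePoint_div ha hb hr t)
    (((hsq.const_mul _).sub (hinv.const_mul _)).intervalIntegrable _ _)
  rw [hperiod, sub_self, intervalIntegral.integral_sub ((hsq.const_mul _).intervalIntegrable _ _)
    ((hinv.const_mul _).intervalIntegrable _ _), intervalIntegral.integral_const_mul,
    intervalIntegral.integral_const_mul] at hFTC
  exact sub_eq_zero.1 hFTC

lemma hasDerivAt_mul_ringIntegral (ha : a ≠ 0) (hb : b ≠ 0)
    (hr : r ^ 2 < ellipticRadiusSq a b z) :
    HasDerivAt (fun r : ℝ ↦ (z ^ 2 - (a ^ 2 - b ^ 2) * r ^ 2) * ringIntegral a b z r)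
      (-((a ^ 2 - b ^ 2) * (r * ringIntegral a b z r))) r := by
  have hquad : HasDerivAt (fun r : ℝ ↦ z ^ 2 - ((a : ℂ) ^ 2 - b ^ 2) * (r : ℂ) ^ 2)
      (-((a ^ 2 - b ^ 2) * (2 * r))) r := by
    simpa using (((hasDerivAt_id r).ofReal_comp.pow 2).const_mul ((a : ℂ) ^ 2 - b ^ 2)).const_sub
      (z ^ 2)
  refine (hquad.mul (hasDerivAt_ringIntegral ha hb hr)).congr_deriv ?_
  linear_combination ringIntegral_ode ha hb hr

lemma sq_lt_of_mem_uIcc {s m : ℝ} (hr : r ^ 2 < m) (hs : s ∈ [[0, r]]) : s ^ 2 < m := by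
  have habs := Set.abs_sub_left_of_mem_uIcc hs
  rw [sub_zero, sub_zero] at habs
  exact (sq_le_sq.2 habs).trans_lt hr

lemma ne_zero_of_ellipticRadiusSq_pos (hz : 0 < ellipticRadiusSq a b z) : z ≠ 0 := by
  rintro rfl
  simp [ellipticRadiusSq] at hz

lemma ringIntegral_zero (a b : ℝ) (z : ℂ) : ringIntegral a b z 0 = 2 * Real.pi / z := by
  simp only [ringIntegral, ofReal_zero, zero_mul, sub_zero, intervalIntegral.integral_const,
    sub_neg_eq_add, real_smul, ofReal_add]
  ring

lemma mul_ringIntegral_sq (ha : a ≠ 0) (hb : b ≠ 0) (hr : r ^ 2 < ellipticRadiusSq a b z) :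
    (z ^ 2 - (a ^ 2 - b ^ 2) * r ^ 2) * ringIntegral a b z r ^ 2 = 4 * Real.pi ^ 2 := by
  have hz : z ≠ 0 := ne_zero_of_ellipticRadiusSq_pos ((sq_nonneg r).trans_lt hr)
  have hconst := eq_left_of_hasDerivAt_zero (A := 0) (B := r)
    (f := fun r : ℝ ↦ (z ^ 2 - (a ^ 2 - b ^ 2) * r ^ 2) * ringIntegral a b z r *
      ringIntegral a b z r) fun s hs ↦ by
    have hs' := sq_lt_of_mem_uIcc hr hs
    refine ((hasDerivAt_mul_ringIntegral ha hb hs').mul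
      (hasDerivAt_ringIntegral ha hb hs')).congr_deriv ?_
    linear_combination ringIntegral a b z s * ringIntegral_ode ha hb hs'
  rw [pow_two (ringIntegral a b z r), ← mul_assoc, hconst, ringIntegral_zero, ofReal_zero]
  field_simp
  ring

lemma ringMoment_zero (a b : ℝ) (z : ℂ) : ringMoment a b z 0 = 0 :=
  intervalIntegral.integral_same

lemma hasDerivAt_ringMoment (ha : a ≠ 0) (hb : b ≠ 0) (hr : r ^ 2 < ellipticRadiusSq a b z) :
    HasDerivAt (ringMoment a b z) (r * ringIntegral a b z r) r := by
  have hcont {s : ℝ} (hs : s ^ 2 < ellipticRadiusSq a b z) :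
      ContinuousAt (fun s : ℝ ↦ (s : ℂ) * ringIntegral a b z s) s :=
    continuous_ofReal.continuousAt.mul (hasDerivAt_ringIntegral ha hb hs).continuousAt
  have hopen : IsOpen {s : ℝ | s ^ 2 < ellipticRadiusSq a b z} :=
    isOpen_lt (by fun_prop) continuous_const
  refine intervalIntegral.integral_hasDerivAt_right
    (ContinuousOn.intervalIntegrable fun s hs ↦
      (hcont (sq_lt_of_mem_uIcc hr hs)).continuousWithinAt) ?_ (hcont hr)
  exact ContinuousOn.stronglyMeasurableAtFilter hopen
    (fun s hs ↦ (hcont hs).continuousWithinAt) r hr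

lemma ringMoment_linear (ha : a ≠ 0) (hb : b ≠ 0) (hr : r ^ 2 < ellipticRadiusSq a b z) :
    (a ^ 2 - b ^ 2) * ringMoment a b z r +
      (z ^ 2 - (a ^ 2 - b ^ 2) * r ^ 2) * ringIntegral a b z r = 2 * Real.pi * z := by
  have hz : z ≠ 0 := ne_zero_of_ellipticRadiusSq_pos ((sq_nonneg r).trans_lt hr)
  refine (eq_left_of_hasDerivAt_zero (A := 0) (B := r)
    (f := fun r : ℝ ↦ (a ^ 2 - b ^ 2) * ringMoment a b z r +
      (z ^ 2 - (a ^ 2 - b ^ 2) * r ^ 2) * ringIntegral a b z r) fun s hs ↦ ?_).trans ?_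
  · have hs' := sq_lt_of_mem_uIcc hr hs
    exact (((hasDerivAt_ringMoment ha hb hs').const_mul _).add
      (hasDerivAt_mul_ringIntegral ha hb hs')).congr_deriv (add_neg_cancel _)
  · rw [ringMoment_zero, ringIntegral_zero, ofReal_zero]
    field_simp
    ring

lemma ringMoment_quadratic (ha : a ≠ 0) (hb : b ≠ 0) (hr : r ^ 2 < ellipticRadiusSq a b z) :
    (a ^ 2 - b ^ 2) * ringMoment a b z r ^ 2 - 4 * Real.pi * z * ringMoment a b z r +
      4 * Real.pi ^ 2 * r ^ 2 = 0 := by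
  refine (eq_left_of_hasDerivAt_zero (A := 0) (B := r)
    (f := fun r : ℝ ↦ (a ^ 2 - b ^ 2) * ringMoment a b z r ^ 2 -
      4 * Real.pi * z * ringMoment a b z r + 4 * Real.pi ^ 2 * r ^ 2) fun s hs ↦ ?_).trans ?_
  · have hs' := sq_lt_of_mem_uIcc hr hs
    have hΦ := hasDerivAt_ringMoment ha hb hs'
    refine ((((hΦ.pow 2).const_mul _).sub (hΦ.const_mul _)).add
      (((hasDerivAt_id s).ofReal_comp.pow 2).const_mul _)).congr_deriv ?_
    simp only [Nat.cast_ofNat, Nat.add_one_sub_one, pow_one, id_eq, ofReal_one, mul_one]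
    linear_combination 2 * s * ringIntegral a b z s * ringMoment_linear ha hb hs' -
      2 * s * mul_ringIntegral_sq ha hb hs'
  · simp [ringMoment_zero]

lemma uniformDeflection_closedEllipse (ha : 0 < a) (hb : 0 < b) (hz : z ∉ closedEllipse a b) :
    uniformDeflection (closedEllipse a b) z = a * b / Real.pi * ringMoment a b z 1 := by
  have hE := continuous_ellipsePoint a b
  have hint : IntegrableOn (fun p : ℝ × ℝ ↦ p.1 • (z - p.1 * ellipsePoint a b p.2)⁻¹)
      (Set.Ioc (0 : ℝ) 1 ×ˢ Set.Ioo (-Real.pi) Real.pi) := by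
    refine IntegrableOn.mono_set (ContinuousOn.integrableOn_compact
      (isCompact_Icc.prod isCompact_Icc) ?_)
      (Set.prod_mono Set.Ioc_subset_Icc_self Set.Ioo_subset_Icc_self)
    refine continuousOn_fst.smul (ContinuousOn.inv₀ (by fun_prop) fun p hp ↦ ?_)
    exact sub_mul_ellipsePoint_ne_zero ha.ne' hb.ne'
      ((pow_le_one₀ hp.1.1 hp.1.2).trans_lt (not_le.1 hz)) p.2
  rw [uniformDeflection, setIntegral_closedEllipse ha.ne' hb.ne', Measure.volume_eq_prod,
    setIntegral_prod _ (Measure.volume_eq_prod ℝ ℝ ▸ hint), abs_of_pos (mul_pos ha hb),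
    ringMoment, intervalIntegral.integral_of_le zero_le_one]
  simp only [integral_const_mul, ringIntegral,
    intervalIntegral.integral_of_le (neg_le_self Real.pi_pos.le), integral_Ioc_eq_integral_Ioo,
    real_smul, ofReal_mul]
  ring

lemma uniformDeflection_closedEllipse_quadratic (ha : 0 < a) (hb : 0 < b)
    (hz : z ∉ closedEllipse a b) :
    (a ^ 2 - b ^ 2) * uniformDeflection (closedEllipse a b) z ^ 2 -
      2 * (2 * a * b) * z * uniformDeflection (closedEllipse a b) z + (2 * a * b) ^ 2 = 0 := by
  have hz' : (1 : ℝ) ^ 2 < ellipticRadiusSq a b z := by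
    rw [one_pow]
    exact not_le.1 hz
  have hquad := ringMoment_quadratic ha.ne' hb.ne' hz'
  have hπ : (Real.pi : ℂ) ≠ 0 := ofReal_ne_zero.2 Real.pi_ne_zero
  rw [ofReal_one] at hquad
  rw [uniformDeflection_closedEllipse ha hb hz]
  field_simp
  linear_combination (a * b : ℂ) ^ 2 * hquad

end RingIntegral

section PlaneConics

open Polynomial

lemma encard_le_natDegree_of_injOn {R α : Type*} [CommRing R] [IsDomain R] {p : R[X]}
    (hp : p ≠ 0) {f : α → R} {S : Set α} (hf : S.InjOn f) (hroot : ∀ s ∈ S, p.eval (f s) = 0) :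
    S.encard ≤ p.natDegree := by
  classical
  calc S.encard ≤ (p.roots.toFinset : Set R).encard :=
        Set.encard_le_encard_of_injOn
          (fun s hs ↦ Multiset.mem_toFinset.2 ((mem_roots hp).2 (hroot s hs))) hf
    _ = p.roots.toFinset.card := Set.encard_coe_eq_coe_finsetCard _
    _ ≤ p.natDegree := by
        exact_mod_cast (Multiset.toFinset_card_le _).trans p.card_roots'

lemma encard_le_two_of_quadratic {R α : Type*} [CommRing R] [IsDomain R] {k l m : R}
    (h : ¬(k = 0 ∧ l = 0 ∧ m = 0)) {f : α → R} {S : Set α} (hf : S.InjOn f)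
    (hroot : ∀ s ∈ S, k * f s ^ 2 + l * f s + m = 0) : S.encard ≤ 2 := by
  have hp : C k * X ^ 2 + C l * X + C m ≠ 0 := by
    intro hp
    have hcoeff (n : ℕ) := congrArg (coeff · n) hp
    exact h ⟨by simpa using hcoeff 2, by simpa using hcoeff 1, by simpa using hcoeff 0⟩
  refine (encard_le_natDegree_of_injOn hp hf fun s hs ↦ ?_).trans ?_
  · simpa using hroot s hs
  · exact_mod_cast natDegree_quadratic_le

variable {K : Type*} [Field K]

/-- The polynomial obtained by substituting `y = -(β * x + ε) / (α * x + δ)`, which parametrises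
the hyperbola `α * x * y + β * x + δ * y + ε = 0`, into the conic
`f₂ * x ^ 2 + f₁ * x + f₀ = g₂ * y ^ 2 + g₁ * y + g₀` and clearing denominators. -/
noncomputable def hyperbolaConicEliminant (α β δ ε f₂ f₁ f₀ g₂ g₁ g₀ : K) : K[X] :=
  (C α * X + C δ) ^ 2 * (C f₂ * X ^ 2 + C f₁ * X + C f₀) - C g₂ * (C β * X + C ε) ^ 2 +
    C g₁ * ((C β * X + C ε) * (C α * X + C δ)) - C g₀ * (C α * X + C δ) ^ 2

variable {α β δ ε f₂ f₁ f₀ g₂ g₁ g₀ : K}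

lemma natDegree_hyperbolaConicEliminant_le :
    (hyperbolaConicEliminant α β δ ε f₂ f₁ f₀ g₂ g₁ g₀).natDegree ≤ 4 := by
  unfold hyperbolaConicEliminant
  compute_degree

lemma hyperbolaConicEliminant_ne_zero (hα : α ≠ 0) (hαε : α * ε ≠ β * δ)
    (hg : g₂ ≠ 0 ∨ g₁ ≠ 0) : hyperbolaConicEliminant α β δ ε f₂ f₁ f₀ g₂ g₁ g₀ ≠ 0 := by
  intro hP
  have hpole : α * (-δ / α) + δ = 0 := by field_simp; ring
  have hN : β * (-δ / α) + ε ≠ 0 := by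
    intro h
    refine hαε ?_
    field_simp at h
    linear_combination h
  have hg₂ : g₂ = 0 := by
    have heval := congrArg (eval (-δ / α)) hP
    simp only [hyperbolaConicEliminant, eval_add, eval_sub, eval_mul, eval_pow, eval_C, eval_X,
      eval_zero, hpole] at heval
    simpa [hN] using heval
  have hg₁ : g₁ = 0 := by
    have hfactor : (C α * X + C δ) * ((C α * X + C δ) * (C f₂ * X ^ 2 + C f₁ * X + C f₀) +
        C g₁ * (C β * X + C ε) - C g₀ * (C α * X + C δ)) = 0 := by
      rw [← hP, hyperbolaConicEliminant, hg₂, C_0]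
      ring
    have hD : C α * X + C δ ≠ 0 := fun h ↦ hα (by simpa using congrArg (coeff · 1) h)
    have heval := congrArg (eval (-δ / α)) ((mul_eq_zero.1 hfactor).resolve_left hD)
    simp only [eval_add, eval_sub, eval_mul, eval_C, eval_X, eval_zero, hpole] at heval
    simpa [hN] using heval
  exact hg.elim (· hg₂) (· hg₁)

lemma hyperbolaConicEliminant_zero_ne_zero (h : f₂ * δ ^ 2 ≠ g₂ * β ^ 2) :
    hyperbolaConicEliminant 0 β δ ε f₂ f₁ f₀ g₂ g₁ g₀ ≠ 0 := by
  have hexpand : hyperbolaConicEliminant 0 β δ ε f₂ f₁ f₀ g₂ g₁ g₀ =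
      C (f₂ * δ ^ 2 - g₂ * β ^ 2) * X ^ 2 +
        C (f₁ * δ ^ 2 - 2 * g₂ * β * ε + g₁ * β * δ) * X +
        C (f₀ * δ ^ 2 - g₂ * ε ^ 2 + g₁ * ε * δ - g₀ * δ ^ 2) := by
    simp only [hyperbolaConicEliminant, C_sub, C_add, C_mul, C_pow, C_0, C_ofNat]
    ring
  refine ne_zero_of_natDegree_gt (n := 0) ?_
  rw [hexpand, natDegree_quadratic (sub_ne_zero.2 h)]
  exact two_pos

lemma encard_hyperbola_inter_conic_le {S : Type*} {x y : S → K} {A : Set S}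
    (hP : hyperbolaConicEliminant α β δ ε f₂ f₁ f₀ g₂ g₁ g₀ ≠ 0) (hαε : α * ε ≠ β * δ)
    (hinj : A.InjOn fun s ↦ (x s, y s))
    (hhyp : ∀ s ∈ A, α * x s * y s + β * x s + δ * y s + ε = 0)
    (hconic : ∀ s ∈ A,
      f₂ * x s ^ 2 + f₁ * x s + f₀ = g₂ * y s ^ 2 + g₁ * y s + g₀) : A.encard ≤ 4 := by
  have hden {s : S} (hs : s ∈ A) : α * x s + δ ≠ 0 := by
    intro h
    exact hαε (by linear_combination α * hhyp s hs - (α * y s + β) * h)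
  refine (encard_le_natDegree_of_injOn hP (f := x) (fun s hs t ht hst ↦ ?_) fun s hs ↦ ?_).trans
    (by exact_mod_cast natDegree_hyperbolaConicEliminant_le)
  · refine hinj hs ht (Prod.ext hst (mul_left_cancel₀ (hden hs) ?_))
    linear_combination hhyp s hs - hhyp t ht - (α * y t + β) * hst
  · simp only [hyperbolaConicEliminant, eval_add, eval_sub, eval_mul, eval_pow, eval_C, eval_X]
    have hy : β * x s + ε = -((α * x s + δ) * y s) := by linear_combination hhyp s hs
    rw [hy]
    linear_combination (α * x s + δ) ^ 2 * hconic s hs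

end PlaneConics

/-- The solutions `z` of the quadratic equation `c * T ^ 2 - 2 * d * z * T + d ^ 2 = 0`, where
`T = conj z - γ * z - conj w` is the deflection prescribed by the lens equation. For
`c = a ^ 2 - b ^ 2` and `d = 2 * a * b` this equation is satisfied by the deflection of the ellipse
with semi-axes `a` and `b`, so this set contains all bright images. -/
def imageCurve (c d γ : ℝ) (w : ℂ) : Set ℂ :=
  {z | c * (conj z - γ * z - conj w) ^ 2 - 2 * d * z * (conj z - γ * z - conj w) + d ^ 2 = 0}

/-- The coefficient of `z.re * z.im` in the imaginary part of the equation of `imageCurve c d γ w`.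
When it vanishes, the hyperbola defined by that imaginary part degenerates to a line or to the
whole plane. -/
def crossCoeff (c d γ : ℝ) : ℝ :=
  c * (1 - γ ^ 2) - 2 * d * γ

section ImageCurve

variable {c d γ : ℝ} {w z : ℂ}

lemma mem_imageCurve_iff : z ∈ imageCurve c d γ w ↔
    (1 - γ) * (c * (1 - γ) - 2 * d) * z.re ^ 2 + 2 * w.re * (d - c * (1 - γ)) * z.re +
        (c * w.re ^ 2 + d ^ 2) =
      (1 + γ) * (c * (1 + γ) + 2 * d) * z.im ^ 2 + -(2 * w.im * (d + c * (1 + γ))) * z.im +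
        c * w.im ^ 2 ∧
    crossCoeff c d γ * z.re * z.im + w.im * (d - c * (1 - γ)) * z.re +
      -(w.re * (d + c * (1 + γ))) * z.im + c * w.re * w.im = 0 := by
  simp only [imageCurve, crossCoeff, Set.mem_ofPred_eq, Complex.ext_iff, pow_two, add_re, add_im,
    sub_re, sub_im, mul_re, mul_im, conj_re, conj_im, ofReal_re, ofReal_im, zero_re, zero_im,
    re_ofNat, im_ofNat]
  refine and_congr ⟨fun h ↦ ?_, fun h ↦ ?_⟩ ⟨fun h ↦ ?_, fun h ↦ ?_⟩
  · linear_combination h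
  · linear_combination h
  · linear_combination -h / 2
  · linear_combination -2 * h

lemma I_mul_conj_mem_imageCurve_iff :
    I * conj z ∈ imageCurve (-c) d (-γ) (I * conj w) ↔ z ∈ imageCurve c d γ w := by
  rw [mem_imageCurve_iff, mem_imageCurve_iff]
  simp only [crossCoeff, mul_re, mul_im, conj_re, conj_im, I_re, I_im]
  refine and_congr ⟨fun h ↦ ?_, fun h ↦ ?_⟩ ⟨fun h ↦ ?_, fun h ↦ ?_⟩
  · linear_combination h
  · linear_combination h
  · linear_combination -h
  · linear_combination -h

lemma sub_mul_add_eq_sq_of_crossCoeff_eq_zero (hα : crossCoeff c d γ = 0) :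
    (d - c * (1 - γ)) * (d + c * (1 + γ)) = d ^ 2 := by
  rw [crossCoeff] at hα
  linear_combination -c * hα

lemma add_mul_ne_zero_of_mul_add_eq_zero {R : Type*} [CommRing R] [IsDomain R] {k m s : R}
    (hm : m ≠ 0) (h : s * (k * s + 2 * m) = 0) : m + k * s ≠ 0 := by
  have hsq : (m + k * s) ^ 2 = m ^ 2 := by linear_combination k * h
  rw [← pow_ne_zero_iff two_ne_zero, hsq]
  exact pow_ne_zero 2 hm

lemma encard_imageCurve_le_four_of_re_ne_zero_of_im_ne_zero (hd : d ≠ 0) (hre : w.re ≠ 0)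
    (him : w.im ≠ 0) : (imageCurve c d γ w).encard ≤ 4 := by
  have hdiscr : crossCoeff c d γ * (c * w.re * w.im) ≠
      w.im * (d - c * (1 - γ)) * -(w.re * (d + c * (1 + γ))) := by
    intro h
    rw [crossCoeff] at h
    have hprod : w.re * w.im * d ^ 2 = 0 := by linear_combination h
    simp [hd, hre, him] at hprod
  refine encard_hyperbola_inter_conic_le ?_ hdiscr Complex.equivRealProd.injective.injOn
    (fun z hz ↦ (mem_imageCurve_iff.1 hz).2) fun z hz ↦ (mem_imageCurve_iff.1 hz).1
  rcases eq_or_ne (crossCoeff c d γ) 0 with hα | hα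
  · obtain ⟨hq, hr⟩ := mul_ne_zero_iff.1
      (sub_mul_add_eq_sq_of_crossCoeff_eq_zero hα ▸ pow_ne_zero 2 hd)
    have hpos : 0 < w.re ^ 2 * d ^ 2 + w.im ^ 2 * (d - c * (1 - γ)) ^ 2 := by positivity
    rw [hα]
    rw [crossCoeff] at hα
    refine hyperbolaConicEliminant_zero_ne_zero fun h ↦ hpos.ne' ?_
    refine mul_left_cancel₀ (mul_ne_zero two_ne_zero hr) ?_
    linear_combination (2 * (d + c * (1 + γ)) * w.re ^ 2 * c -
      w.re ^ 2 * (d + c * (1 + γ)) ^ 2 + w.im ^ 2 * (d - c * (1 - γ)) ^ 2) * hα - h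
  · refine hyperbolaConicEliminant_ne_zero hα hdiscr (or_iff_not_imp_left.2 fun hg₂ ↦ ?_)
    have hr := add_mul_ne_zero_of_mul_add_eq_zero hd (not_not.1 hg₂)
    exact neg_ne_zero.2 (mul_ne_zero (mul_ne_zero two_ne_zero him) hr)

lemma injOn_re_of_im_eq {S : Set ℂ} {y : ℝ} (hS : ∀ z ∈ S, z.im = y) : S.InjOn re :=
  fun z hz z' hz' h ↦ Complex.ext h ((hS z hz).trans (hS z' hz').symm)

lemma injOn_im_of_re_eq {S : Set ℂ} {x : ℝ} (hS : ∀ z ∈ S, z.re = x) : S.InjOn im :=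
  fun z hz z' hz' h ↦ Complex.ext ((hS z hz).trans (hS z' hz').symm) h

lemma encard_imageCurve_inter_re_eq_zero_le_two (hd : d ≠ 0) (hre : w.re = 0) :
    (imageCurve c d γ w ∩ {z | z.re = 0}).encard ≤ 2 := by
  refine encard_le_two_of_quadratic (k := (1 + γ) * (c * (1 + γ) + 2 * d))
    (l := -(2 * w.im * (d + c * (1 + γ)))) (m := c * w.im ^ 2 - d ^ 2) (f := im) ?_
    (injOn_im_of_re_eq fun z hz ↦ hz.2) fun z ⟨hz, hz₀⟩ ↦ ?_
  · rintro ⟨hk, hl, hm⟩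
    have hr := add_mul_ne_zero_of_mul_add_eq_zero hd hk
    have him : w.im = 0 := by simpa [hr] using hl
    simp [him, hd] at hm
  · have hconic := (mem_imageCurve_iff.1 hz).1
    rw [hz₀, hre] at hconic
    linear_combination -hconic

lemma encard_imageCurve_inter_im_eq_le_two (hd : d ≠ 0) (hre : w.re = 0)
    (hα : crossCoeff c d γ ≠ 0) :
    (imageCurve c d γ w ∩
      {z | crossCoeff c d γ * z.im + w.im * (d - c * (1 - γ)) = 0}).encard ≤ 2 := by
  obtain ⟨y, hy⟩ : ∃ y, crossCoeff c d γ * y + w.im * (d - c * (1 - γ)) = 0 :=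
    ⟨-(w.im * (d - c * (1 - γ))) / crossCoeff c d γ, by
      rw [mul_div_cancel₀ _ hα, neg_add_cancel]⟩
  have him {z : ℂ} (hz : crossCoeff c d γ * z.im + w.im * (d - c * (1 - γ)) = 0) :
      z.im = y := mul_left_cancel₀ hα (by linear_combination hz - hy)
  refine encard_le_two_of_quadratic (k := (1 - γ) * (c * (1 - γ) - 2 * d)) (l := 0)
    (m := d ^ 2 - ((1 + γ) * (c * (1 + γ) + 2 * d) * y ^ 2 +
      -(2 * w.im * (d + c * (1 + γ))) * y + c * w.im ^ 2)) (f := re) ?_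
    (injOn_re_of_im_eq fun z hz ↦ him hz.2) fun z ⟨hz, hz'⟩ ↦ ?_
  · rintro ⟨hk, -, hm⟩
    have hy' : y = w.im / 2 := mul_left_cancel₀ hα (by
      rw [crossCoeff] at hy ⊢
      linear_combination hy + w.im / 2 * hk)
    refine pow_ne_zero 2 hd ?_
    rw [hy'] at hm
    linear_combination hm + w.im ^ 2 / 4 * hk
  · have hconic := (mem_imageCurve_iff.1 hz).1
    rw [him hz', hre] at hconic
    linear_combination hconic

lemma encard_imageCurve_le_four_of_re_eq_zero (hd : d ≠ 0) (hre : w.re = 0)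
    (h : crossCoeff c d γ ≠ 0 ∨ w.im ≠ 0) : (imageCurve c d γ w).encard ≤ 4 := by
  have hlines {z : ℂ} (hz : z ∈ imageCurve c d γ w) : z.re = 0 ∨
      crossCoeff c d γ * z.im + w.im * (d - c * (1 - γ)) = 0 := by
    have hhyp := (mem_imageCurve_iff.1 hz).2
    rw [hre] at hhyp
    exact mul_eq_zero.1 (by linear_combination hhyp)
  rcases eq_or_ne (crossCoeff c d γ) 0 with hα | hα
  · have hq : d - c * (1 - γ) ≠ 0 :=
      left_ne_zero_of_mul (sub_mul_add_eq_sq_of_crossCoeff_eq_zero hα ▸ pow_ne_zero 2 hd)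
    have hsub : imageCurve c d γ w ⊆ imageCurve c d γ w ∩ {z | z.re = 0} := fun z hz ↦
      ⟨hz, (hlines hz).resolve_right (by simpa [hα, hq] using h)⟩
    exact (Set.encard_le_encard hsub).trans
      ((encard_imageCurve_inter_re_eq_zero_le_two hd hre).trans (by norm_num))
  · calc (imageCurve c d γ w).encard
      _ ≤ (imageCurve c d γ w ∩ {z | z.re = 0} ∪ imageCurve c d γ w ∩
            {z | crossCoeff c d γ * z.im + w.im * (d - c * (1 - γ)) = 0}).encard :=
          Set.encard_le_encard fun z hz ↦ (hlines hz).imp (⟨hz, ·⟩) (⟨hz, ·⟩)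
      _ ≤ 2 + 2 := (Set.encard_union_le _ _).trans (add_le_add
          (encard_imageCurve_inter_re_eq_zero_le_two hd hre)
          (encard_imageCurve_inter_im_eq_le_two hd hre hα))
      _ = 4 := by norm_num

lemma encard_imageCurve_le_four (hd : d ≠ 0) (h : crossCoeff c d γ ≠ 0 ∨ w ≠ 0) :
    (imageCurve c d γ w).encard ≤ 4 := by
  rcases eq_or_ne w.re 0 with hre | hre
  · exact encard_imageCurve_le_four_of_re_eq_zero hd hre
      (h.imp_right fun hw him ↦ hw (Complex.ext hre him))
  rcases eq_or_ne w.im 0 with him | him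
  · calc (imageCurve c d γ w).encard
        ≤ (imageCurve (-c) d (-γ) (I * conj w)).encard :=
          Set.encard_le_encard_of_injOn (fun z ↦ I_mul_conj_mem_imageCurve_iff.2) fun z _ z' _ h ↦
            star_injective (mul_left_cancel₀ I_ne_zero h)
      _ ≤ 4 := encard_imageCurve_le_four_of_re_eq_zero hd (by simpa using him)
          (.inr (by simpa using hre))
  · exact encard_imageCurve_le_four_of_re_ne_zero_of_im_ne_zero hd hre him

variable {a b : ℝ}

-- The first equation of `mem_imageCurve_iff` here defines the boundary of the ellipse or the empty
-- set, corresponding to the two factors in `hfactor`.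
lemma imageCurve_zero_subset_closedEllipse (ha : 0 < a) (hb : 0 < b)
    (hα : crossCoeff (a ^ 2 - b ^ 2) (2 * a * b) γ = 0) :
    imageCurve (a ^ 2 - b ^ 2) (2 * a * b) γ 0 ⊆ closedEllipse a b := by
  intro z hz
  have hconic := (mem_imageCurve_iff.1 hz).1
  simp only [zero_re, zero_im] at hconic
  rw [crossCoeff] at hα
  set q := 2 * a * b - (a ^ 2 - b ^ 2) * (1 - γ)
  have hfactor : (q - 2 * b ^ 2) * (q + 2 * a ^ 2) = 0 := by
    linear_combination -(a ^ 2 - b ^ 2) * hα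
  have hquad : q * z.re ^ 2 + (q + 2 * (a ^ 2 - b ^ 2)) * z.im ^ 2 = 2 * (a * b) ^ 2 := by
    linear_combination -hconic / 2 - (z.re ^ 2 - z.im ^ 2) / 2 * hα
  rcases mul_eq_zero.1 hfactor with hroot | hroot
  · rw [closedEllipse, Set.mem_ofPred_eq, ellipticRadiusSq, div_add_div _ _ (by positivity)
      (by positivity), div_le_one (by positivity)]
    linear_combination hquad / 2 - (z.re ^ 2 + z.im ^ 2) / 2 * hroot
  · exfalso
    have hpos : 0 < (a * z.re) ^ 2 + (b * z.im) ^ 2 + (a * b) ^ 2 := by positivity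
    exact hpos.ne' (by linear_combination (z.re ^ 2 + z.im ^ 2) / 2 * hroot - hquad / 2)

lemma brightImages_subset_imageCurve (ha : 0 < a) (hb : 0 < b) (γ : ℝ) (w : ℂ) :
    {z : ℂ | z ∉ closedEllipse a b ∧
      conj z - uniformDeflection (closedEllipse a b) z - γ * z = conj w} ⊆
    imageCurve (a ^ 2 - b ^ 2) (2 * a * b) γ w := by
  rintro z ⟨hz, hlens⟩
  have hT : conj z - γ * z - conj w = uniformDeflection (closedEllipse a b) z := by
    linear_combination hlens
  rw [imageCurve, Set.mem_ofPred_eq, hT]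
  push_cast
  exact uniformDeflection_closedEllipse_quadratic ha hb hz

end ImageCurve

theorem elliptic_lens_at_most_four_bright_images_general (a b : ℝ) (ha : 0 < a) (hb : 0 < b)
    (γ : ℝ) (w : ℂ) :
    {z : ℂ | z ∉ closedEllipse a b ∧
      conj z - uniformDeflection (closedEllipse a b) z - γ * z = conj w}.encard ≤ 4 := by
  have hsub := brightImages_subset_imageCurve ha hb γ w
  have hd : 2 * a * b ≠ 0 := by positivity
  by_cases hdeg : crossCoeff (a ^ 2 - b ^ 2) (2 * a * b) γ = 0 ∧ w = 0
  · obtain ⟨hα, rfl⟩ := hdeg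
    have hempty : {z : ℂ | z ∉ closedEllipse a b ∧
        conj z - uniformDeflection (closedEllipse a b) z - γ * z = conj 0} = ∅ :=
      Set.eq_empty_of_forall_notMem fun z hz ↦
        hz.1 (imageCurve_zero_subset_closedEllipse ha hb hα (hsub hz))
    rw [hempty, Set.encard_empty]
    exact zero_le
  · exact (Set.encard_le_encard hsub).trans (encard_imageCurve_le_four hd (not_and_or.1 hdeg))

/-- A uniform elliptic lens with shear produces at most 4 bright images
(images outside the ellipse). -/
theorem elliptic_lens_at_most_four_bright_images
    (a b : ℝ) (hb : 0 < b) (hab : b < a) (γ : ℝ) (w : ℂ)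
    (Ω : Set ℂ) (hΩ : Ω = {p : ℂ | p.re ^ 2 / a ^ 2 + p.im ^ 2 / b ^ 2 ≤ 1})
    (S : Set ℂ)
    (hS : S = {z : ℂ | z ∉ Ω ∧
      starRingEnd ℂ z - (Real.pi : ℂ)⁻¹ * (∫ ζ in Ω, (z - ζ)⁻¹) - (γ : ℂ) * z
        = starRingEnd ℂ w})
    (hfin : S.Finite) :
    S.ncard ≤ 4 := by
  subst hΩ hS
  exact ENat.toNat_le_of_le_natCast
    (elliptic_lens_at_most_four_bright_images_general a b (hb.trans hab) hb γ w)
end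

section
/- Let a > b > 0, let Ω = { x + iy : x²/a² + y²/b² ≤ 1 } ⊂ ℂ, let γ ∈ ℝ with γ ≠ (a − b)/(a + b), and let w ∈ ℂ. Then there is at most one z in the open interior { x + iy : x²/a² + y²/b² < 1 } satisfying conj(z) − (1/π)∫_Ω 1/(z − ζ) dA(ζ) − γ z = conj(w); moreover every such interior solution satisfies the linear equation ((a − b)/(a + b) − γ) z = conj(w). -/
open Complex MeasureTheory

open Real (circleAverage)
open scoped Real ComplexConjugate InnerProductSpace

/-!
The ellipse is `{ζ | ‖L ζ‖ ≤ R}` for an injective real-linear map `L ζ = α ζ + β conj ζ`. In polar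
coordinates at `z`, the Jacobian `r` cancels the modulus of the Cauchy kernel, so that
`∫ ζ in Ω, (z - ζ)⁻¹` is the integral over the unit directions `u` of `-ρ u * u⁻¹`, where `ρ u` is
the distance from `z` to the boundary of `Ω` in the direction `u`. As `u⁻¹` is odd, only
`ρ u - ρ (-u)` matters: here the square roots of the quadratic formula cancel and
`-2 * ⟪L z, L u⟫ / ‖L u‖ ^ 2` remains. This is a rational function of `u` on the unit circle, and
the mean value property evaluates its integral against `u⁻¹`. Altogether the Cauchy integral is
`π * conj (L z) / conj α`, whose antiholomorphic part `π * conj z` cancels the first term of the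
lens equation and leaves an equation linear in `z`.
-/

section CircleAverage

variable {E : Type*} [NormedAddCommGroup E] {f : ℂ → E} {c : ℂ} {R : ℝ}

lemma circleIntegrable_comp_neg (hf : CircleIntegrable f 0 R) :
    CircleIntegrable (fun u ↦ f (-u)) 0 R := by
  simpa only [CircleIntegrable, circleMap, zero_add, ofReal_neg, neg_mul] using
    circleIntegrable_neg_radius.mpr hf

lemma integrableOn_Ioo_neg_pi_pi_circleMap (hf : CircleIntegrable f c R) :
    IntegrableOn (fun θ ↦ f (circleMap c R θ)) (Set.Ioo (-π) π) := by
  have hperiodic : (fun θ ↦ f (circleMap c R θ)).Periodic (2 * π) := (periodic_circleMap c R).comp f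
  have hfull : IntervalIntegrable (fun θ ↦ f (circleMap c R θ)) volume 0 (0 + 2 * π) := by
    rwa [zero_add]
  exact (intervalIntegrable_iff_integrableOn_Ioo_of_le (by linarith [Real.pi_pos])).mp
    (hperiodic.intervalIntegrable Real.two_pi_pos.ne' hfull _ _)

variable [NormedSpace ℝ E]

lemma setIntegral_Ioo_neg_pi_pi_circleMap (f : ℂ → E) (c : ℂ) (R : ℝ) :
    ∫ θ in Set.Ioo (-π) π, f (circleMap c R θ) = (2 * π) • circleAverage f c R := by
  have hperiodic : (fun θ ↦ f (circleMap c R θ)).Periodic (2 * π) := (periodic_circleMap c R).comp f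
  rw [Real.circleAverage_def, smul_inv_smul₀ Real.two_pi_pos.ne', ← integral_Ioc_eq_integral_Ioo,
    ← intervalIntegral.integral_of_le (by linarith [Real.pi_pos])]
  have hshift := hperiodic.intervalIntegral_add_eq (-π) 0
  rwa [zero_add, show -π + 2 * π = π by ring] at hshift

lemma circleAverage_comp_neg (f : ℂ → E) (R : ℝ) :
    circleAverage (fun u ↦ f (-u)) 0 R = circleAverage f 0 R := by
  rw [← Real.circleAverage_neg_radius (f := f)]
  simp only [circleAverage, circleMap, zero_add, ofReal_neg, neg_mul]

lemma circleAverage_add_comp_neg (hf : CircleIntegrable f 0 R) :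
    circleAverage (fun u ↦ f u + f (-u)) 0 R = (2 : ℝ) • circleAverage f 0 R := by
  rw [Real.circleAverage_fun_add hf (circleIntegrable_comp_neg hf), circleAverage_comp_neg,
    two_smul]

lemma add_mul_sq_ne_zero {s d u : ℂ} (h : ‖d‖ < ‖s‖) (hu : ‖u‖ ≤ 1) : s + d * u ^ 2 ≠ 0 := by
  intro hzero
  have hs : ‖s‖ = ‖d‖ * ‖u‖ ^ 2 := by
    rw [eq_neg_of_add_eq_zero_left hzero, norm_neg, norm_mul, norm_pow]
  exact h.not_ge (hs.trans_le
    (mul_le_of_le_one_right (norm_nonneg d) (pow_le_one₀ (norm_nonneg u) hu)))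

lemma circleAverage_div_add_mul_sq {g : ℂ → ℂ} {s d : ℂ} (hg : Differentiable ℂ g)
    (h : ‖d‖ < ‖s‖) :
    circleAverage (fun u ↦ g u / (s + d * u ^ 2)) 0 1 = g 0 / s := by
  have hdiff : DifferentiableOn ℂ (fun u ↦ g u / (s + d * u ^ 2)) (Metric.closedBall 0 |1|) :=
    hg.differentiableOn.div (by fun_prop) fun u hu ↦ add_mul_sq_ne_zero h (by simpa using hu)
  simpa using (hdiff.diffContOnCl_ball subset_rfl).circleAverage

end CircleAverage

section RadialIntegration

variable {E : Type*} [NormedAddCommGroup E]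

lemma integrableOn_Ioi_indicator_Iic_const (t : ℝ) (v : E) :
    IntegrableOn ((Set.Iic t).indicator fun _ ↦ v) (Set.Ioi 0) := by
  have hfin : IntegrableOn (fun _ ↦ v) (Set.Ioc 0 t) := integrable_const v
  rwa [IntegrableOn, integrable_indicator_iff measurableSet_Iic, IntegrableOn,
    Measure.restrict_restrict measurableSet_Iic, Set.inter_comm, Set.Ioi_inter_Iic]

variable [NormedSpace ℝ E] [CompleteSpace E]

lemma setIntegral_Ioi_indicator_Iic_const {t : ℝ} (ht : 0 ≤ t) (v : E) :
    ∫ r in Set.Ioi 0, (Set.Iic t).indicator (fun _ ↦ v) r = t • v := by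
  rw [setIntegral_indicator measurableSet_Iic, Set.Ioi_inter_Iic, setIntegral_const,
    Real.volume_real_Ioc_of_le ht, sub_zero]

lemma integral_prod_indicator_le_eq_integral_smul {α : Type*} [MeasurableSpace α] {ν : Measure α}
    [SFinite ν] {h : α → ℝ} {g : α → E} (hh : Measurable h) (h_nonneg : ∀ x, 0 ≤ h x)
    (hg : AEStronglyMeasurable g ν) (hint : Integrable (fun x ↦ h x • g x) ν) :
    ∫ p, {p : ℝ × α | p.1 ≤ h p.2}.indicator (fun p ↦ g p.2) p
      ∂((volume.restrict (Set.Ioi 0)).prod ν) = ∫ x, h x • g x ∂ν := by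
  have hmeas : MeasurableSet {p : ℝ × α | p.1 ≤ h p.2} :=
    measurableSet_le (by fun_prop) (by fun_prop)
  have hintegrable : Integrable ({p : ℝ × α | p.1 ≤ h p.2}.indicator fun p ↦ g p.2)
      ((volume.restrict (Set.Ioi 0)).prod ν) := by
    refine (integrable_prod_iff' (hg.comp_snd.indicator hmeas)).mpr
      ⟨.of_forall fun x ↦ integrableOn_Ioi_indicator_Iic_const (h x) (g x),
        hint.norm.congr (.of_forall fun x ↦ ?_)⟩
    simp only [norm_indicator_eq_indicator_norm]
    exact (norm_smul_of_nonneg (h_nonneg x) _).trans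
      (setIntegral_Ioi_indicator_Iic_const (h_nonneg x) ‖g x‖).symm
  rw [integral_prod_symm _ hintegrable]
  exact integral_congr_ae
    (.of_forall fun x ↦ setIntegral_Ioi_indicator_Iic_const (h_nonneg x) (g x))

lemma setIntegral_inv_sub_eq_circleAverage {Ω : Set ℂ} (hΩ : MeasurableSet Ω) {z : ℂ} {ρ : ℂ → ℝ}
    (hρ : Measurable ρ) (hρ_nonneg : ∀ u, 0 ≤ ρ u) (hρ_int : CircleIntegrable ρ 0 1)
    (hmem : ∀ u : ℂ, ‖u‖ = 1 → ∀ r : ℝ, 0 < r → (z + r • u ∈ Ω ↔ r ≤ ρ u)) :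
    ∫ ζ in Ω, (z - ζ)⁻¹ = (2 * π) • circleAverage (fun u ↦ ρ u • -u⁻¹) 0 1 := by
  have hint : CircleIntegrable (fun u ↦ ρ u • -u⁻¹) 0 1 :=
    hρ_int.smul_continuousOn (continuousOn_id.inv₀ fun u hu ↦
      Metric.ne_of_mem_sphere hu (by norm_num)).neg
  have hpolar : ∀ p ∈ Set.Ioi (0 : ℝ) ×ˢ Set.Ioo (-π) π,
      p.1 • Ω.indicator (fun ζ ↦ (z - ζ)⁻¹) (z + Complex.polarCoord.symm p) =
        {p : ℝ × ℝ | p.1 ≤ ρ (circleMap 0 1 p.2)}.indicator (fun p ↦ -(circleMap 0 1 p.2)⁻¹) p := by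
    rintro ⟨r, θ⟩ ⟨hr : 0 < r, -⟩
    have hsymm : Complex.polarCoord.symm (r, θ) = r • circleMap 0 1 θ := by
      simp [circleMap_zero, exp_mul_I, mul_add]
    have hr_ne : (r : ℂ) ≠ 0 := ofReal_ne_zero.mpr hr.ne'
    simp only [hsymm, Set.indicator, hmem (circleMap 0 1 θ) (by simp) r hr, Set.mem_ofPred_eq]
    split_ifs
    · rw [real_smul, real_smul, sub_add_cancel_left, inv_neg, mul_inv, mul_neg,
        mul_inv_cancel_left₀ hr_ne]
    · exact smul_zero r
  calc ∫ ζ in Ω, (z - ζ)⁻¹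
      = ∫ p in Set.Ioi (0 : ℝ) ×ˢ Set.Ioo (-π) π,
          {p : ℝ × ℝ | p.1 ≤ ρ (circleMap 0 1 p.2)}.indicator
            (fun p ↦ -(circleMap 0 1 p.2)⁻¹) p := by
        rw [← integral_indicator hΩ, ← integral_add_left_eq_self _ z,
          ← Complex.integral_comp_polarCoord_symm]
        exact setIntegral_congr_fun (measurableSet_Ioi.prod measurableSet_Ioo) hpolar
    _ = ∫ θ in Set.Ioo (-π) π, ρ (circleMap 0 1 θ) • -(circleMap 0 1 θ)⁻¹ := by
        rw [Measure.volume_eq_prod, ← Measure.prod_restrict]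
        exact integral_prod_indicator_le_eq_integral_smul (hρ.comp (measurable_circleMap 0 1))
          (fun _ ↦ hρ_nonneg _) (measurable_circleMap 0 1).inv.neg.aestronglyMeasurable
          (integrableOn_Ioo_neg_pi_pi_circleMap hint)
    _ = (2 * π) • circleAverage (fun u ↦ ρ u • -u⁻¹) 0 1 :=
        setIntegral_Ioo_neg_pi_pi_circleMap (fun u ↦ ρ u • -u⁻¹) 0 1

end RadialIntegration

section RayExit

variable {E : Type*} [NormedAddCommGroup E] [InnerProductSpace ℝ E] {R : ℝ} {q : E}

/-- The parameter at which the ray `r ↦ q + r • p` issuing from a point `q` of the closed ball of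
radius `R` about the origin leaves that ball, i.e. the larger root `r` of `‖q + r • p‖ ^ 2 = R ^ 2`.
The value is meaningful only for `p ≠ 0`. -/
noncomputable def rayExit (R : ℝ) (q p : E) : ℝ :=
  (√(⟪q, p⟫_ℝ ^ 2 + ‖p‖ ^ 2 * (R ^ 2 - ‖q‖ ^ 2)) - ⟪q, p⟫_ℝ) / ‖p‖ ^ 2

lemma abs_inner_le_sqrt_discrim (hq : ‖q‖ ≤ R) (p : E) :
    |⟪q, p⟫_ℝ| ≤ √(⟪q, p⟫_ℝ ^ 2 + ‖p‖ ^ 2 * (R ^ 2 - ‖q‖ ^ 2)) := by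
  have hgap : 0 ≤ R ^ 2 - ‖q‖ ^ 2 := sub_nonneg.mpr (by gcongr)
  exact Real.abs_le_sqrt (le_add_of_nonneg_right (by positivity))

lemma rayExit_nonneg (hq : ‖q‖ ≤ R) (p : E) : 0 ≤ rayExit R q p :=
  div_nonneg (sub_nonneg.mpr ((le_abs_self _).trans (abs_inner_le_sqrt_discrim hq p)))
    (sq_nonneg _)

lemma rayExit_sub_rayExit_neg (R : ℝ) (q p : E) :
    rayExit R q p - rayExit R q (-p) = -(2 * (⟪q, p⟫_ℝ / ‖p‖ ^ 2)) := by
  simp only [rayExit, inner_neg_right, norm_neg, neg_sq]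
  ring

lemma norm_add_smul_le_iff_le_rayExit (hq : ‖q‖ ≤ R) {p : E} (hp : p ≠ 0) {r : ℝ} (hr : 0 ≤ r) :
    ‖q + r • p‖ ≤ R ↔ r ≤ rayExit R q p := by
  set D := ⟪q, p⟫_ℝ ^ 2 + ‖p‖ ^ 2 * (R ^ 2 - ‖q‖ ^ 2)
  have hp_sq : 0 < ‖p‖ ^ 2 := by positivity
  have hD_nonneg : 0 ≤ D :=
    add_nonneg (sq_nonneg _) (mul_nonneg hp_sq.le (sub_nonneg.mpr (by gcongr)))
  have hlower : -√D ≤ r * ‖p‖ ^ 2 + ⟪q, p⟫_ℝ := by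
    linarith [neg_le_of_abs_le (abs_inner_le_sqrt_discrim hq p), mul_nonneg hr hp_sq.le]
  have hcomplete_sq : ‖p‖ ^ 2 * ‖q + r • p‖ ^ 2 - ‖p‖ ^ 2 * R ^ 2 =
      (r * ‖p‖ ^ 2 + ⟪q, p⟫_ℝ) ^ 2 - D := by
    rw [norm_add_sq_real, inner_smul_right, norm_smul, mul_pow, Real.norm_eq_abs, sq_abs]
    ring
  calc ‖q + r • p‖ ≤ R
      ↔ ‖p‖ ^ 2 * ‖q + r • p‖ ^ 2 ≤ ‖p‖ ^ 2 * R ^ 2 := by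
        rw [mul_le_mul_iff_right₀ hp_sq, sq_le_sq₀ (norm_nonneg _) ((norm_nonneg q).trans hq)]
    _ ↔ (r * ‖p‖ ^ 2 + ⟪q, p⟫_ℝ) ^ 2 ≤ D := by
        rw [← sub_nonpos, hcomplete_sq, sub_nonpos]
    _ ↔ r * ‖p‖ ^ 2 + ⟪q, p⟫_ℝ ≤ √D := by
        rw [Real.sq_le hD_nonneg, and_iff_right hlower]
    _ ↔ r ≤ rayExit R q p := by
        rw [rayExit, le_div_iff₀ hp_sq, le_sub_iff_add_le]

lemma continuousOn_rayExit (R : ℝ) (q : E) : ContinuousOn (rayExit R q) {0}ᶜ :=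
  ContinuousOn.div (by fun_prop) (by fun_prop) fun p hp ↦ pow_ne_zero 2 (norm_ne_zero_iff.mpr hp)

lemma setIntegral_inv_sub_norm_map_le {L : ℂ →L[ℝ] E} (hL : Function.Injective L) {z : ℂ}
    (hz : ‖L z‖ ≤ R) :
    ∫ ζ in {ζ | ‖L ζ‖ ≤ R}, (z - ζ)⁻¹ =
      (2 * π) • circleAverage (fun u ↦ (⟪L z, L u⟫_ℝ / ‖L u‖ ^ 2) • u⁻¹) 0 1 := by
  have hLu {u : ℂ} (hu : u ≠ 0) : L u ≠ 0 := (map_ne_zero_iff L hL).mpr hu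
  have hΩ : MeasurableSet {ζ | ‖L ζ‖ ≤ R} :=
    (isClosed_le (by fun_prop) continuous_const).measurableSet
  set ρ : ℂ → ℝ := fun u ↦ rayExit R (L z) (L u)
  have hρ_meas : Measurable ρ := by
    unfold ρ rayExit
    fun_prop
  have hsphere : ∀ u ∈ Metric.sphere (0 : ℂ) 1, u ≠ 0 := fun u hu ↦
    Metric.ne_of_mem_sphere hu one_ne_zero
  have hρ_cont : ContinuousOn ρ (Metric.sphere 0 1) :=
    (continuousOn_rayExit R (L z)).comp (by fun_prop) fun u hu ↦ hLu (hsphere u hu)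
  have hint : CircleIntegrable (fun u ↦ ρ u • -u⁻¹) 0 1 :=
    (hρ_cont.smul (continuousOn_id.inv₀ hsphere).neg).circleIntegrable zero_le_one
  have hpair : (fun u ↦ ρ u • -u⁻¹ + ρ (-u) • -(-u)⁻¹) =
      fun u ↦ (2 : ℝ) • (⟪L z, L u⟫_ℝ / ‖L u‖ ^ 2) • u⁻¹ := by
    funext u
    simp only [ρ, map_neg]
    rw [inv_neg, smul_neg _ (-u⁻¹), ← sub_eq_add_neg, ← sub_smul,
      rayExit_sub_rayExit_neg, neg_smul_neg, mul_smul]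
  rw [setIntegral_inv_sub_eq_circleAverage hΩ hρ_meas
    (fun u ↦ rayExit_nonneg hz (L u)) (hρ_cont.circleIntegrable zero_le_one)]
  · have hdouble := circleAverage_add_comp_neg hint
    rw [hpair, Real.circleAverage_fun_smul] at hdouble
    rw [smul_right_injective ℂ (two_ne_zero (α := ℝ)) hdouble]
  · intro u hu r hr
    rw [Set.mem_ofPred_eq, map_add, map_smul]
    have hu_ne : u ≠ 0 := norm_ne_zero_iff.mp (hu.symm ▸ one_ne_zero)
    exact norm_add_smul_le_iff_le_rayExit hz (hLu hu_ne) hr.le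

end RayExit

section Ellipse

/-- The real-linear endomorphism `ζ ↦ α ζ + β conj ζ` of `ℂ`, given by its Wirtinger derivatives `α`
and `β`; the preimages of discs under these maps are the ellipses centred at the origin. -/
noncomputable def wirtingerCLM (α β : ℂ) : ℂ →L[ℝ] ℂ :=
  α • ContinuousLinearMap.id ℝ ℂ + β • conjCLE.toContinuousLinearMap

lemma wirtingerCLM_apply (α β ζ : ℂ) : wirtingerCLM α β ζ = α * ζ + β * conj ζ := rfl

variable {α β : ℂ}

lemma wirtingerCLM_injective (h : ‖β‖ < ‖α‖) : Function.Injective (wirtingerCLM α β) := by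
  refine (injective_iff_map_eq_zero _).mpr fun ζ hζ ↦ ?_
  by_contra hne
  have hnorm : ‖α‖ * ‖ζ‖ = ‖β‖ * ‖ζ‖ := by
    rw [wirtingerCLM_apply] at hζ
    rw [← norm_mul, eq_neg_of_add_eq_zero_left hζ, norm_neg, norm_mul, RCLike.norm_conj]
  exact h.ne' (mul_right_cancel₀ (norm_ne_zero_iff.mpr hne) hnorm)

lemma inner_div_norm_sq_eq {p : ℂ} (hp : p ≠ 0) (q : ℂ) :
    ((⟪q, p⟫_ℝ / ‖p‖ ^ 2 : ℝ) : ℂ) = 2⁻¹ * (q / p + conj q / conj p) := by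
  have hp_conj : conj p ≠ 0 := (map_ne_zero _).mpr hp
  rw [Complex.inner, ofReal_div, re_eq_add_conj, ofReal_pow, ← mul_conj', map_mul, conj_conj]
  field_simp
  ring

lemma inner_wirtingerCLM_div_norm_sq_smul_inv (h : ‖β‖ < ‖α‖) {u : ℂ} (hu : ‖u‖ = 1) (q : ℂ) :
    (⟪q, wirtingerCLM α β u⟫_ℝ / ‖wirtingerCLM α β u‖ ^ 2) • u⁻¹ =
      (2⁻¹ : ℝ) • (q * u⁻¹ ^ 2 / (α + β * u⁻¹ ^ 2) + conj q / (conj α + conj β * u ^ 2)) := by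
  have hu_ne : u ≠ 0 := norm_ne_zero_iff.mp (hu.symm ▸ one_ne_zero)
  have hconj : conj u = u⁻¹ := (inv_eq_conj hu).symm
  have hW : wirtingerCLM α β u = u * (α + β * u⁻¹ ^ 2) := by
    rw [wirtingerCLM_apply, hconj]
    field_simp
  have hW_conj : conj (wirtingerCLM α β u) = u⁻¹ * (conj α + conj β * u ^ 2) := by
    rw [wirtingerCLM_apply, map_add, map_mul, map_mul, conj_conj, hconj]
    field_simp
  have hW_ne : wirtingerCLM α β u ≠ 0 := (map_ne_zero_iff _ (wirtingerCLM_injective h)).mpr hu_ne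
  rw [real_smul, inner_div_norm_sq_eq hW_ne, hW_conj, hW, real_smul]
  push_cast
  field_simp

lemma circleAverage_inner_wirtingerCLM_div_norm_sq_smul_inv (h : ‖β‖ < ‖α‖) (q : ℂ) :
    circleAverage (fun u ↦ (⟪q, wirtingerCLM α β u⟫_ℝ / ‖wirtingerCLM α β u‖ ^ 2) • u⁻¹) 0 1 =
      (2⁻¹ : ℝ) • (conj q / conj α) := by
  have h_conj : ‖conj β‖ < ‖conj α‖ := by simpa only [RCLike.norm_conj] using h
  have hnorm : ∀ u ∈ Metric.sphere (0 : ℂ) 1, ‖u‖ = 1 := fun u ↦ mem_sphere_zero_iff_norm.mp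
  have hinv : ContinuousOn (fun u : ℂ ↦ u⁻¹) (Metric.sphere 0 1) :=
    continuousOn_id.inv₀ fun u hu ↦ Metric.ne_of_mem_sphere hu one_ne_zero
  have hint : CircleIntegrable (fun u ↦ q * u⁻¹ ^ 2 / (α + β * u⁻¹ ^ 2)) 0 1 :=
    (ContinuousOn.div (by fun_prop) (by fun_prop) fun u hu ↦
      add_mul_sq_ne_zero h (by simp [hnorm u hu])).circleIntegrable zero_le_one
  have hint_conj : CircleIntegrable (fun u ↦ conj q / (conj α + conj β * u ^ 2)) 0 1 :=
    (ContinuousOn.div (by fun_prop) (by fun_prop) fun u hu ↦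
      add_mul_sq_ne_zero h_conj (hnorm u hu).le).circleIntegrable zero_le_one
  have hmean : circleAverage (fun u ↦ q * u⁻¹ ^ 2 / (α + β * u⁻¹ ^ 2)) 0 1 = 0 := by
    rw [Real.circleAverage_zero_one_congr_inv (f := fun u ↦ q * u ^ 2 / (α + β * u ^ 2)),
      circleAverage_div_add_mul_sq (by fun_prop) h]
    simp
  rw [Real.circleAverage_congr_sphere fun u hu ↦
      inner_wirtingerCLM_div_norm_sq_smul_inv h (hnorm u (by simpa using hu)) q,
    Real.circleAverage_fun_smul, Real.circleAverage_fun_add hint hint_conj, hmean,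
    circleAverage_div_add_mul_sq (by fun_prop) h_conj, zero_add]

lemma setIntegral_inv_sub_norm_wirtingerCLM_le (h : ‖β‖ < ‖α‖) {R : ℝ} {z : ℂ}
    (hz : ‖wirtingerCLM α β z‖ ≤ R) :
    ∫ ζ in {ζ | ‖wirtingerCLM α β ζ‖ ≤ R}, (z - ζ)⁻¹ =
      π * (conj (wirtingerCLM α β z) / conj α) := by
  rw [setIntegral_inv_sub_norm_map_le (wirtingerCLM_injective h) hz,
    circleAverage_inner_wirtingerCLM_div_norm_sq_smul_inv h, smul_smul,
    mul_comm 2, mul_inv_cancel_right₀ two_ne_zero, real_smul]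

variable {a b : ℝ}

/-- The closed elliptical region centred at the origin with semi-axes `a` along the real axis and
`b` along the imaginary axis. -/
def ellipse (a b : ℝ) : Set ℂ := {p | p.re ^ 2 / a ^ 2 + p.im ^ 2 / b ^ 2 ≤ 1}

lemma ellipse_eq_norm_wirtingerCLM_le (ha : 0 < a) (hb : 0 < b) :
    ellipse a b = {ζ | ‖wirtingerCLM (a + b) (b - a) ζ‖ ≤ 2 * a * b} := by
  ext ζ
  have happly : wirtingerCLM (a + b) (b - a) ζ = (2 * b * ζ.re : ℝ) + (2 * a * ζ.im : ℝ) * I := by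
    apply Complex.ext <;> simp [wirtingerCLM_apply] <;> ring
  have hnorm_sq : ‖wirtingerCLM (a + b) (b - a) ζ‖ ^ 2 =
      (2 * a * b) ^ 2 * (ζ.re ^ 2 / a ^ 2 + ζ.im ^ 2 / b ^ 2) := by
    rw [happly, Complex.sq_norm, normSq_add_mul_I]
    field_simp
  rw [ellipse, Set.mem_ofPred_eq, Set.mem_ofPred_eq, ← sq_le_sq₀ (norm_nonneg _) (by positivity),
    hnorm_sq, mul_le_iff_le_one_right (by positivity)]

lemma setIntegral_inv_sub_ellipse (ha : 0 < a) (hb : 0 < b) {z : ℂ} (hz : z ∈ ellipse a b) :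
    ∫ ζ in ellipse a b, (z - ζ)⁻¹ = π * (conj z - (a - b) / (a + b) * z) := by
  have hlt : ‖(b - a : ℂ)‖ < ‖(a + b : ℂ)‖ := by
    rw [← ofReal_sub, ← ofReal_add, norm_real, norm_real, Real.norm_eq_abs, Real.norm_eq_abs,
      abs_of_pos (add_pos ha hb), abs_sub_lt_iff]
    constructor <;> linarith
  have hne : (a + b : ℂ) ≠ 0 := by exact_mod_cast (add_pos ha hb).ne'
  rw [ellipse_eq_norm_wirtingerCLM_le ha hb] at hz ⊢
  rw [setIntegral_inv_sub_norm_wirtingerCLM_le hlt hz, wirtingerCLM_apply]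
  simp only [map_add, map_sub, map_mul, conj_conj, conj_ofReal]
  field_simp
  ring

end Ellipse

theorem elliptic_lens_at_most_one_dim_image_general {a b : ℝ} (ha : 0 < a) (hb : 0 < b) {γ : ℂ}
    (hγ : γ ≠ (a - b) / (a + b)) (w : ℂ) :
    (∀ z₁ ∈ ellipse a b, ∀ z₂ ∈ ellipse a b,
      conj z₁ - (π : ℂ)⁻¹ * (∫ ζ in ellipse a b, (z₁ - ζ)⁻¹) - γ * z₁ = conj w →
      conj z₂ - (π : ℂ)⁻¹ * (∫ ζ in ellipse a b, (z₂ - ζ)⁻¹) - γ * z₂ = conj w →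
      z₁ = z₂) ∧
    (∀ z ∈ ellipse a b,
      conj z - (π : ℂ)⁻¹ * (∫ ζ in ellipse a b, (z - ζ)⁻¹) - γ * z = conj w →
      ((a - b) / (a + b) - γ) * z = conj w) := by
  have hlinear : ∀ z ∈ ellipse a b,
      conj z - (π : ℂ)⁻¹ * (∫ ζ in ellipse a b, (z - ζ)⁻¹) - γ * z =
        ((a - b) / (a + b) - γ) * z := by
    intro z hz
    rw [setIntegral_inv_sub_ellipse ha hb hz,
      inv_mul_cancel_left₀ (ofReal_ne_zero.mpr Real.pi_ne_zero)]
    ring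
  refine ⟨fun z₁ hz₁ z₂ hz₂ h₁ h₂ ↦ ?_, fun z hz h ↦ (hlinear z hz).symm.trans h⟩
  rw [hlinear z₁ hz₁, ← h₂, hlinear z₂ hz₂] at h₁
  exact mul_left_cancel₀ (sub_ne_zero.mpr hγ.symm) h₁

/-- A uniform elliptic lens with shear `γ ≠ (a-b)/(a+b)` produces at most one
dim image (image strictly inside the ellipse), and any such image satisfies the
linear equation `((a-b)/(a+b) - γ) z = conj w`. -/
theorem elliptic_lens_at_most_one_dim_image
    (a b : ℝ) (hb : 0 < b) (hab : b < a) (γ : ℝ)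
    (hγ : γ ≠ (a - b) / (a + b)) (w : ℂ)
    (Ω : Set ℂ) (hΩ : Ω = {p : ℂ | p.re ^ 2 / a ^ 2 + p.im ^ 2 / b ^ 2 ≤ 1})
    (intΩ : Set ℂ)
    (hintΩ : intΩ = {p : ℂ | p.re ^ 2 / a ^ 2 + p.im ^ 2 / b ^ 2 < 1}) :
    (∀ z₁ ∈ intΩ, ∀ z₂ ∈ intΩ,
      starRingEnd ℂ z₁ - (Real.pi : ℂ)⁻¹ * (∫ ζ in Ω, (z₁ - ζ)⁻¹) - (γ : ℂ) * z₁
          = starRingEnd ℂ w →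
      starRingEnd ℂ z₂ - (Real.pi : ℂ)⁻¹ * (∫ ζ in Ω, (z₂ - ζ)⁻¹) - (γ : ℂ) * z₂
          = starRingEnd ℂ w →
      z₁ = z₂) ∧
    (∀ z ∈ intΩ,
      starRingEnd ℂ z - (Real.pi : ℂ)⁻¹ * (∫ ζ in Ω, (z - ζ)⁻¹) - (γ : ℂ) * z
          = starRingEnd ℂ w →
      (((a - b) / (a + b) - γ : ℝ) : ℂ) * z = starRingEnd ℂ w) := by
  subst hΩ hintΩ
  have hsubset : {p : ℂ | p.re ^ 2 / a ^ 2 + p.im ^ 2 / b ^ 2 < 1} ⊆ ellipse a b :=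
    Set.ofPred_subset_ofPred.mpr fun _ ↦ le_of_lt
  obtain ⟨hunique, hlinear⟩ := elliptic_lens_at_most_one_dim_image_general (hb.trans hab) hb
    (γ := γ) (by exact_mod_cast hγ) w
  exact ⟨fun z₁ hz₁ z₂ hz₂ ↦ hunique z₁ (hsubset hz₁) z₂ (hsubset hz₂), fun z hz h ↦ by
    exact_mod_cast hlinear z (hsubset hz) h⟩
end

section
/- Let a > b > 0, let Ω = { x + iy : x²/a² + y²/b² ≤ 1 } ⊂ ℂ with boundary ellipse ∂Ω = { x + iy : x²/a² + y²/b² = 1 }, let γ ∈ ℝ and w ∈ ℂ. Consider the set S = { z ∈ ℂ : z ∉ ∂Ω and conj(z) − (1/π)∫_Ω 1/(z − ζ) dA(ζ) − γ z = conj(w) }. If S is finite, then S has at most 5 elements (at most 4 outside Ω and at most 1 inside). -/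
open Complex MeasureTheory

/-!
Slice the ellipse into the shells between homothetic ellipses. A shell exerts no field on the points
it encloses (Newton), and by residues its field on the points outside it is proportional to `1/s`,
where `s² = z² - (a² - b²) r²` and `a r`, `b r` are the semi-axes. Integrating over the shells gives
a deflection that is real-linear in `z` inside the ellipse, and equal to `2ab/V` outside it when
`z = (V + (a² - b²)/V)/2` is written in the Joukowski coordinate `|V| > a + b`.

The lens equation is therefore linear inside. Outside, its real and imaginary parts determine
`x` and `y` in `V = x + iy` as rational functions of `T = |V|²`, and substituting them into
`T = x² + y²` leaves an equation of degree four in `T`. When `w` lies on a coordinate axis the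
elimination degenerates and the solutions on and off that axis are counted separately. Finiteness
excludes the cases in which a whole circle of values of `V`, or the whole interior, is a solution.
-/

open Set Metric
open scoped Real ComplexConjugate

namespace EllipticLens

section PolarCoordinates

variable {E : Type*} [NormedAddCommGroup E] [NormedSpace ℝ E] {f : ℂ → E}

lemma integrableOn_smul_comp_polarCoord_symm (hf : Integrable f) :
    IntegrableOn (fun p : ℝ × ℝ ↦ p.1 • f (Complex.polarCoord.symm p)) polarCoord.target := by
  have hf' : Integrable (f ∘ measurableEquivRealProd.symm) :=
    volume_preserving_equiv_real_prod.symm.integrable_comp_emb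
      measurableEquivRealProd.symm.measurableEmbedding |>.2 hf
  have htarget : MeasurableSet polarCoord.target := polarCoord.open_target.measurableSet
  refine ((integrableOn_image_iff_integrableOn_abs_det_fderiv_smul volume htarget
    (fun p _ ↦ (hasFDerivAt_polarCoord_symm p).hasFDerivWithinAt) polarCoord.symm.injOn _).1
    hf'.integrableOn).congr_fun (fun p hp ↦ ?_) htarget
  simp only [det_fderivPolarCoordSymm, Function.comp_apply,
    measurableEquivRealProd_symm_polarCoord_symm_apply, abs_of_pos (mem_Ioi.1 hp.1)]

lemma integral_eq_integral_circleMap (hf : Integrable f) :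
    ∫ ζ, f ζ = ∫ r in Ioi (0 : ℝ), r • ∫ θ in Ioo (-π) π, f (circleMap 0 r θ) := by
  rw [← Complex.integral_comp_polarCoord_symm, polarCoord_target, Measure.volume_eq_prod,
    setIntegral_prod _ (integrableOn_smul_comp_polarCoord_symm hf)]
  simp [integral_smul, circleMap, exp_mul_I]

lemma setIntegral_closedBall_eq_integral_circleMap {R : ℝ}
    (hf : IntegrableOn f (closedBall 0 R)) :
    ∫ ζ in closedBall 0 R, f ζ =
      ∫ r in Ioc 0 R, r • ∫ θ in Ioo (-π) π, f (circleMap 0 r θ) := by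
  rw [← integral_indicator measurableSet_closedBall,
    integral_eq_integral_circleMap (hf.integrable_indicator measurableSet_closedBall),
    ← Ioi_inter_Iic, ← setIntegral_indicator measurableSet_Iic]
  refine setIntegral_congr_fun measurableSet_Ioi fun r (hr : 0 < r) ↦ ?_
  by_cases hrR : r ≤ R <;> simp [indicator, abs_of_pos hr, hrR]

lemma integrableOn_sub_inv {s : Set ℂ} (hs : Bornology.IsBounded s) (z : ℂ) :
    IntegrableOn (fun ζ ↦ (z - ζ)⁻¹) s := by
  have hinv : LocallyIntegrable fun ζ : ℂ ↦ ζ⁻¹ :=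
    locallyIntegrable_of_norm_le_rpow (C := 1) (α := 1) (by simp) (by simp)
      (.of_forall fun ζ ↦ by rw [norm_inv, Real.rpow_neg_one, one_mul]) (by fun_prop)
  obtain ⟨R, hR⟩ := hs.subset_closedBall z
  have hball : (z - ·) ⁻¹' closedBall (0 : ℂ) R = closedBall z R := by
    ext; simp [dist_eq_norm, norm_sub_rev]
  refine IntegrableOn.mono_set ?_ (hball ▸ hR)
  exact ((volume.measurePreserving_sub_left z).integrableOn_comp_preimage
    (Homeomorph.subLeft z).measurableEmbedding).2
    (hinv.integrableOn_isCompact (isCompact_closedBall 0 R))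

end PolarCoordinates

section Ellipse

/-- The gauge `x²/a² + y²/b²` of the ellipses homothetic to the one with semi-axes `a` and `b`. -/
noncomputable def ellipticNormSq (a b : ℝ) (z : ℂ) : ℝ := z.re ^ 2 / a ^ 2 + z.im ^ 2 / b ^ 2

/-- The closed region bounded by the ellipse with semi-axes `a` and `b`. -/
def solidEllipse (a b : ℝ) : Set ℂ := {z | ellipticNormSq a b z ≤ 1}

/-- The real-linear map `x + iy ↦ ax + iby`, which carries the unit disc to the ellipse with
semi-axes `a` and `b`. -/
noncomputable def axisScaling (a b : ℝ) : ℂ →L[ℝ] ℂ :=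
  (Matrix.toLin basisOneI basisOneI !![a, 0; 0, b]).toContinuousLinearMap

variable {a b : ℝ}

@[simp]
lemma axisScaling_apply (a b : ℝ) (z : ℂ) : axisScaling a b z = ⟨a * z.re, b * z.im⟩ := by
  simp [axisScaling, Matrix.toLin_apply, Complex.ext_iff, mul_comm]

lemma det_axisScaling (a b : ℝ) : (axisScaling a b).det = a * b := by
  simp [axisScaling, LinearMap.det_toLin]

lemma axisScaling_injective (ha : a ≠ 0) (hb : b ≠ 0) : Function.Injective (axisScaling a b) :=
  fun z w h ↦ by simpa [Complex.ext_iff, ha, hb] using h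

lemma axisScaling_axisScaling_inv (ha : a ≠ 0) (hb : b ≠ 0) (z : ℂ) :
    axisScaling a b (axisScaling a⁻¹ b⁻¹ z) = z := by
  simp [ha, hb]

lemma ellipticNormSq_eq_norm_sq (a b : ℝ) (z : ℂ) :
    ellipticNormSq a b z = ‖axisScaling a⁻¹ b⁻¹ z‖ ^ 2 := by
  rw [ellipticNormSq, ← normSq_eq_norm_sq, normSq_apply, axisScaling_apply]
  ring

lemma ellipticNormSq_pos (ha : a ≠ 0) (hb : b ≠ 0) {z : ℂ} (hz : z ≠ 0) :
    0 < ellipticNormSq a b z := by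
  rw [ellipticNormSq_eq_norm_sq]
  have := (map_ne_zero_iff _ (axisScaling_injective (inv_ne_zero ha) (inv_ne_zero hb))).2 hz
  positivity

lemma continuous_ellipticNormSq (a b : ℝ) : Continuous (ellipticNormSq a b) := by
  unfold ellipticNormSq
  fun_prop

lemma axisScaling_image_closedBall (ha : a ≠ 0) (hb : b ≠ 0) :
    axisScaling a b '' closedBall 0 1 = solidEllipse a b := by
  have hinv : Function.LeftInverse (axisScaling a⁻¹ b⁻¹) (axisScaling a b) := fun z ↦ by
    simpa using axisScaling_axisScaling_inv (inv_ne_zero ha) (inv_ne_zero hb) z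
  rw [image_eq_preimage_of_inverse hinv (axisScaling_axisScaling_inv ha hb)]
  ext z
  simp [solidEllipse, ellipticNormSq_eq_norm_sq, -axisScaling_apply]

lemma isBounded_solidEllipse (ha : a ≠ 0) (hb : b ≠ 0) :
    Bornology.IsBounded (solidEllipse a b) :=
  axisScaling_image_closedBall ha hb ▸
    ((isCompact_closedBall 0 1).image (axisScaling a b).continuous).isBounded

lemma setIntegral_solidEllipse_eq_integral_circleMap {E : Type*} [NormedAddCommGroup E]
    [NormedSpace ℝ E] {f : ℂ → E} (ha : 0 < a) (hb : 0 < b)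
    (hf : IntegrableOn f (solidEllipse a b)) :
    ∫ ζ in solidEllipse a b, f ζ = (a * b) • ∫ r in Ioc (0 : ℝ) 1,
      r • ∫ θ in Ioo (-π) π, f (axisScaling a b (circleMap 0 r θ)) := by
  have hab : 0 < a * b := mul_pos ha hb
  have hderiv : ∀ z ∈ closedBall (0 : ℂ) 1,
      HasFDerivWithinAt (axisScaling a b) (axisScaling a b) (closedBall 0 1) z :=
    fun z _ ↦ (axisScaling a b).hasFDerivWithinAt
  have hinj := (axisScaling_injective ha.ne' hb.ne').injOn (s := closedBall 0 1)
  rw [← axisScaling_image_closedBall ha.ne' hb.ne'] at hf ⊢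
  rw [integrableOn_image_iff_integrableOn_abs_det_fderiv_smul volume measurableSet_closedBall
    hderiv hinj, det_axisScaling, abs_of_pos hab] at hf
  rw [integral_image_eq_integral_abs_det_fderiv_smul volume measurableSet_closedBall hderiv hinj,
    det_axisScaling, abs_of_pos hab, integral_smul, setIntegral_closedBall_eq_integral_circleMap]
  exact (integrable_smul_iff hab.ne' _).1 hf

end Ellipse

section Joukowski

/-- The Joukowski map with foci at `±√c`, which parametrises the exterior of an ellipse by the
exterior of a disc. -/
noncomputable def joukowski (c : ℝ) (V : ℂ) : ℂ := (V + c / V) / 2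

lemma joukowski_re (c : ℝ) (V : ℂ) : (joukowski c V).re = (1 + c / normSq V) / 2 * V.re := by
  rw [joukowski, div_ofNat_re, add_re, div_eq_mul_inv (c : ℂ), re_ofReal_mul, inv_re]
  ring

lemma joukowski_im (c : ℝ) (V : ℂ) : (joukowski c V).im = (1 - c / normSq V) / 2 * V.im := by
  rw [joukowski, div_ofNat_im, add_im, div_eq_mul_inv (c : ℂ), im_ofReal_mul, inv_im]
  ring

lemma joukowski_eq_iff {c : ℝ} {V z : ℂ} (hV : V ≠ 0) :
    joukowski c V = z ↔ V ^ 2 - 2 * z * V + c = 0 := by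
  rw [joukowski, div_eq_iff two_ne_zero, ← sub_eq_zero, ← mul_left_inj' hV]
  field_simp
  ring_nf

lemma joukowski_add_eq {c : ℝ} {z s : ℂ} (hV : z + s ≠ 0) (hs : s ^ 2 = z ^ 2 - c) :
    joukowski c (z + s) = z :=
  (joukowski_eq_iff hV).2 (by linear_combination hs)

lemma injOn_joukowski {c K : ℝ} (hK : 0 ≤ K) (hc : |c| ≤ K ^ 2) :
    InjOn (joukowski c) {V | K < ‖V‖} := by
  intro V hV V' hV' h
  have hV0 : V ≠ 0 := norm_pos_iff.1 (hK.trans_lt hV)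
  have hV0' : V' ≠ 0 := norm_pos_iff.1 (hK.trans_lt hV')
  have hquad := (joukowski_eq_iff hV0).1 h
  have hquad' := (joukowski_eq_iff (c := c) hV0').1 rfl
  have hfactor : (V - V') * (V * V' - c) = 0 := by linear_combination V' * hquad - V * hquad'
  have hnorm : |c| < ‖V * V'‖ := by
    rw [norm_mul]
    exact hc.trans_lt (sq K ▸ mul_lt_mul'' hV hV' hK hK)
  have hne : V * V' - c ≠ 0 := fun h0 ↦ hnorm.ne' (by simp [sub_eq_zero.1 h0])
  exact sub_eq_zero.1 ((mul_eq_zero.1 hfactor).resolve_right hne)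

lemma ellipticNormSq_joukowski_sub_sq {a b : ℝ} (ha : a ≠ 0) (hb : b ≠ 0) (r : ℝ) {V : ℂ}
    (hV : V ≠ 0) :
    ellipticNormSq a b (joukowski ((a ^ 2 - b ^ 2) * r ^ 2) V) - r ^ 2 =
      (‖V‖ ^ 2 - ((a + b) * r) ^ 2) * (‖V‖ ^ 2 - ((a - b) * r) ^ 2) *
        (ellipticNormSq a b V / (4 * ‖V‖ ^ 4)) := by
  have hT : normSq V ≠ 0 := normSq_eq_zero.not.2 hV
  have hTeq : V.im ^ 2 = normSq V - V.re ^ 2 := by rw [normSq_apply]; ring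
  rw [ellipticNormSq, joukowski_re, joukowski_im, ellipticNormSq, mul_pow, mul_pow, hTeq,
    show ‖V‖ ^ 4 = (‖V‖ ^ 2) ^ 2 by ring, ← normSq_eq_norm_sq]
  field_simp
  ring

end Joukowski

section SquareRoot

/-- The branch of `√(z² - c)` asymptotic to `z` at infinity, cut along the segment joining the
foci `±√c`. -/
noncomputable def sqrtBranch (c : ℝ) (z : ℂ) : ℂ := z * sqrt (1 - c / z ^ 2)

variable {c : ℝ} {z : ℂ}

@[simp]
lemma sqrtBranch_zero (z : ℂ) : sqrtBranch 0 z = z := by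
  simp [sqrtBranch]

lemma sqrtBranch_sq (c : ℝ) (hz : z ≠ 0) : sqrtBranch c z ^ 2 = z ^ 2 - c := by
  rw [sqrtBranch, mul_pow, Complex.sqrt, cpow_ofNat_inv_pow]
  field_simp

lemma re_sqrt_pos {w : ℂ} (hw : w ∈ slitPlane) : 0 < (sqrt w).re := by
  rw [Complex.sqrt, cpow_inv_two_re, Real.sqrt_pos]
  have := neg_le_of_abs_le (abs_re_le_norm w)
  rcases hw with hre | him
  · positivity
  · linarith [abs_re_lt_norm.2 him, neg_abs_le w.re]

lemma re_sqrtBranch_mul_conj_pos (hz : z ≠ 0) (hc : 1 - c / z ^ 2 ∈ slitPlane) :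
    0 < (sqrtBranch c z * conj z).re := by
  rw [sqrtBranch, mul_right_comm, mul_conj, re_ofReal_mul]
  exact mul_pos (normSq_pos.2 hz) (re_sqrt_pos hc)

lemma ne_zero_of_re_mul_conj_pos {s : ℂ} (h : 0 < (s * conj z).re) : s ≠ 0 := by
  rintro rfl
  simp at h

lemma add_ne_zero_of_re_mul_conj_pos {s : ℂ} (h : 0 < (s * conj z).re) : z + s ≠ 0 := by
  intro hzs
  rw [eq_neg_of_add_eq_zero_right hzs, neg_mul, mul_conj, neg_re, ofReal_re] at h
  linarith [normSq_nonneg z]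

lemma eq_of_sq_eq_sq_of_re_mul_conj_pos {s t : ℂ} (hst : s ^ 2 = t ^ 2)
    (hs : 0 < (s * conj z).re) (ht : 0 < (t * conj z).re) : s = t := by
  refine (sq_eq_sq_iff_eq_or_eq_neg.1 hst).resolve_right fun h ↦ ?_
  rw [h, neg_mul, neg_re] at hs
  linarith

lemma hasDerivAt_sqrt {w : ℂ} (hw : w ∈ slitPlane) : HasDerivAt sqrt (1 / (2 * sqrt w)) w := by
  have hpos := re_sqrt_pos hw
  have hne : sqrt w ≠ 0 := fun h ↦ by simp [h] at hpos
  refine ((hasDerivAt_id w).cpow_const (c := 2⁻¹) hw).congr_deriv ?_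
  have hmul : w ^ (2⁻¹ - 1 : ℂ) * sqrt w = 1 := by
    rw [Complex.sqrt, ← cpow_add _ _ (slitPlane_ne_zero hw)]
    norm_num
  rw [eq_div_iff (by simpa using hne), id]
  linear_combination hmul

lemma hasDerivAt_sqrtBranch (hz : z ≠ 0) (hc : 1 - c / z ^ 2 ∈ slitPlane) :
    HasDerivAt (sqrtBranch · z) (-1 / (2 * sqrtBranch c z)) c := by
  have hw : HasDerivAt (fun c : ℂ ↦ 1 - c / z ^ 2) (-1 / z ^ 2) c := by
    simpa [neg_div] using ((hasDerivAt_id (c : ℂ)).div_const (z ^ 2)).const_sub 1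
  refine (((hasDerivAt_sqrt hc).comp (c : ℂ) hw).const_mul z).comp_ofReal.congr_deriv ?_
  rw [sqrtBranch]
  field_simp

/-- Unlike the primitive `-√(z² - k r²) / k`, this one also makes sense for `k = 0`. -/
lemma hasDerivAt_sq_div_add_sqrtBranch {k r : ℝ} (hz : z ≠ 0)
    (hc : 1 - (k * r ^ 2 : ℝ) / z ^ 2 ∈ slitPlane) :
    HasDerivAt (fun r : ℝ ↦ (r ^ 2 : ℂ) / (z + sqrtBranch (k * r ^ 2) z))
      (r / sqrtBranch (k * r ^ 2) z) r := by
  have hpos := re_sqrtBranch_mul_conj_pos hz hc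
  have hs := ne_zero_of_re_mul_conj_pos hpos
  have hzs := add_ne_zero_of_re_mul_conj_pos hpos
  have hsq := sqrtBranch_sq (k * r ^ 2) hz
  have hkr : HasDerivAt (fun r : ℝ ↦ k * r ^ 2) (k * (2 * r)) r := by
    simpa using (hasDerivAt_pow 2 r).const_mul k
  have hr : HasDerivAt (fun r : ℝ ↦ (r : ℂ) ^ 2) (2 * r) r := by
    simpa using (hasDerivAt_pow 2 (r : ℂ)).comp_ofReal
  have hroot : HasDerivAt (fun r : ℝ ↦ sqrtBranch (k * r ^ 2) z)
      ((k * (2 * r)) • (-1 / (2 * sqrtBranch (k * r ^ 2) z))) r :=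
    HasDerivAt.scomp (g₁ := (sqrtBranch · z)) r (hasDerivAt_sqrtBranch hz hc) hkr
  refine (hr.div (hroot.const_add z) hzs).congr_deriv ?_
  set s := sqrtBranch (k * r ^ 2) z
  push_cast [real_smul] at hsq ⊢
  field_simp
  linear_combination r * hsq

end SquareRoot

section ConfocalGeometry

variable {a b r : ℝ} {z : ℂ}

lemma one_sub_focalSq_div_sq_mem_slitPlane (ha : a ≠ 0) (hb : b ≠ 0) (hz : z ≠ 0)
    (hr : r ^ 2 ≤ ellipticNormSq a b z) :
    1 - ((a ^ 2 - b ^ 2) * r ^ 2 : ℝ) / z ^ 2 ∈ slitPlane := by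
  set q : ℂ := 1 - ((a ^ 2 - b ^ 2) * r ^ 2 : ℝ) / z ^ 2 with hq
  by_contra hslit
  rw [mem_slitPlane_iff, not_or, not_lt, not_not] at hslit
  obtain ⟨t, ht, hzt⟩ : ∃ t : ℝ, 1 ≤ t ∧ (((a ^ 2 - b ^ 2) * r ^ 2 : ℝ) : ℂ) = t * z ^ 2 := by
    have hqre : (q.re : ℂ) = q := Complex.ext rfl (by rw [ofReal_im, hslit.2])
    refine ⟨1 - q.re, by linarith, ?_⟩
    rw [ofReal_sub, ofReal_one, hqre, hq]
    field_simp
    ring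
  have ht0 : t ≠ 0 := by positivity
  have hr0 : 0 < r ^ 2 := sq_pos_of_ne_zero fun h ↦ by simp [h, ht0, hz] at hzt
  have hre : (a ^ 2 - b ^ 2) * r ^ 2 = t * (z.re ^ 2 - z.im ^ 2) := by
    simpa [re_ofReal_mul, sq] using congrArg re hzt
  have him : z.re = 0 ∨ z.im = 0 := by
    have := congrArg im hzt
    rw [ofReal_im, im_ofReal_mul, sq, mul_im] at this
    have : t * (z.re * z.im) = 0 := by linarith
    simpa [ht0] using this
  have ha2 : 0 < a ^ 2 := by positivity
  have hb2 : 0 < b ^ 2 := by positivity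
  rcases him with hx | hy
  · rw [ellipticNormSq, hx, zero_pow two_ne_zero, zero_div, zero_add, le_div_iff₀ hb2] at hr
    rw [hx] at hre
    nlinarith [mul_pos ha2 hr0, le_mul_of_one_le_left (sq_nonneg z.im) ht]
  · rw [ellipticNormSq, hy, zero_pow two_ne_zero, zero_div, add_zero, le_div_iff₀ ha2] at hr
    rw [hy] at hre
    nlinarith [mul_pos hb2 hr0, le_mul_of_one_le_left (sq_nonneg z.re) ht]

lemma norm_lt_of_joukowski_eq (ha : 0 < a) (hb : 0 < b) (hr : 0 < r) {V : ℂ} (hV : V ≠ 0)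
    (hz : ellipticNormSq a b (joukowski ((a ^ 2 - b ^ 2) * r ^ 2) V) < r ^ 2) :
    ‖V‖ < (a + b) * r := by
  by_contra! hle
  have hK : ((a + b) * r) ^ 2 ≤ ‖V‖ ^ 2 := by gcongr
  have hL : ((a - b) * r) ^ 2 ≤ ((a + b) * r) ^ 2 := by
    nlinarith [mul_pos (mul_pos ha hb) (pow_pos hr 2)]
  have hN := ellipticNormSq_pos ha.ne' hb.ne' hV
  have := ellipticNormSq_joukowski_sub_sq ha.ne' hb.ne' r hV
  have : 0 ≤ (‖V‖ ^ 2 - ((a + b) * r) ^ 2) * (‖V‖ ^ 2 - ((a - b) * r) ^ 2) *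
      (ellipticNormSq a b V / (4 * ‖V‖ ^ 4)) :=
    mul_nonneg (mul_nonneg (by linarith) (by linarith)) (by positivity)
  linarith

lemma lt_and_lt_of_mul_eq_mul {p m A B : ℝ} (hm : 0 ≤ m) (hmp : m < p) (hB : 0 ≤ B)
    (hBA : B < A) (hprod : p * m = A * B) (hsign : 0 < (p - A) * (p - B)) : m < A ∧ A < p := by
  have hAp : A < p := by
    by_contra! hle
    have hpB : p < B := by
      by_contra! hge
      exact hsign.not_ge (mul_nonpos_of_nonpos_of_nonneg (by linarith) (by linarith))
    have := mul_lt_mul'' hpB (hmp.trans_le hle) (hm.trans hmp.le) hm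
    linarith
  refine ⟨?_, hAp⟩
  by_contra! hle
  nlinarith

lemma norm_sub_lt_and_lt_norm_add (ha : 0 < a) (hb : 0 < b) (hr : 0 < r) {s : ℂ}
    (hz : r ^ 2 < ellipticNormSq a b z) (hsq : s ^ 2 = z ^ 2 - ((a ^ 2 - b ^ 2) * r ^ 2 : ℝ))
    (hpos : 0 < (s * conj z).re) :
    ‖z - s‖ < (a + b) * r ∧ (a + b) * r < ‖z + s‖ := by
  have hV : z + s ≠ 0 := add_ne_zero_of_re_mul_conj_pos hpos
  have hlt : ‖z - s‖ ^ 2 < ‖z + s‖ ^ 2 := by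
    rw [← normSq_eq_norm_sq, ← normSq_eq_norm_sq, normSq_sub, normSq_add, ← conj_re (z * conj s)]
    simp only [map_mul, conj_conj, mul_comm (conj z)]
    linarith
  have hprod : ‖z + s‖ ^ 2 * ‖z - s‖ ^ 2 = ((a + b) * r) ^ 2 * ((a - b) * r) ^ 2 := by
    have h : (z + s) * (z - s) = ((a ^ 2 - b ^ 2) * r ^ 2 : ℝ) := by linear_combination -hsq
    rw [← mul_pow, ← norm_mul, h, norm_real, Real.norm_eq_abs, sq_abs]
    ring
  have hLK : ((a - b) * r) ^ 2 < ((a + b) * r) ^ 2 := by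
    nlinarith [mul_pos (mul_pos ha hb) (pow_pos hr 2)]
  have hN := ellipticNormSq_pos ha.ne' hb.ne' hV
  have hident := ellipticNormSq_joukowski_sub_sq ha.ne' hb.ne' r hV
  rw [joukowski_add_eq hV hsq] at hident
  have hfactors : 0 < (‖z + s‖ ^ 2 - ((a + b) * r) ^ 2) * (‖z + s‖ ^ 2 - ((a - b) * r) ^ 2) :=
    pos_of_mul_pos_left (hident ▸ sub_pos.2 hz) (by positivity)
  have hK : 0 < (a + b) * r := by positivity
  obtain ⟨hin, hout⟩ := lt_and_lt_of_mul_eq_mul (sq_nonneg _) hlt (sq_nonneg _) hLK hprod hfactors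
  exact ⟨lt_of_pow_lt_pow_left₀ 2 hK.le hin, lt_of_pow_lt_pow_left₀ 2 (norm_nonneg _) hout⟩

end ConfocalGeometry

section Homoeoid

/-- Up to the factor `a b r`, the field at `z` of the elliptical shell with semi-axes `a r` and
`b r`, weighted by its thickness (a homoeoid). -/
noncomputable def homoeoidField (a b r : ℝ) (z : ℂ) : ℂ :=
  ∫ θ in Ioo (-π) π, (z - axisScaling a b (circleMap 0 r θ))⁻¹

variable {a b r : ℝ} {z : ℂ}

lemma axisScaling_circleMap (a b r θ : ℝ) :
    axisScaling a b (circleMap 0 r θ) =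
      ((a + b) * r / 2 : ℝ) * circleMap 0 1 θ + ((a - b) * r / 2 : ℝ) * (circleMap 0 1 θ)⁻¹ := by
  have hcirc (R t : ℝ) : circleMap 0 R t = ⟨R * Real.cos t, R * Real.sin t⟩ := by
    apply Complex.ext <;> simp [circleMap]
  have hinv : (circleMap 0 1 θ)⁻¹ = circleMap 0 1 (-θ) := by simp [circleMap, exp_neg]
  rw [hinv, hcirc, hcirc, hcirc, axisScaling_apply, Real.cos_neg]
  apply Complex.ext
  · simp only [add_re, re_ofReal_mul]
    ring
  · simp only [add_im, im_ofReal_mul, Real.sin_neg]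
    ring

lemma homoeoidField_neg_right (a b r : ℝ) (z : ℂ) :
    homoeoidField a (-b) r z = homoeoidField a b r z := by
  have hreflect (θ : ℝ) : axisScaling a (-b) (circleMap 0 r θ) =
      axisScaling a b (circleMap 0 r (-θ)) := by
    apply Complex.ext <;> simp [circleMap, exp_re, exp_im]
  rw [homoeoidField, homoeoidField, ← integral_Ioc_eq_integral_Ioo,
    ← intervalIntegral.integral_of_le (by linarith [Real.pi_pos])]
  simp only [hreflect]
  rw [intervalIntegral.integral_comp_neg
    (fun θ ↦ (z - axisScaling a b (circleMap 0 r θ))⁻¹), neg_neg,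
    intervalIntegral.integral_of_le (by linarith [Real.pi_pos]), integral_Ioc_eq_integral_Ioo]

lemma homoeoidField_eq_circleIntegral (a b r : ℝ) (z : ℂ) :
    homoeoidField a b r z = I * ∮ u in C(0, 1),
      (((a + b) * r / 2 : ℝ) * u ^ 2 - z * u + ((a - b) * r / 2 : ℝ))⁻¹ := by
  have hperiodic : Function.Periodic
      (fun θ ↦ (z - axisScaling a b (circleMap 0 r θ))⁻¹) (2 * π) := fun θ ↦ by
    simp only [periodic_circleMap 0 r θ]
  have hshift := hperiodic.intervalIntegral_add_eq (-π) 0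
  rw [show -π + 2 * π = π by ring, zero_add] at hshift
  rw [homoeoidField, ← integral_Ioc_eq_integral_Ioo,
    ← intervalIntegral.integral_of_le (by linarith [Real.pi_pos]), hshift, circleIntegral,
    ← intervalIntegral.integral_const_mul]
  refine intervalIntegral.integral_congr fun θ _ ↦ ?_
  simp only [axisScaling_circleMap, deriv_circleMap, smul_eq_mul]
  have hu : circleMap 0 1 θ ≠ 0 := circleMap_ne_center one_ne_zero
  set u := circleMap 0 1 θ
  set α : ℂ := (((a + b) * r / 2 : ℝ) : ℂ)
  set β : ℂ := (((a - b) * r / 2 : ℝ) : ℂ)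
  have hquad : z - (α * u + β * u⁻¹) = -(α * u ^ 2 - z * u + β) / u := by
    field_simp
    ring
  rw [hquad, inv_div, div_neg]
  linear_combination (-u * (α * u ^ 2 - z * u + β)⁻¹) * I_sq

lemma homoeoidField_of_ellipticNormSq_lt (ha : 0 < a) (hb : 0 < b) (hr : 0 < r)
    (hz : ellipticNormSq a b z < r ^ 2) : homoeoidField a b r z = 0 := by
  have hne : ∀ u ∈ closedBall (0 : ℂ) 1,
      ((a + -b) * r / 2 : ℝ) * u ^ 2 - z * u + ((a - -b) * r / 2 : ℝ) ≠ 0 := by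
    intro u hu hroot
    have hK : 0 < (a + b) * r := by positivity
    have hu0 : u ≠ 0 := by
      rintro rfl
      simp [-ofReal_div, -ofReal_mul, -ofReal_add, hK.ne'] at hroot
    have hV : ((a + b) * r : ℝ) / u ≠ 0 := div_ne_zero (ofReal_ne_zero.2 hK.ne') hu0
    have hjou : joukowski ((a ^ 2 - b ^ 2) * r ^ 2) (((a + b) * r : ℝ) / u) = z := by
      rw [joukowski_eq_iff hV]
      push_cast at hroot ⊢
      field_simp
      linear_combination 2 * (a + b) * r * hroot
    have hlt := norm_lt_of_joukowski_eq ha hb hr hV (hjou ▸ hz)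
    rw [norm_div, norm_real, Real.norm_of_nonneg hK.le, div_lt_iff₀ (norm_pos_iff.2 hu0)] at hlt
    nlinarith [mem_closedBall_zero_iff.1 hu]
  -- Replacing `b` by `-b` reverses the quadratic, whose roots then lie outside the closed disc.
  rw [← homoeoidField_neg_right, homoeoidField_eq_circleIntegral]
  have hdiff : DifferentiableOn ℂ (fun u ↦ (((a + -b) * r / 2 : ℝ) * u ^ 2 - z * u +
      ((a - -b) * r / 2 : ℝ) : ℂ)⁻¹) (closedBall 0 1) :=
    DifferentiableOn.inv (by fun_prop) hne
  rw [(hdiff.diffContOnCl_ball subset_rfl).circleIntegral_eq_zero zero_le_one, mul_zero]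

lemma circleIntegral_inv_mul_sub_mul_sub {c v₁ v₂ : ℂ} {R : ℝ} (α : ℂ)
    (h₁ : v₁ ∉ closedBall c R) (h₂ : v₂ ∈ ball c R) :
    (∮ u in C(c, R), (α * (u - v₁) * (u - v₂))⁻¹) = 2 * π * I / (α * (v₂ - v₁)) := by
  have hdiff : DifferentiableOn ℂ (fun u ↦ (u - v₁)⁻¹) (closedBall c R) :=
    DifferentiableOn.inv (by fun_prop) fun u hu h ↦ h₁ (sub_eq_zero.1 h ▸ hu)
  have hcauchy := (hdiff.diffContOnCl_ball subset_rfl).circleIntegral_sub_inv_smul h₂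
  simp only [smul_eq_mul] at hcauchy
  simp only [mul_inv, mul_assoc, circleIntegral.integral_const_mul, mul_comm (_ - v₁)⁻¹]
  rw [hcauchy]
  field_simp

lemma homoeoidField_of_lt_ellipticNormSq (ha : 0 < a) (hb : 0 < b) (hr : 0 < r) {s : ℂ}
    (hz : r ^ 2 < ellipticNormSq a b z) (hsq : s ^ 2 = z ^ 2 - ((a ^ 2 - b ^ 2) * r ^ 2 : ℝ))
    (hpos : 0 < (s * conj z).re) : homoeoidField a b r z = 2 * π / s := by
  obtain ⟨hin, hout⟩ := norm_sub_lt_and_lt_norm_add ha hb hr hz hsq hpos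
  have hK : 0 < (a + b) * r := by positivity
  rw [homoeoidField_eq_circleIntegral]
  set K : ℝ := (a + b) * r with hKdef
  have hKC : (K : ℂ) ≠ 0 := ofReal_ne_zero.2 hK.ne'
  have hquad (u : ℂ) : (K / 2 : ℝ) * u ^ 2 - z * u + ((a - b) * r / 2 : ℝ) =
      K / 2 * (u - (z + s) / K) * (u - (z - s) / K) := by
    have hKab : (K : ℂ) = (a + b) * r := by exact_mod_cast hKdef
    push_cast at hsq ⊢
    field_simp
    linear_combination (a - b) * r * hKab + hsq
  have hnorm (v : ℂ) : ‖v / K‖ = ‖v‖ / K := by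
    rw [norm_div, norm_real, Real.norm_of_nonneg hK.le]
  simp only [hquad]
  rw [circleIntegral_inv_mul_sub_mul_sub]
  · have hdiff : (K : ℂ) / 2 * ((z - s) / K - (z + s) / K) = -s := by
      field_simp
      ring
    rw [hdiff]
    linear_combination -(2 * π / s) * I_sq
  · rwa [mem_closedBall_zero_iff, hnorm, not_le, one_lt_div hK]
  · rwa [mem_ball_zero_iff, hnorm, div_lt_one hK]

end Homoeoid

section Deflection

/-- The deflection at `z` caused by the uniform mass density `1/π` on the ellipse with semi-axes `a`
and `b`. -/
noncomputable def ellipticDeflection (a b : ℝ) (z : ℂ) : ℂ :=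
  (π : ℂ)⁻¹ * ∫ ζ in solidEllipse a b, (z - ζ)⁻¹

variable {a b m : ℝ} {z : ℂ}

lemma ellipticDeflection_eq_integral_homoeoidField (ha : 0 < a) (hb : 0 < b) (z : ℂ) :
    ellipticDeflection a b z =
      (π : ℂ)⁻¹ * (a * b * ∫ r in Ioc (0 : ℝ) 1, (r : ℂ) * homoeoidField a b r z) := by
  rw [ellipticDeflection, setIntegral_solidEllipse_eq_integral_circleMap ha hb
    (integrableOn_sub_inv (isBounded_solidEllipse ha.ne' hb.ne') z), real_smul]
  simp [homoeoidField]

lemma integral_div_sqrtBranch (hm : 0 ≤ m) (ha : a ≠ 0) (hb : b ≠ 0) (hz : z ≠ 0)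
    (hmz : m ^ 2 ≤ ellipticNormSq a b z) :
    ∫ r in (0 : ℝ)..m, (r : ℂ) / sqrtBranch ((a ^ 2 - b ^ 2) * r ^ 2) z =
      m ^ 2 / (z + sqrtBranch ((a ^ 2 - b ^ 2) * m ^ 2) z) := by
  have hslit : ∀ r ∈ uIcc 0 m, 1 - ((a ^ 2 - b ^ 2) * r ^ 2 : ℝ) / z ^ 2 ∈ slitPlane := by
    intro r hr
    rw [uIcc_of_le hm] at hr
    exact one_sub_focalSq_div_sq_mem_slitPlane ha hb hz
      ((pow_le_pow_left₀ hr.1 hr.2 2).trans hmz)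
  have hcont : ContinuousOn (fun r : ℝ ↦ (r : ℂ) / sqrtBranch ((a ^ 2 - b ^ 2) * r ^ 2) z)
      (uIcc 0 m) := by
    refine ContinuousOn.div (by fun_prop) (fun r hr ↦ ?_) fun r hr ↦
      ne_zero_of_re_mul_conj_pos (re_sqrtBranch_mul_conj_pos hz (hslit r hr))
    exact (ContinuousAt.comp (g := (sqrtBranch · z)) (f := fun r : ℝ ↦ (a ^ 2 - b ^ 2) * r ^ 2)
      (hasDerivAt_sqrtBranch hz (hslit r hr)).continuousAt (by fun_prop)).continuousWithinAt
  rw [intervalIntegral.integral_eq_sub_of_hasDerivAt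
    (fun r hr ↦ hasDerivAt_sq_div_add_sqrtBranch hz (hslit r hr)) hcont.intervalIntegrable]
  simp

lemma integral_homoeoidField (ha : 0 < a) (hb : 0 < b) (hm : 0 ≤ m)
    (hmz : m ^ 2 ≤ ellipticNormSq a b z) :
    ∫ r in Ioc 0 m, (r : ℂ) * homoeoidField a b r z =
      2 * π * (m ^ 2 / (z + sqrtBranch ((a ^ 2 - b ^ 2) * m ^ 2) z)) := by
  rcases eq_or_ne z 0 with rfl | hz
  · have hm0 : m = 0 := by simpa [ellipticNormSq, sq_nonpos_iff] using hmz
    simp [hm0]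
  have hshell : ∀ r ∈ Ioo 0 m, (r : ℂ) * homoeoidField a b r z =
      2 * π * (r / sqrtBranch ((a ^ 2 - b ^ 2) * r ^ 2) z) := by
    intro r ⟨hr, hrm⟩
    have hrz : r ^ 2 < ellipticNormSq a b z := (pow_lt_pow_left₀ hrm hr.le two_ne_zero).trans_le hmz
    have hslit := one_sub_focalSq_div_sq_mem_slitPlane ha.ne' hb.ne' hz hrz.le
    rw [homoeoidField_of_lt_ellipticNormSq ha hb hr hrz (sqrtBranch_sq _ hz)
      (re_sqrtBranch_mul_conj_pos hz hslit)]
    ring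
  rw [integral_Ioc_eq_integral_Ioo, setIntegral_congr_fun measurableSet_Ioo hshell,
    ← integral_Ioc_eq_integral_Ioo, integral_const_mul, ← intervalIntegral.integral_of_le hm,
    integral_div_sqrtBranch hm ha.ne' hb.ne' hz hmz]

/-- By Newton's theorem only the shells inside the one through `z` act on it. -/
lemma ellipticDeflection_eq (ha : 0 < a) (hb : 0 < b) (hm : 0 ≤ m) (hm1 : m ≤ 1)
    (hmz : m ^ 2 ≤ ellipticNormSq a b z) (hzm : ∀ r ∈ Ioc m 1, ellipticNormSq a b z < r ^ 2) :
    ellipticDeflection a b z =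
      2 * a * b * (m ^ 2 / (z + sqrtBranch ((a ^ 2 - b ^ 2) * m ^ 2) z)) := by
  have hvanish : ∀ r ∈ Ioc (0 : ℝ) 1 \ Ioc 0 m, (r : ℂ) * homoeoidField a b r z = 0 := by
    intro r ⟨⟨hr, hr1⟩, hrm⟩
    have hmr : m < r := lt_of_not_ge fun hle ↦ hrm ⟨hr, hle⟩
    rw [homoeoidField_of_ellipticNormSq_lt ha hb hr (hzm r ⟨hmr, hr1⟩), mul_zero]
  rw [ellipticDeflection_eq_integral_homoeoidField ha hb,
    setIntegral_eq_of_subset_of_forall_sdiff_eq_zero measurableSet_Ioc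
      (Ioc_subset_Ioc_right hm1) hvanish, integral_homoeoidField ha hb hm hmz]
  have hpi : (π : ℂ) ≠ 0 := ofReal_ne_zero.2 Real.pi_ne_zero
  field_simp

lemma sqrtBranch_boundary (ha : 0 < a) (hb : 0 < b) (z : ℂ) :
    sqrtBranch ((a ^ 2 - b ^ 2) * ellipticNormSq a b z) z = axisScaling (b / a) (a / b) z := by
  rcases eq_or_ne z 0 with rfl | hz
  · simp [sqrtBranch, Complex.ext_iff]
  have hN : √(ellipticNormSq a b z) ^ 2 = ellipticNormSq a b z :=
    Real.sq_sqrt (ellipticNormSq_pos ha.ne' hb.ne' hz).le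
  have hslit := one_sub_focalSq_div_sq_mem_slitPlane ha.ne' hb.ne' hz hN.le
  rw [hN] at hslit
  refine eq_of_sq_eq_sq_of_re_mul_conj_pos ?_ (re_sqrtBranch_mul_conj_pos hz hslit) ?_
  · rw [sqrtBranch_sq _ hz, ellipticNormSq, axisScaling_apply]
    apply Complex.ext
    · simp only [sq, sub_re, mul_re, ofReal_re]
      field_simp
      ring
    · simp only [sq, sub_im, mul_im, ofReal_im, sub_zero]
      field_simp
  · have h : (axisScaling (b / a) (a / b) z * conj z).re = a * b * ellipticNormSq a b z := by
      simp only [axisScaling_apply, mul_re, conj_re, conj_im, ellipticNormSq]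
      field_simp
      ring
    rw [h]
    have := ellipticNormSq_pos ha.ne' hb.ne' hz
    positivity

lemma ellipticDeflection_of_ellipticNormSq_lt_one (ha : 0 < a) (hb : 0 < b)
    (hz : ellipticNormSq a b z < 1) :
    ellipticDeflection a b z = conj z - (a - b) / (a + b) * z := by
  have hN0 : 0 ≤ ellipticNormSq a b z := by
    rw [ellipticNormSq_eq_norm_sq]
    positivity
  have hN := Real.sq_sqrt hN0
  rw [ellipticDeflection_eq ha hb (Real.sqrt_nonneg _)
    (Real.sqrt_le_one.2 hz.le) hN.le (fun r hr ↦ ?_), ← ofReal_pow, hN, sqrtBranch_boundary ha hb]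
  · set ζ := axisScaling a⁻¹ b⁻¹ z with hζ
    have hab : (a + b : ℂ) ≠ 0 := mod_cast (add_pos ha hb).ne'
    have hnorm : (ellipticNormSq a b z : ℂ) = ζ * conj ζ := by
      rw [ellipticNormSq_eq_norm_sq, mul_conj, normSq_eq_norm_sq]
    have hsum : z + axisScaling (b / a) (a / b) z = (a + b) * ζ := by
      apply Complex.ext <;>
        simp only [hζ, axisScaling_apply, add_re, add_im, mul_re, mul_im, ofReal_re, ofReal_im] <;>
        field_simp <;> ring
    have hconj : (2 * a * b : ℝ) * conj ζ = (a + b : ℝ) * conj z - (a - b : ℝ) * z := by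
      apply Complex.ext <;>
        simp only [hζ, axisScaling_apply, sub_re, sub_im, re_ofReal_mul, im_ofReal_mul, conj_re,
          conj_im] <;>
        field_simp <;> ring
    rcases eq_or_ne z 0 with rfl | hz
    · simp [hnorm, hζ, Complex.ext_iff]
    have hζ0 : ζ ≠ 0 :=
      (map_ne_zero_iff _ (axisScaling_injective (inv_ne_zero ha.ne') (inv_ne_zero hb.ne'))).2 hz
    rw [hnorm, hsum]
    field_simp
    push_cast at hconj
    linear_combination hconj
  · exact Real.lt_sq_of_sqrt_lt hr.1

lemma one_lt_ellipticNormSq_joukowski (ha : 0 < a) (hb : 0 < b) {V : ℂ} (hV : a + b < ‖V‖) :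
    1 < ellipticNormSq a b (joukowski (a ^ 2 - b ^ 2) V) := by
  have hV0 : V ≠ 0 := norm_pos_iff.1 ((add_pos ha hb).trans hV)
  have hsub := ellipticNormSq_joukowski_sub_sq ha.ne' hb.ne' 1 hV0
  simp only [one_pow, mul_one] at hsub
  have hplus : 0 < ‖V‖ ^ 2 - (a + b) ^ 2 := by nlinarith
  have hminus : 0 < ‖V‖ ^ 2 - (a - b) ^ 2 := by nlinarith [mul_pos ha hb]
  have hN := ellipticNormSq_pos ha.ne' hb.ne' hV0
  rw [← sub_pos, hsub]
  positivity

lemma exists_joukowski_eq_and_ellipticDeflection_eq (ha : 0 < a) (hb : 0 < b)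
    (hz : 1 < ellipticNormSq a b z) :
    ∃ V : ℂ, a + b < ‖V‖ ∧ joukowski (a ^ 2 - b ^ 2) V = z ∧
      ellipticDeflection a b z = 2 * a * b / V := by
  have hz0 : z ≠ 0 := by
    rintro rfl
    norm_num [ellipticNormSq] at hz
  have hz1 : (1 : ℝ) ^ 2 < ellipticNormSq a b z := by rwa [one_pow]
  have hslit := one_sub_focalSq_div_sq_mem_slitPlane ha.ne' hb.ne' hz0 hz1.le
  have hsq := sqrtBranch_sq ((a ^ 2 - b ^ 2) * 1 ^ 2) hz0
  have hV := (norm_sub_lt_and_lt_norm_add ha hb one_pos hz1 hsq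
    (re_sqrtBranch_mul_conj_pos hz0 hslit)).2
  have hdefl := ellipticDeflection_eq ha hb zero_le_one le_rfl hz1.le (by simp)
  simp only [one_pow, mul_one, ofReal_one, mul_one_div] at hV hsq hdefl
  exact ⟨_, hV, joukowski_add_eq (norm_pos_iff.1 ((add_pos ha hb).trans hV)) hsq, hdefl⟩

lemma injOn_joukowski_exterior (ha : 0 < a) (hb : 0 < b) :
    InjOn (joukowski (a ^ 2 - b ^ 2)) {V | a + b < ‖V‖} :=
  injOn_joukowski (add_pos ha hb).le (abs_le.2 ⟨by nlinarith, by nlinarith⟩)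

lemma ellipticDeflection_joukowski (ha : 0 < a) (hb : 0 < b) {V : ℂ} (hV : a + b < ‖V‖) :
    ellipticDeflection a b (joukowski (a ^ 2 - b ^ 2) V) = 2 * a * b / V := by
  obtain ⟨V', hV', hVV', hdefl⟩ := exists_joukowski_eq_and_ellipticDeflection_eq ha hb
    (one_lt_ellipticNormSq_joukowski ha hb hV)
  rw [hdefl, injOn_joukowski_exterior ha hb hV' hV hVV']

lemma joukowski_image_exterior (ha : 0 < a) (hb : 0 < b) :
    joukowski (a ^ 2 - b ^ 2) '' {V | a + b < ‖V‖} = {z | 1 < ellipticNormSq a b z} := by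
  refine Subset.antisymm (image_subset_iff.2 fun V hV ↦
    one_lt_ellipticNormSq_joukowski ha hb hV) fun z hz ↦ ?_
  obtain ⟨V, hV, hVz, -⟩ := exists_joukowski_eq_and_ellipticDeflection_eq ha hb hz
  exact ⟨V, hV, hVz⟩

end Deflection

section RadialSystem

open Polynomial

/-- The nonzero solutions `V = x + iy` of the system `x E(T) = p T`, `y G(T) = q T` with
`T = |V|²`; in the Joukowski coordinate the lens equation takes this form. -/
def radialSolutions (E G : ℝ[X]) (p q : ℝ) : Set ℂ :=
  {V | V ≠ 0 ∧ V.re * E.eval (normSq V) = p * normSq V ∧ V.im * G.eval (normSq V) = q * normSq V}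

variable {E G : ℝ[X]} {p q : ℝ} {W : Set ℂ}

lemma encard_le_natDegree_of_mapsTo_isRoot {α R : Type*} [CommRing R] [IsDomain R] {s : Set α}
    {f : α → R} {P : R[X]} (hP : P ≠ 0) (hf : InjOn f s) (hroot : ∀ x ∈ s, P.IsRoot (f x)) :
    s.encard ≤ P.natDegree := by
  classical
  rw [← hf.encard_image]
  calc (f '' s).encard ≤ (P.roots.toFinset : Set R).encard :=
        encard_le_encard (image_subset_iff.2 fun x hx ↦ by simpa [hP] using hroot x hx)
    _ = P.roots.toFinset.card := encard_coe_eq_coe_finsetCard _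
    _ ≤ P.natDegree := mod_cast P.roots.toFinset_card_le.trans P.card_roots'

/-- The polynomial satisfied by `T = |V|²`, obtained from `T = x² + y²` by clearing denominators. -/
noncomputable def radialEliminant (E G : ℝ[X]) (p q : ℝ) : ℝ[X] :=
  E ^ 2 * G ^ 2 - C (p ^ 2) * X * G ^ 2 - C (q ^ 2) * X * E ^ 2

lemma natDegree_radialEliminant_le (hE : E.natDegree ≤ 1) (hG : G.natDegree ≤ 1) (p q : ℝ) :
    (radialEliminant E G p q).natDegree ≤ 4 := by
  unfold radialEliminant
  compute_degree
  omega

lemma radialEliminant_ne_zero (hE : E ≠ 0) (hG : G ≠ 0) (p q : ℝ) :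
    radialEliminant E G p q ≠ 0 := by
  intro h0
  refine mul_ne_zero hE hG (eq_zero_of_infinite_isRoot _ ((Iio_infinite (0 : ℝ)).mono ?_))
  intro t ht
  have heval := congr_arg (eval t) h0
  simp only [radialEliminant, eval_sub, eval_mul, eval_pow, eval_C, eval_X, eval_zero] at heval
  have hp : p ^ 2 * t * eval t G ^ 2 ≤ 0 := mul_nonpos_of_nonpos_of_nonneg
    (mul_nonpos_of_nonneg_of_nonpos (sq_nonneg _) (le_of_lt ht)) (sq_nonneg _)
  have hq : q ^ 2 * t * eval t E ^ 2 ≤ 0 := mul_nonpos_of_nonpos_of_nonneg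
    (mul_nonpos_of_nonneg_of_nonpos (sq_nonneg _) (le_of_lt ht)) (sq_nonneg _)
  have hEG : (eval t E * eval t G) ^ 2 = 0 := by nlinarith [sq_nonneg (eval t E * eval t G)]
  simpa [IsRoot] using hEG

lemma isRoot_radialEliminant {V : ℂ} (hV : V ∈ radialSolutions E G p q) :
    (radialEliminant E G p q).IsRoot (normSq V) := by
  obtain ⟨hV0, hre, him⟩ := hV
  have hT : normSq V ≠ 0 := normSq_eq_zero.not.2 hV0
  simp only [radialEliminant, IsRoot, eval_sub, eval_mul, eval_pow, eval_C, eval_X]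
  rw [normSq_apply] at hT hre him ⊢
  refine mul_left_cancel₀ hT ?_
  set T := V.re * V.re + V.im * V.im with hTdef
  linear_combination (eval T G ^ 2 * (V.re * eval T E + p * T)) * hre +
    (eval T E ^ 2 * (V.im * eval T G + q * T)) * him +
    (eval T E ^ 2 * eval T G ^ 2) * hTdef

lemma injOn_normSq_radialSolutions (hp : p ≠ 0) (hq : q ≠ 0) :
    InjOn normSq (radialSolutions E G p q) := by
  rintro V ⟨hV0, hre, him⟩ V' ⟨-, hre', him'⟩ hT
  rw [← hT] at hre' him'
  have hT0 : normSq V ≠ 0 := normSq_eq_zero.not.2 hV0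
  have hE : E.eval (normSq V) ≠ 0 := right_ne_zero_of_mul (hre ▸ mul_ne_zero hp hT0)
  have hG : G.eval (normSq V) ≠ 0 := right_ne_zero_of_mul (him ▸ mul_ne_zero hq hT0)
  exact Complex.ext (mul_right_cancel₀ hE (hre.trans hre'.symm))
    (mul_right_cancel₀ hG (him.trans him'.symm))

lemma encard_radialSolutions_inter_imaginary_axis_le_two (hG : G ≠ 0) (hGd : G.natDegree ≤ 1) :
    (radialSolutions E G p q ∩ {V | V.re = 0}).encard ≤ 2 := by
  have hP : expand ℝ 2 G - C q * X ≠ 0 := by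
    intro h0
    refine hG (Polynomial.ext fun n ↦ ?_)
    have hn : 1 ≠ n * 2 := by omega
    simpa [coeff_X, hn] using congr_arg (coeff · (n * 2)) h0
  have hPd : (expand ℝ 2 G - C q * X).natDegree ≤ 2 := by
    refine (natDegree_sub_le _ _).trans (max_le ?_ ((natDegree_C_mul_le q X).trans (by simp)))
    rw [natDegree_expand]
    omega
  have hinj : InjOn im (radialSolutions E G p q ∩ {V | V.re = 0}) :=
    fun V hV V' hV' h ↦ Complex.ext (hV.2.trans hV'.2.symm) h
  refine (encard_le_natDegree_of_mapsTo_isRoot hP hinj ?_).trans (mod_cast hPd)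
  rintro V ⟨⟨hV0, -, him⟩, hre⟩
  have him0 : V.im ≠ 0 := fun h ↦ hV0 (Complex.ext hre h)
  have hT : normSq V = V.im ^ 2 := by simp [normSq_apply, show V.re = 0 from hre, sq]
  rw [hT] at him
  simp only [IsRoot, eval_sub, expand_eval, eval_mul, eval_C, eval_X, sub_eq_zero]
  exact mul_left_cancel₀ him0 (by linear_combination him)

lemma encard_diff_imaginary_axis_le_two (hE : E ≠ 0) (hEd : E.natDegree ≤ 1)
    (hW : W ⊆ radialSolutions E G 0 q)
    (hEG : ∀ V ∈ W, E.eval (normSq V) = 0 → G.eval (normSq V) ≠ 0) :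
    (W \ {V | V.re = 0}).encard ≤ 2 := by
  have hroot : ∀ V ∈ W \ {V | V.re = 0}, E.IsRoot (normSq V) := by
    intro V ⟨hV, hre⟩
    simpa [show V.re ≠ 0 from hre] using (hW hV).2.1
  have hT : ∀ V ∈ W \ {V | V.re = 0}, ∀ V' ∈ W \ {V | V.re = 0}, normSq V = normSq V' := by
    intro V hV V' hV'
    have hcard := encard_le_natDegree_of_mapsTo_isRoot (s := {t | E.IsRoot t}) hE (injOn_id _)
      fun _ ↦ id
    exact encard_le_one_iff.1 (hcard.trans (mod_cast hEd)) _ _ (hroot V hV) (hroot V' hV')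
  rcases (W \ {V | V.re = 0}).eq_empty_or_nonempty with hempty | ⟨V, hV⟩
  · simp [hempty]
  suffices hpair : W \ {V | V.re = 0} ⊆ {V, -conj V} from
    (encard_le_encard hpair).trans ((encard_insert_le _ _).trans_eq (by norm_num))
  intro V' hV'
  have hTV := hT V' hV' V hV
  have him : V'.im = V.im := by
    have him' := (hW hV'.1).2.2
    rw [hTV, ← (hW hV.1).2.2] at him'
    exact mul_right_cancel₀ (hEG V hV.1 (hroot V hV)) him'
  have hre : V'.re ^ 2 = V.re ^ 2 := by
    simp only [normSq_apply, him] at hTV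
    linear_combination hTV
  rcases sq_eq_sq_iff_eq_or_eq_neg.1 hre with h | h
  · exact Or.inl (Complex.ext h him)
  · exact Or.inr (Complex.ext (by simpa using h) (by simpa using him))

lemma encard_le_four_of_subset_radialSolutions_zero_left (hE : E ≠ 0) (hG : G ≠ 0)
    (hEd : E.natDegree ≤ 1) (hGd : G.natDegree ≤ 1) (hW : W ⊆ radialSolutions E G 0 q)
    (hEG : ∀ V ∈ W, E.eval (normSq V) = 0 → G.eval (normSq V) ≠ 0) : W.encard ≤ 4 :=
  calc W.encard = (W \ {V | V.re = 0}).encard + (W ∩ {V | V.re = 0}).encard :=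
        (encard_sdiff_add_encard_inter _ _).symm
    _ ≤ 2 + 2 := add_le_add (encard_diff_imaginary_axis_le_two hE hEd hW hEG)
        ((encard_le_encard (inter_subset_inter_left _ hW)).trans
          (encard_radialSolutions_inter_imaginary_axis_le_two hG hGd))
    _ = 4 := by norm_num

lemma encard_le_four_of_subset_radialSolutions (hE : E ≠ 0) (hG : G ≠ 0)
    (hEd : E.natDegree ≤ 1) (hGd : G.natDegree ≤ 1) (hW : W ⊆ radialSolutions E G p q)
    (hEG : ∀ V ∈ W, E.eval (normSq V) = 0 → G.eval (normSq V) ≠ 0) : W.encard ≤ 4 := by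
  rcases eq_or_ne p 0 with rfl | hp
  · exact encard_le_four_of_subset_radialSolutions_zero_left hE hG hEd hGd hW hEG
  rcases eq_or_ne q 0 with rfl | hq
  · -- The reflection `x + iy ↦ y + ix` exchanges the two equations.
    have hinj : Function.Injective fun V : ℂ ↦ I * conj V :=
      fun V V' h ↦ star_injective (mul_left_cancel₀ I_ne_zero h)
    rw [← hinj.encard_image]
    refine encard_le_four_of_subset_radialSolutions_zero_left (q := p) hG hE hGd hEd ?_ ?_
    · rintro _ ⟨V, hV, rfl⟩
      simpa [radialSolutions, and_comm] using hW hV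
    · rintro _ ⟨V, hV, rfl⟩
      simpa using mt (hEG V hV)
  · refine (encard_le_natDegree_of_mapsTo_isRoot (radialEliminant_ne_zero hE hG p q)
      ((injOn_normSq_radialSolutions hp hq).mono hW) fun V hV ↦
        isRoot_radialEliminant (hW hV)).trans ?_
    exact_mod_cast natDegree_radialEliminant_le hEd hGd p q

lemma sphere_subset_radialSolutions {V : ℂ} (hV : V ∈ radialSolutions E G p q)
    (hE : E.eval (normSq V) = 0) (hG : G.eval (normSq V) = 0) :
    sphere 0 ‖V‖ ⊆ radialSolutions E G p q := by
  obtain ⟨hV0, hre, him⟩ := hV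
  intro V' hV'
  have hnorm : ‖V'‖ = ‖V‖ := by simpa using hV'
  have hT : normSq V' = normSq V := by simp only [normSq_eq_norm_sq, hnorm]
  rw [hE, mul_zero] at hre
  rw [hG, mul_zero] at him
  refine ⟨norm_ne_zero_iff.1 (hnorm ▸ norm_ne_zero_iff.2 hV0), ?_, ?_⟩
  · rw [hT, hE, mul_zero, hre]
  · rw [hT, hG, mul_zero, him]

lemma infinite_sphere {r : ℝ} (hr : 0 < r) : (sphere (0 : ℂ) r).Infinite := by
  refine (isPreconnected_sphere (by simp [rank_real_complex]) 0 r).infinite_of_nontrivial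
    ⟨r, ?_, -r, ?_, ?_⟩
  · simp [hr.le]
  · simp [hr.le]
  · exact fun h ↦ hr.ne' (self_eq_neg.1 (mod_cast h))

/-- A common zero of `E` and `G` would make a whole circle of solutions. -/
lemma eval_ne_zero_of_finite {K : ℝ}
    (hfin : (radialSolutions E G p q ∩ {V | K < ‖V‖}).Finite) {V : ℂ}
    (hV : V ∈ radialSolutions E G p q ∩ {V | K < ‖V‖}) (hE : E.eval (normSq V) = 0) :
    G.eval (normSq V) ≠ 0 := fun hG ↦
  infinite_sphere (norm_pos_iff.2 hV.1.1) <| hfin.subset fun _ hV' ↦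
    ⟨sphere_subset_radialSolutions hV.1 hE hG hV',
      hV.2.trans_eq (mem_sphere_zero_iff_norm.1 hV').symm⟩

end RadialSystem

section Images

/-- The images, off the boundary ellipse, of a point source at `w` under the lens consisting of the
uniform ellipse with semi-axes `a` and `b` and of a shear `γ`. -/
def lensImages (a b γ : ℝ) (w : ℂ) : Set ℂ :=
  {z | ellipticNormSq a b z ≠ 1 ∧ conj z - ellipticDeflection a b z - γ * z = conj w}

open Polynomial in
/-- The polynomial `δ (T + k) - m`; one with `δ = 1 - γ` and one with `δ = 1 + γ` give the real and
the imaginary part of the lens equation in terms of `T = |V|²`. -/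
noncomputable def shearPolynomial (δ k m : ℝ) : ℝ[X] := C δ * (X + C k) - C m

variable {a b γ δ k m : ℝ} {w : ℂ}

lemma eval_shearPolynomial (δ k m t : ℝ) :
    (shearPolynomial δ k m).eval t = δ * (t + k) - m := by
  simp [shearPolynomial]

lemma shearPolynomial_ne_zero (δ k : ℝ) (hm : m ≠ 0) : shearPolynomial δ k m ≠ 0 := fun h ↦
  hm (by simpa [eval_shearPolynomial] using congr_arg (Polynomial.eval (-k)) h)

lemma natDegree_shearPolynomial_le (δ k m : ℝ) : (shearPolynomial δ k m).natDegree ≤ 1 := by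
  unfold shearPolynomial
  compute_degree

lemma joukowski_mem_lensImages_iff (ha : 0 < a) (hb : 0 < b) {V : ℂ} (hV : a + b < ‖V‖) :
    joukowski (a ^ 2 - b ^ 2) V ∈ lensImages a b γ w ↔
      V ∈ radialSolutions (shearPolynomial (1 - γ) (a ^ 2 - b ^ 2) (4 * a * b))
        (shearPolynomial (1 + γ) (-(a ^ 2 - b ^ 2)) (4 * a * b)) (2 * w.re) (2 * w.im) := by
  have hV0 : V ≠ 0 := norm_pos_iff.1 ((add_pos ha hb).trans hV)
  have hT : normSq V ≠ 0 := normSq_eq_zero.not.2 hV0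
  have hre : (2 * a * b / V : ℂ).re = 2 * a * b * V.re / normSq V := by simp [div_re]
  have him : (2 * a * b / V : ℂ).im = -(2 * a * b * V.im / normSq V) := by simp [div_im]
  rw [lensImages, mem_ofPred_eq, and_iff_right (one_lt_ellipticNormSq_joukowski ha hb hV).ne',
    ellipticDeflection_joukowski ha hb hV, radialSolutions, mem_ofPred_eq, and_iff_right hV0,
    Complex.ext_iff]
  simp only [sub_re, sub_im, conj_re, conj_im, re_ofReal_mul, im_ofReal_mul, hre, him,
    joukowski_re, joukowski_im, eval_shearPolynomial]
  refine and_congr ?_ ?_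
  · field_simp
    constructor <;> intro h <;> linear_combination h
  · field_simp
    constructor <;> intro h <;> linear_combination -h

lemma lensImages_exterior_eq_image (ha : 0 < a) (hb : 0 < b) (γ : ℝ) (w : ℂ) :
    {z ∈ lensImages a b γ w | 1 < ellipticNormSq a b z} = joukowski (a ^ 2 - b ^ 2) ''
      (radialSolutions (shearPolynomial (1 - γ) (a ^ 2 - b ^ 2) (4 * a * b))
        (shearPolynomial (1 + γ) (-(a ^ 2 - b ^ 2)) (4 * a * b)) (2 * w.re) (2 * w.im) ∩
          {V | a + b < ‖V‖}) := by
  rw [← inter_ofPred_eq_sep, ← joukowski_image_exterior ha hb, ← image_preimage_inter]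
  congr 1
  ext V
  exact and_congr_left fun hV ↦ joukowski_mem_lensImages_iff ha hb hV

lemma encard_lensImages_exterior_le_four (ha : 0 < a) (hb : 0 < b)
    (hfin : {z ∈ lensImages a b γ w | 1 < ellipticNormSq a b z}.Finite) :
    {z ∈ lensImages a b γ w | 1 < ellipticNormSq a b z}.encard ≤ 4 := by
  have hab : 4 * a * b ≠ 0 := by positivity
  have hinj := injOn_joukowski_exterior ha hb
  rw [lensImages_exterior_eq_image ha hb] at hfin ⊢
  rw [(hinj.mono inter_subset_right).encard_image]
  exact encard_le_four_of_subset_radialSolutions (shearPolynomial_ne_zero _ _ hab)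
    (shearPolynomial_ne_zero _ _ hab) (natDegree_shearPolynomial_le _ _ _)
    (natDegree_shearPolynomial_le _ _ _) inter_subset_left fun V hV ↦
      eval_ne_zero_of_finite (hfin.of_finite_image (hinj.mono inter_subset_right)) hV

lemma mem_lensImages_iff_of_ellipticNormSq_lt_one (ha : 0 < a) (hb : 0 < b) {z : ℂ}
    (hz : ellipticNormSq a b z < 1) :
    z ∈ lensImages a b γ w ↔ ((a - b) / (a + b) - γ : ℂ) * z = conj w := by
  rw [lensImages, mem_ofPred_eq, ellipticDeflection_of_ellipticNormSq_lt_one ha hb hz]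
  simp only [hz.ne, ne_eq, not_false_eq_true, true_and]
  ring_nf

lemma subsingleton_lensImages_interior (ha : 0 < a) (hb : 0 < b)
    (hfin : {z ∈ lensImages a b γ w | ellipticNormSq a b z < 1}.Finite) :
    {z ∈ lensImages a b γ w | ellipticNormSq a b z < 1}.Subsingleton := by
  rintro z ⟨hz, hzN⟩ z' ⟨hz', hzN'⟩
  rw [mem_lensImages_iff_of_ellipticNormSq_lt_one ha hb hzN] at hz
  rw [mem_lensImages_iff_of_ellipticNormSq_lt_one ha hb hzN'] at hz'
  refine mul_left_cancel₀ (fun hcoef ↦ ?_) (hz.trans hz'.symm)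
  rw [hcoef, zero_mul] at hz
  have hopen : IsOpen {z | ellipticNormSq a b z < 1} :=
    isOpen_lt (continuous_ellipticNormSq a b) continuous_const
  refine infinite_of_mem_nhds z (hopen.mem_nhds hzN) (hfin.subset fun u hu ↦ ⟨?_, hu⟩)
  rwa [mem_lensImages_iff_of_ellipticNormSq_lt_one ha hb hu, hcoef, zero_mul]

end Images

end EllipticLens

open EllipticLens

theorem elliptic_lens_at_most_five_images_general {a b : ℝ} (ha : 0 < a) (hb : 0 < b) {γ : ℝ}
    {w : ℂ} (hfin : (lensImages a b γ w).Finite) :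
    (lensImages a b γ w).ncard ≤ 5 ∧ {z ∈ lensImages a b γ w | z ∉ solidEllipse a b}.ncard ≤ 4 ∧
      {z ∈ lensImages a b γ w | ellipticNormSq a b z < 1}.ncard ≤ 1 := by
  set S := lensImages a b γ w
  have hout : {z ∈ S | z ∉ solidEllipse a b}.ncard ≤ 4 := by
    simp only [solidEllipse, mem_ofPred_eq, not_le]
    rw [← Nat.cast_le (α := ℕ∞), (hfin.sep _).cast_ncard_eq]
    exact encard_lensImages_exterior_le_four ha hb (hfin.sep _)
  have hin : {z ∈ S | ellipticNormSq a b z < 1}.ncard ≤ 1 :=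
    (ncard_le_one (hfin.sep _)).2 fun _ hz _ hz' ↦
      subsingleton_lensImages_interior ha hb (hfin.sep _) hz hz'
  have hunion : S = {z ∈ S | z ∉ solidEllipse a b} ∪ {z ∈ S | ellipticNormSq a b z < 1} := by
    rw [← sep_or, eq_comm, sep_eq_self_iff_mem_true]
    exact fun z hz ↦ (hz.1.lt_or_gt).symm.imp_left not_le.2
  refine ⟨?_, hout, hin⟩
  rw [hunion]
  exact (ncard_union_le _ _).trans (add_le_add hout hin)

/-- A uniform elliptic lens with shear produces at most 5 images off the boundary
ellipse: at most 4 bright images outside the ellipse and at most 1 dim image inside. -/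
theorem elliptic_lens_at_most_five_images
    (a b : ℝ) (hb : 0 < b) (hab : b < a) (γ : ℝ) (w : ℂ)
    (Ω : Set ℂ) (hΩ : Ω = {p : ℂ | p.re ^ 2 / a ^ 2 + p.im ^ 2 / b ^ 2 ≤ 1})
    (bdry : Set ℂ) (hbdry : bdry = {p : ℂ | p.re ^ 2 / a ^ 2 + p.im ^ 2 / b ^ 2 = 1})
    (intΩ : Set ℂ)
    (hintΩ : intΩ = {p : ℂ | p.re ^ 2 / a ^ 2 + p.im ^ 2 / b ^ 2 < 1})
    (S : Set ℂ)
    (hS : S = {z : ℂ | z ∉ bdry ∧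
      starRingEnd ℂ z - (Real.pi : ℂ)⁻¹ * (∫ ζ in Ω, (z - ζ)⁻¹) - (γ : ℂ) * z
        = starRingEnd ℂ w})
    (hfin : S.Finite) :
    S.ncard ≤ 5 ∧ {z ∈ S | z ∉ Ω}.ncard ≤ 4 ∧ {z ∈ S | z ∈ intΩ}.ncard ≤ 1 := by
  subst hΩ hbdry hintΩ hS
  exact elliptic_lens_at_most_five_images_general (hb.trans hab) hb hfin
end

section
/- Let a > b > 0, c = √(a² − b²), and Ω = { x + iy : x²/a² + y²/b² ≤ 1 } ⊂ ℂ. Let ρ : ℂ → ℝ be nonnegative, integrable, vanishing outside Ω, and constant on each confocal ellipse E_λ = { x + iy : x²/(a² + λ) + y²/(b² + λ) = 1 }, −b² < λ < 0 (i.e. there is m : ℝ → ℝ with ρ(ζ) = m(λ) whenever ζ ∈ E_λ). Let γ ∈ ℝ and w ∈ ℂ, and consider S = { z ∈ ℂ : z ∉ Ω and conj(z) − ∫_Ω ρ(ζ)/(z − ζ) dA(ζ) − γ z = conj(w) }. If S is finite, then S has at most 4 elements. -/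
open Complex MeasureTheory

/-!
In the Joukowski coordinate `z = d * (u + u⁻¹)` the confocal ellipses are the circles `‖u‖ = t`.
Integrating the Cauchy kernel over one such circle by the mean value property shows that a density
constant on these circles deflects light at an exterior point by a real multiple `d * κ` of `u⁻¹`.
The image equation becomes `conj u + (conj u)⁻¹ = γ * u + (γ + κ) * u⁻¹ + conj ω`. Together with
its conjugate it is linear in `conj u` and `(conj u)⁻¹`, whose product is `1`, so eliminating them
leaves a polynomial of degree at most 4 in `u`.

For `κ ≠ 0` this polynomial vanishes identically only if `γ` is real, `ω = 0` and
`γ * (γ + κ) = 1`; the bright images then fill a whole confocal ellipse or do not exist. For `κ = 0`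
they are the solutions outside a bounded set of a real affine equation, so finitely many of them
means at most one.
-/

open scoped ComplexConjugate

open Real (circleAverage)

theorem add_inv_eq_add_inv_iff {K : Type*} [Field K] {x y : K} (hx : x ≠ 0) (hy : y ≠ 0) :
    x + x⁻¹ = y + y⁻¹ ↔ x = y ∨ x * y = 1 := by
  have factored : (x + x⁻¹) - (y + y⁻¹) = (x - y) * (x * y - 1) / (x * y) := by
    field_simp
    ring
  rw [← sub_eq_zero, factored, div_eq_zero_iff, mul_eq_zero, sub_eq_zero, sub_eq_zero,
    or_iff_left (mul_ne_zero hx hy)]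

theorem subsingleton_preimage_of_finite_diff {E F : Type*} [NormedAddCommGroup E]
    [NormedSpace ℝ E] [AddCommGroup F] [Module ℝ F] (L : E →ₗ[ℝ] F) (y : F) {K : Set E}
    (hK : Bornology.IsBounded K) (hfin : (L ⁻¹' {y} \ K).Finite) :
    (L ⁻¹' {y}).Subsingleton := by
  intro p hp q hq
  by_contra hpq
  have hker : L (q - p) = 0 := by rw [map_sub, hp, hq, sub_self]
  obtain ⟨M, hM⟩ := (hK.union hfin.isBounded).exists_norm_le
  have hline (t : ℝ) : ‖p + t • (q - p)‖ ≤ M := by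
    refine hM _ (or_iff_not_imp_left.2 fun h ↦ ⟨?_, h⟩)
    simpa [hker] using hp
  have hpos : 0 < ‖q - p‖ := norm_sub_pos_iff.2 (Ne.symm hpq)
  have hle : M + ‖p‖ + 1 ≤ M + ‖p‖ := by
    calc
      M + ‖p‖ + 1 ≤ ‖((M + ‖p‖ + 1) / ‖q - p‖) • (q - p)‖ := by
        rw [norm_smul, norm_div, norm_norm, div_mul_cancel₀ _ hpos.ne']
        exact le_abs_self _
      _ ≤ ‖p + ((M + ‖p‖ + 1) / ‖q - p‖) • (q - p)‖ + ‖p‖ := norm_le_add_norm_add' _ _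
      _ ≤ M + ‖p‖ := by gcongr; exact hline _
  linarith

theorem infinite_sphere_zero_norm {E : Type*} [NormedAddCommGroup E] [NormedSpace ℝ E]
    (hE : 1 < Module.rank ℝ E) {x : E} (hx : x ≠ 0) : (Metric.sphere (0 : E) ‖x‖).Infinite := by
  have : IsAddTorsionFree E := .of_isTorsionFree ℝ E
  exact (isPreconnected_sphere hE 0 ‖x‖).infinite_of_nontrivial
    ⟨x, by simp, -x, by simp, self_ne_neg.2 hx⟩

section PolarCoordinates

variable {E : Type*} [NormedAddCommGroup E] [NormedSpace ℝ E] {f : ℂ → E}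

theorem circleAverage_zero_comp_inv (f : ℂ → E) (R : ℝ) :
    circleAverage (fun u ↦ f u⁻¹) 0 R = circleAverage f 0 R⁻¹ := by
  rw [Real.circleAverage_eq_circleAverage_zero_one, Real.circleAverage_eq_circleAverage_zero_one
    (R := R⁻¹), ← Real.circleAverage_zero_one_congr_inv]
  simp [mul_comm]

theorem circleAverage_zero_eq_integral_Ioo (f : ℂ → E) (r : ℝ) :
    circleAverage f 0 r = (2 * Real.pi)⁻¹ •
      ∫ θ in Set.Ioo (-Real.pi) Real.pi, f (Complex.polarCoord.symm (r, θ)) := by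
  rw [Real.circleAverage_eq_integral_add (-Real.pi),
    intervalIntegral.integral_comp_add_right fun θ ↦ f (circleMap 0 r θ),
    intervalIntegral.integral_of_le (by linarith [Real.pi_pos]), integral_Ioc_eq_integral_Ioo,
    zero_add, two_mul, add_neg_cancel_right]
  simp [circleMap, exp_mul_I]

theorem integrableOn_comp_polarCoord_symm (hf : Integrable f) :
    IntegrableOn (fun p : ℝ × ℝ ↦ p.1 • f (Complex.polarCoord.symm p)) polarCoord.target := by
  have hf_prod : IntegrableOn (f ∘ measurableEquivRealProd.symm)
      (polarCoord.symm '' polarCoord.target) :=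
    (volume_preserving_equiv_real_prod.symm.integrable_comp_emb
      measurableEquivRealProd.symm.measurableEmbedding |>.2 hf).integrableOn
  rw [integrableOn_image_iff_integrableOn_abs_det_fderiv_smul volume
    polarCoord.open_target.measurableSet
    (fun p _ ↦ (hasFDerivAt_polarCoord_symm p).hasFDerivWithinAt) polarCoord.symm.injOn] at hf_prod
  refine hf_prod.congr_fun (fun p hp ↦ ?_) polarCoord.open_target.measurableSet
  simp only [det_fderivPolarCoordSymm, Function.comp_apply,
    measurableEquivRealProd_symm_polarCoord_symm_apply]
  rw [abs_of_pos hp.1]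

theorem integral_eq_integral_circleAverage (hf : Integrable f) :
    ∫ u, f u = ∫ r in Set.Ioi 0, (2 * Real.pi * r) • circleAverage f 0 r := by
  have hprod := integrableOn_comp_polarCoord_symm hf
  rw [polarCoord_target, Measure.volume_eq_prod] at hprod
  rw [← Complex.integral_comp_polarCoord_symm, polarCoord_target, Measure.volume_eq_prod,
    setIntegral_prod _ hprod]
  refine setIntegral_congr_fun measurableSet_Ioi fun r _ ↦ ?_
  simp only [integral_smul, circleAverage_zero_eq_integral_Ioo, smul_smul]
  congr 1
  field_simp

theorem setIntegral_norm_preimage_eq_integral_circleAverage {T : Set ℝ} (hT : MeasurableSet T)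
    (hT0 : T ⊆ Set.Ioi 0) (hf : IntegrableOn f (norm ⁻¹' T)) :
    ∫ u in norm ⁻¹' T, f u = ∫ r in T, (2 * Real.pi * r) • circleAverage f 0 r := by
  have hannulus : MeasurableSet (norm ⁻¹' T : Set ℂ) := measurable_norm hT
  rw [← integral_indicator hannulus,
    integral_eq_integral_circleAverage ((integrable_indicator_iff hannulus).2 hf),
    ← Set.inter_eq_self_of_subset_right hT0, ← setIntegral_indicator hT]
  refine setIntegral_congr_fun measurableSet_Ioi fun r hr ↦ ?_
  have hnorm : ∀ u ∈ Metric.sphere (0 : ℂ) |r|, ‖u‖ = r := fun u hu ↦ by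
    rw [mem_sphere_zero_iff_norm.1 hu, abs_of_pos hr]
  by_cases hrT : r ∈ T
  · rw [Set.indicator_of_mem hrT]
    congr 1
    refine Real.circleAverage_congr_sphere fun u hu ↦ Set.indicator_of_mem ?_ f
    simpa [hnorm u hu] using ⟨hr, hrT⟩
  · rw [Set.indicator_of_notMem hrT]
    rw [Real.circleAverage_congr_sphere (f₂ := 0) fun u hu ↦
      Set.indicator_of_notMem (by simp [hnorm u hu, hrT]) f]
    simp [Real.circleAverage_def]

end PolarCoordinates

theorem det_smul_one_eq_normSq (z : ℂ) : (z • (1 : ℂ →L[ℝ] ℂ)).det = normSq z := by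
  rw [← Algebra.norm_complex_apply, Algebra.norm_apply]
  rfl

theorem volume_im_eq_zero : volume {z : ℂ | z.im = 0} = 0 := by
  refine Measure.addHaar_submodule volume (LinearMap.ker imLm) fun htop ↦ ?_
  have hI : I ∈ LinearMap.ker imLm := htop ▸ Submodule.mem_top
  simp at hI

/-- The closed region bounded by the ellipse with semi-axes `a` and `b` along the coordinate
axes. -/
def filledEllipse (a b : ℝ) : Set ℂ :=
  {p : ℂ | p.re ^ 2 / a ^ 2 + p.im ^ 2 / b ^ 2 ≤ 1}

theorem isClosed_filledEllipse (a b : ℝ) : IsClosed (filledEllipse a b) :=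
  isClosed_le (by fun_prop) continuous_const

theorem isBounded_filledEllipse {a b : ℝ} (ha : a ≠ 0) (hb : b ≠ 0) :
    Bornology.IsBounded (filledEllipse a b) := by
  refine isBounded_iff_forall_norm_le.2 ⟨|a| + |b|, fun p hp ↦ ?_⟩
  have hp_le : p.re ^ 2 / a ^ 2 + p.im ^ 2 / b ^ 2 ≤ 1 := hp
  have hre : p.re ^ 2 / a ^ 2 ≤ 1 := (le_add_of_nonneg_right (by positivity)).trans hp_le
  have him : p.im ^ 2 / b ^ 2 ≤ 1 := (le_add_of_nonneg_left (by positivity)).trans hp_le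
  exact (norm_le_abs_re_add_abs_im p).trans <| add_le_add
    (sq_le_sq.1 ((div_le_one (by positivity)).1 hre))
    (sq_le_sq.1 ((div_le_one (by positivity)).1 him))

/-- The Joukowski map, scaled so that it sends the circles `‖u‖ = t` with `1 < t` to the ellipses
with foci `± 2 * d`. -/
noncomputable def joukowski (d : ℝ) (u : ℂ) : ℂ :=
  d * (u + u⁻¹)

section Joukowski

variable {d R : ℝ}

theorem joukowski_re (d : ℝ) {u : ℂ} (hu : u ≠ 0) :
    (joukowski d u).re = d * (‖u‖ + ‖u‖⁻¹) * (u.re / ‖u‖) := by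
  have hnorm : ‖u‖ ≠ 0 := norm_ne_zero_iff.2 hu
  rw [joukowski, re_ofReal_mul, add_re, inv_re, normSq_eq_norm_sq]
  field_simp

theorem joukowski_im (d : ℝ) {u : ℂ} (hu : u ≠ 0) :
    (joukowski d u).im = d * (‖u‖ - ‖u‖⁻¹) * (u.im / ‖u‖) := by
  have hnorm : ‖u‖ ≠ 0 := norm_ne_zero_iff.2 hu
  rw [joukowski, im_ofReal_mul, add_im, inv_im, normSq_eq_norm_sq]
  field_simp
  ring

theorem re_div_norm_sq_add_im_div_norm_sq {u : ℂ} (hu : u ≠ 0) :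
    (u.re / ‖u‖) ^ 2 + (u.im / ‖u‖) ^ 2 = 1 := by
  rw [div_pow, div_pow, ← add_div, ← normSq_eq_norm_sq, normSq_apply, ← sq, ← sq, div_self]
  simpa [normSq_apply, ← sq] using normSq_eq_zero.not.2 hu

theorem joukowski_re_sq_div_add_im_sq_div (hd : d ≠ 0) (A B : ℝ) {u : ℂ} (hu : u ≠ 0) :
    (joukowski d u).re ^ 2 / (d * A) ^ 2 + (joukowski d u).im ^ 2 / (d * B) ^ 2 =
      ((‖u‖ + ‖u‖⁻¹) / A) ^ 2 * (u.re / ‖u‖) ^ 2 + ((‖u‖ - ‖u‖⁻¹) / B) ^ 2 * (u.im / ‖u‖) ^ 2 := by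
  rw [joukowski_re d hu, joukowski_im d hu, mul_assoc d, mul_assoc d, ← div_pow, ← div_pow,
    mul_div_mul_left _ _ hd, mul_div_mul_left _ _ hd, mul_div_right_comm, mul_div_right_comm,
    mul_pow, mul_pow]

theorem joukowski_mem_ellipse (hd : d ≠ 0) {u : ℂ} (hu : 1 < ‖u‖) :
    (joukowski d u).re ^ 2 / (d * (‖u‖ + ‖u‖⁻¹)) ^ 2 +
      (joukowski d u).im ^ 2 / (d * (‖u‖ - ‖u‖⁻¹)) ^ 2 = 1 := by
  have hu0 : u ≠ 0 := norm_pos_iff.1 (zero_lt_one.trans hu)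
  have hminor : ‖u‖ - ‖u‖⁻¹ ≠ 0 := (sub_pos.2 ((inv_lt_one_of_one_lt₀ hu).trans hu)).ne'
  have hmajor : ‖u‖ + ‖u‖⁻¹ ≠ 0 := by positivity
  rw [joukowski_re_sq_div_add_im_sq_div hd _ _ hu0, div_self hmajor, div_self hminor, one_pow,
    one_mul, one_mul, re_div_norm_sq_add_im_div_norm_sq hu0]

theorem strictMonoOn_add_inv : StrictMonoOn (fun t : ℝ ↦ t + t⁻¹) (Set.Ici 1) := by
  intro s hs t ht hst
  simp only [Set.mem_Ici] at hs ht
  have hs0 : 0 < s := by linarith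
  have ht0 : 0 < t := by linarith
  have factored : (t + t⁻¹) - (s + s⁻¹) = (t - s) * (s * t - 1) / (s * t) := by
    field_simp
    ring
  have hst1 : 1 < s * t := by nlinarith
  have : 0 < (t - s) * (s * t - 1) / (s * t) :=
    div_pos (mul_pos (sub_pos.2 hst) (sub_pos.2 hst1)) (mul_pos hs0 ht0)
  exact sub_pos.1 (factored ▸ this)

theorem strictMonoOn_sub_inv : StrictMonoOn (fun t : ℝ ↦ t - t⁻¹) (Set.Ioi 0) :=
  fun _ hs _ _ hst ↦ sub_lt_sub hst (inv_strictAnti₀ hs hst)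

theorem joukowski_mem_filledEllipse_iff (hd : d ≠ 0) (hR : 1 < R) {u : ℂ} (hu : 1 ≤ ‖u‖) :
    joukowski d u ∈ filledEllipse (d * (R + R⁻¹)) (d * (R - R⁻¹)) ↔ ‖u‖ ≤ R := by
  have hu0 : u ≠ 0 := norm_pos_iff.1 (zero_lt_one.trans_le hu)
  have hR0 : 0 < R := zero_lt_one.trans hR
  have hRpos : 0 < R - R⁻¹ := sub_pos.2 ((inv_lt_one_of_one_lt₀ hR).trans hR)
  have hupos : 0 ≤ ‖u‖ - ‖u‖⁻¹ := sub_nonneg.2 ((inv_le_one_of_one_le₀ hu).trans hu)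
  have hunit := re_div_norm_sq_add_im_div_norm_sq hu0
  rw [filledEllipse, Set.mem_ofPred_eq, joukowski_re_sq_div_add_im_sq_div hd _ _ hu0]
  set x := u.re / ‖u‖
  set y := u.im / ‖u‖
  rcases le_or_gt ‖u‖ R with hle | hlt
  · refine iff_of_true ?_ hle
    have hmajor : ((‖u‖ + ‖u‖⁻¹) / (R + R⁻¹)) ^ 2 ≤ 1 :=
      pow_le_one₀ (by positivity) ((div_le_one (by positivity)).2
        (strictMonoOn_add_inv.monotoneOn hu hR.le hle))
    have hminor : ((‖u‖ - ‖u‖⁻¹) / (R - R⁻¹)) ^ 2 ≤ 1 :=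
      pow_le_one₀ (by positivity) ((div_le_one hRpos).2
        (strictMonoOn_sub_inv.monotoneOn (norm_pos_iff.2 hu0) hR0 hle))
    calc
      _ ≤ 1 * x ^ 2 + 1 * y ^ 2 := by gcongr
      _ = 1 := by rw [one_mul, one_mul, hunit]
  · refine iff_of_false (not_le.2 ?_) hlt.not_ge
    have hmajor : 1 < ((‖u‖ + ‖u‖⁻¹) / (R + R⁻¹)) ^ 2 :=
      one_lt_pow₀ ((one_lt_div (by positivity)).2 (strictMonoOn_add_inv hR.le hu hlt)) two_ne_zero
    have hminor : 1 < ((‖u‖ - ‖u‖⁻¹) / (R - R⁻¹)) ^ 2 :=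
      one_lt_pow₀ ((one_lt_div hRpos).2
        (strictMonoOn_sub_inv hR0 (norm_pos_iff.2 hu0) hlt)) two_ne_zero
    have hxy : 0 < x ^ 2 ∨ 0 < y ^ 2 := by
      by_contra! h
      linarith
    rcases hxy with hpos | hpos <;> nlinarith [sq_nonneg x, sq_nonneg y]

theorem exists_joukowski_eq (hd : d ≠ 0) (z : ℂ) : ∃ u, 1 ≤ ‖u‖ ∧ joukowski d u = z := by
  have hdC : (d : ℂ) ≠ 0 := ofReal_ne_zero.2 hd
  obtain ⟨q, hq⟩ := IsAlgClosed.exists_pow_nat_eq ((z / (2 * d)) ^ 2 - 1) two_pos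
  have hmul : (z / (2 * d) + q) * (z / (2 * d) - q) = 1 := by linear_combination -hq
  have hne : z / (2 * d) + q ≠ 0 := left_ne_zero_of_mul_eq_one hmul
  have hinv : (z / (2 * d) + q)⁻¹ = z / (2 * d) - q := inv_eq_of_mul_eq_one_right hmul
  have hval : joukowski d (z / (2 * d) + q) = z := by
    rw [joukowski, hinv]
    field_simp
    ring
  rcases le_total 1 ‖z / (2 * d) + q‖ with h | h
  · exact ⟨_, h, hval⟩
  · refine ⟨(z / (2 * d) + q)⁻¹, ?_, ?_⟩
    · rw [norm_inv]
      exact (one_le_inv₀ (norm_pos_iff.2 hne)).2 h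
    · rw [joukowski, inv_inv, add_comm, ← joukowski, hval]

theorem injOn_joukowski (hd : d ≠ 0) : Set.InjOn (joukowski d) {u | 1 < ‖u‖} := by
  intro u hu v hv huv
  rw [Set.mem_ofPred_eq] at hu hv
  have hsum : u + u⁻¹ = v + v⁻¹ := mul_left_cancel₀ (ofReal_ne_zero.2 hd) huv
  refine ((add_inv_eq_add_inv_iff (norm_pos_iff.1 (zero_lt_one.trans hu))
    (norm_pos_iff.1 (zero_lt_one.trans hv))).1 hsum).resolve_right fun huv1 ↦ ?_
  exact (one_lt_mul_of_lt_of_le hu hv.le).ne' (by rw [← norm_mul, huv1, norm_one])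

theorem image_joukowski_norm_gt (hd : d ≠ 0) (hR : 1 < R) :
    joukowski d '' {u | R < ‖u‖} = (filledEllipse (d * (R + R⁻¹)) (d * (R - R⁻¹)))ᶜ := by
  ext z
  constructor
  · rintro ⟨u, hu, rfl⟩
    exact (joukowski_mem_filledEllipse_iff hd hR (hR.trans hu).le).not.2 (not_le.2 hu)
  · intro hz
    obtain ⟨u, hu, rfl⟩ := exists_joukowski_eq hd z
    exact ⟨u, not_le.1 ((joukowski_mem_filledEllipse_iff hd hR hu).not.1 hz), rfl⟩

theorem image_joukowski_annulus_ae_eq (hd : d ≠ 0) (hR : 1 < R) :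
    joukowski d '' (norm ⁻¹' Set.Ioc 1 R) =ᵐ[volume]
      filledEllipse (d * (R + R⁻¹)) (d * (R - R⁻¹)) := by
  have hsub : joukowski d '' (norm ⁻¹' Set.Ioc 1 R) ⊆
      filledEllipse (d * (R + R⁻¹)) (d * (R - R⁻¹)) := by
    rintro _ ⟨u, hu, rfl⟩
    exact (joukowski_mem_filledEllipse_iff hd hR hu.1.le).2 hu.2
  refine hsub.eventuallyLE.antisymm (ae_le_set.2 (measure_mono_null ?_ volume_im_eq_zero))
  rintro z ⟨hz, hz_image⟩
  obtain ⟨u, hu, rfl⟩ := exists_joukowski_eq hd z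
  have huR := (joukowski_mem_filledEllipse_iff hd hR hu).1 hz
  have hu1 : ‖u‖ = 1 := hu.eq_of_not_lt' fun h ↦ hz_image ⟨u, ⟨h, huR⟩, rfl⟩
  have hu0 : u ≠ 0 := norm_ne_zero_iff.1 (hu1.trans_ne one_ne_zero)
  rw [Set.mem_ofPred_eq, joukowski_im d hu0, hu1]
  simp

theorem hasDerivAt_joukowski (d : ℝ) {u : ℂ} (hu : u ≠ 0) :
    HasDerivAt (joukowski d) (d * (1 - (u ^ 2)⁻¹)) u := by
  rw [sub_eq_add_neg]
  exact ((hasDerivAt_id u).add (hasDerivAt_inv hu)).const_mul (d : ℂ)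

end Joukowski

section CauchyTransform

variable {d R : ℝ}

theorem exists_joukowski_semiaxes {a b : ℝ} (hb : 0 < b) (hab : b < a) :
    ∃ d R : ℝ, 0 < d ∧ 1 < R ∧ a = d * (R + R⁻¹) ∧ b = d * (R - R⁻¹) := by
  have hsub : 0 < a - b := sub_pos.2 hab
  have hadd : 0 < a + b := by linarith
  have hc : 0 < √((a + b) * (a - b)) := Real.sqrt_pos.2 (mul_pos hadd hsub)
  have hsq := Real.sq_sqrt (mul_pos hadd hsub).le
  set c := √((a + b) * (a - b))
  refine ⟨c / 2, (a + b) / c, half_pos hc, ?_, ?_, ?_⟩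
  · rw [one_lt_div hc]
    nlinarith
  · field_simp
    linear_combination -hsq
  · field_simp
    linear_combination hsq

theorem abs_det_fderiv_joukowski (d : ℝ) (u : ℂ) :
    |((d * (1 - (u ^ 2)⁻¹) : ℂ) • (1 : ℂ →L[ℝ] ℂ)).det| = normSq (d * (1 - (u ^ 2)⁻¹)) := by
  rw [det_smul_one_eq_normSq, abs_of_nonneg (normSq_nonneg _)]

theorem setIntegral_filledEllipse_eq_integral_circleAverage {E : Type*} [NormedAddCommGroup E]
    [NormedSpace ℝ E] (hd : d ≠ 0) (hR : 1 < R) {f : ℂ → E}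
    (hf : IntegrableOn f (filledEllipse (d * (R + R⁻¹)) (d * (R - R⁻¹)))) :
    ∫ ζ in filledEllipse (d * (R + R⁻¹)) (d * (R - R⁻¹)), f ζ =
      ∫ t in Set.Ioc 1 R, (2 * Real.pi * t) •
        circleAverage (fun u ↦ normSq (d * (1 - (u ^ 2)⁻¹)) • f (joukowski d u)) 0 t := by
  have hmeas : MeasurableSet (norm ⁻¹' Set.Ioc 1 R : Set ℂ) := measurable_norm measurableSet_Ioc
  have hderiv : ∀ u ∈ (norm ⁻¹' Set.Ioc 1 R : Set ℂ), HasFDerivWithinAt (joukowski d)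
      ((d * (1 - (u ^ 2)⁻¹) : ℂ) • (1 : ℂ →L[ℝ] ℂ)) (norm ⁻¹' Set.Ioc 1 R) u := fun u hu ↦
    (hasDerivAt_joukowski d
      (norm_pos_iff.1 (zero_lt_one.trans hu.1))).complexToReal_fderiv.hasFDerivWithinAt
  have hinj : Set.InjOn (joukowski d) (norm ⁻¹' Set.Ioc 1 R) :=
    (injOn_joukowski hd).mono fun _ hu ↦ hu.1
  rw [← integrableOn_congr_set_ae (image_joukowski_annulus_ae_eq hd hR),
    integrableOn_image_iff_integrableOn_abs_det_fderiv_smul volume hmeas hderiv hinj] at hf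
  rw [← setIntegral_congr_set (image_joukowski_annulus_ae_eq hd hR),
    integral_image_eq_integral_abs_det_fderiv_smul volume hmeas hderiv hinj]
  simp only [abs_det_fderiv_joukowski] at hf ⊢
  exact setIntegral_norm_preimage_eq_integral_circleAverage measurableSet_Ioc
    (fun t ht ↦ zero_lt_one.trans ht.1) hf

theorem differentiableOn_mul_inv_sub {g : ℂ → ℂ} (hg : Differentiable ℂ g) {v : ℂ} {r : ℝ}
    (hr : r < ‖v‖) : DifferentiableOn ℂ (fun u ↦ g u * (v - u)⁻¹) (Metric.closedBall 0 r) := by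
  refine hg.differentiableOn.mul (((differentiableOn_const v).sub differentiableOn_id).inv ?_)
  intro u hu huv
  rw [mem_closedBall_zero_iff] at hu
  exact (hr.trans_le' hu).ne' (congrArg norm (sub_eq_zero.1 huv))

theorem circleAverage_mul_inv_sub {g : ℂ → ℂ} (hg : Differentiable ℂ g) {v : ℂ} {r : ℝ}
    (hr : |r| < ‖v‖) : circleAverage (fun u ↦ g u * (v - u)⁻¹) 0 r = g 0 * v⁻¹ := by
  simpa using ((differentiableOn_mul_inv_sub hg hr).diffContOnCl_ball subset_rfl).circleAverage

/-- As `conj u = t ^ 2 / u` on the circle, the kernel splits into a function holomorphic in `u`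
inside the circle and a function of `u⁻¹` holomorphic outside it, to which the mean value property
applies. -/
theorem normSq_mul_inv_joukowski_sub (hd : d ≠ 0) {t : ℝ} (ht : 1 < t) {u v : ℂ} (hu : ‖u‖ = t)
    (hv : t < ‖v‖) :
    (normSq (d * (1 - (u ^ 2)⁻¹)) : ℂ) * (joukowski d v - joukowski d u)⁻¹ =
      d * (1 - ((t : ℂ) ^ 4)⁻¹ * u ^ 2) * (v - u)⁻¹ +
        d * (((t : ℂ) ^ 4)⁻¹ - u⁻¹ ^ 2) * (v - u⁻¹)⁻¹ := by
  have hdC : (d : ℂ) ≠ 0 := ofReal_ne_zero.2 hd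
  have ht0 : (t : ℂ) ≠ 0 := ofReal_ne_zero.2 (by linarith)
  have hu0 : u ≠ 0 := norm_pos_iff.1 (by linarith)
  have hv0 : v ≠ 0 := norm_pos_iff.1 (by linarith)
  have hvu : v - u ≠ 0 := sub_ne_zero.2 fun h ↦ by rw [h] at hv; linarith
  have hvu1 : u * v - 1 ≠ 0 := sub_ne_zero.2 fun h ↦ by
    have := congrArg norm h
    rw [norm_mul, norm_one, hu] at this
    nlinarith
  have hconj : conj u = t ^ 2 / u := by
    rw [eq_div_iff hu0, mul_comm, mul_conj, normSq_eq_norm_sq, hu, ofReal_pow]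
  have hvinv : v - u⁻¹ = (u * v - 1) / u := by field_simp
  have hdiff : joukowski d v - joukowski d u = d * (v - u) * (u * v - 1) / (u * v) := by
    rw [joukowski, joukowski]
    field_simp
    ring
  rw [← mul_conj, hdiff, hvinv]
  simp only [map_mul, map_sub, map_one, map_inv₀, map_pow, conj_ofReal, hconj]
  field_simp
  ring

theorem circleAverage_normSq_mul_inv_joukowski_sub (hd : d ≠ 0) {t : ℝ} (ht : 1 < t) {v : ℂ}
    (hv : t < ‖v‖) :
    circleAverage (fun u ↦ (normSq (d * (1 - (u ^ 2)⁻¹)) : ℂ) *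
      (joukowski d v - joukowski d u)⁻¹) 0 t = d * (1 + ((t : ℂ) ^ 4)⁻¹) * v⁻¹ := by
  have ht0 : 0 < t := by linarith
  have houter : |t| < ‖v‖ := by rwa [abs_of_pos ht0]
  have hinner : |t⁻¹| < ‖v‖ := by
    rw [abs_inv, abs_of_pos ht0]
    linarith [inv_lt_one_of_one_lt₀ ht]
  set s : ℂ := ((t : ℂ) ^ 4)⁻¹
  have hcont₁ : ContinuousOn (fun u ↦ d * (1 - s * u ^ 2) * (v - u)⁻¹) (Metric.sphere 0 |t|) :=
    (differentiableOn_mul_inv_sub (by fun_prop) houter).continuousOn.mono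
      Metric.sphere_subset_closedBall
  have hcont₂ : ContinuousOn (fun u ↦ d * (s - u⁻¹ ^ 2) * (v - u⁻¹)⁻¹) (Metric.sphere 0 |t|) := by
    refine (differentiableOn_mul_inv_sub (g := fun u ↦ d * (s - u ^ 2)) (by fun_prop)
      hinner).continuousOn.comp (continuousOn_inv₀.mono fun u hu ↦ ?_) fun u hu ↦ ?_
    · exact norm_ne_zero_iff.1 ((mem_sphere_zero_iff_norm.1 hu).trans_ne (by positivity))
    · rw [mem_closedBall_zero_iff, norm_inv, mem_sphere_zero_iff_norm.1 hu, abs_inv]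
  have hmean₂ := circleAverage_zero_comp_inv (fun u ↦ d * (s - u ^ 2) * (v - u)⁻¹) t
  rw [Real.circleAverage_congr_sphere fun u hu ↦ normSq_mul_inv_joukowski_sub hd ht
      ((mem_sphere_zero_iff_norm.1 hu).trans (abs_of_pos ht0)) hv,
    Real.circleAverage_fun_add hcont₁.circleIntegrable' hcont₂.circleIntegrable', hmean₂,
    circleAverage_mul_inv_sub (by fun_prop) houter,
    circleAverage_mul_inv_sub (by fun_prop) hinner]
  ring

/-- The density `ρ` is constant on each of the ellipses that lie inside `filledEllipse a b` and are
confocal with its boundary. The ellipses are parametrised by `lam`, with semi-axes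
`√(a ^ 2 + lam)` and `√(b ^ 2 + lam)`. -/
def IsConfocallyConstant (a b : ℝ) (ρ : ℂ → ℝ) : Prop :=
  ∃ m : ℝ → ℝ, ∀ lam : ℝ, -b ^ 2 < lam → lam < 0 →
    ∀ ζ : ℂ, ζ.re ^ 2 / (a ^ 2 + lam) + ζ.im ^ 2 / (b ^ 2 + lam) = 1 → ρ ζ = m lam

theorem IsConfocallyConstant.exists_joukowski_eq_norm (hd : 0 < d) (hR : 1 < R) {ρ : ℂ → ℝ}
    (hρ : IsConfocallyConstant (d * (R + R⁻¹)) (d * (R - R⁻¹)) ρ) :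
    ∃ m : ℝ → ℝ, ∀ u : ℂ, 1 < ‖u‖ → ‖u‖ < R → ρ (joukowski d u) = m ‖u‖ := by
  obtain ⟨m, hm⟩ := hρ
  refine ⟨fun t ↦ m ((d * (t - t⁻¹)) ^ 2 - (d * (R - R⁻¹)) ^ 2), fun u hu huR ↦ ?_⟩
  have hu0 : 0 < ‖u‖ := zero_lt_one.trans hu
  have hminor : 0 < d * (‖u‖ - ‖u‖⁻¹) :=
    mul_pos hd (sub_pos.2 ((inv_lt_one_of_one_lt₀ hu).trans hu))
  have hminor_lt : d * (‖u‖ - ‖u‖⁻¹) < d * (R - R⁻¹) :=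
    mul_lt_mul_of_pos_left (strictMonoOn_sub_inv hu0 (zero_lt_one.trans hR) huR) hd
  have hfocal (t : ℝ) (ht : 0 < t) : (d * (t + t⁻¹)) ^ 2 = (d * (t - t⁻¹)) ^ 2 + 4 * d ^ 2 := by
    field_simp
    ring
  refine hm _ (by linarith [pow_pos hminor 2]) (sub_neg.2 (by gcongr)) _ ?_
  rw [add_sub_cancel, hfocal R (by linarith), add_right_comm, add_sub_cancel, ← hfocal _ hu0]
  exact joukowski_mem_ellipse hd.ne' hu

theorem integrableOn_mul_inv_sub {K : Set ℂ} (hK : IsClosed K) {ρ : ℂ → ℂ}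
    (hρ : IntegrableOn ρ K) {z : ℂ} (hz : z ∉ K) : IntegrableOn (fun ζ ↦ ρ ζ * (z - ζ)⁻¹) K := by
  rcases K.eq_empty_or_nonempty with rfl | hne
  · exact integrableOn_empty
  refine Integrable.mul_bdd (c := (Metric.infDist z K)⁻¹) hρ (by fun_prop)
    ((ae_restrict_mem hK.measurableSet).mono fun ζ hζ ↦ ?_)
  rw [norm_inv, ← dist_eq]
  exact inv_anti₀ ((hK.notMem_iff_infDist_pos hne).1 hz) (Metric.infDist_le_dist_of_mem hζ)

theorem exists_cauchyTransform_joukowski_eq (hd : 0 < d) (hR : 1 < R) {ρ : ℂ → ℝ}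
    (hinteg : IntegrableOn ρ (filledEllipse (d * (R + R⁻¹)) (d * (R - R⁻¹))))
    (hρ : IsConfocallyConstant (d * (R + R⁻¹)) (d * (R - R⁻¹)) ρ) :
    ∃ κ : ℝ, ∀ v : ℂ, R < ‖v‖ →
      ∫ ζ in filledEllipse (d * (R + R⁻¹)) (d * (R - R⁻¹)), (ρ ζ : ℂ) / (joukowski d v - ζ) =
        d * κ * v⁻¹ := by
  obtain ⟨m, hm⟩ := hρ.exists_joukowski_eq_norm hd hR
  refine ⟨∫ t in Set.Ioo 1 R, 2 * Real.pi * t * (m t * (1 + (t ^ 4)⁻¹)), fun v hv ↦ ?_⟩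
  have hv_out : joukowski d v ∉ filledEllipse (d * (R + R⁻¹)) (d * (R - R⁻¹)) :=
    (joukowski_mem_filledEllipse_iff hd.ne' hR (hR.trans hv).le).not.2 hv.not_ge
  have hkernel := integrableOn_mul_inv_sub (ρ := fun ζ ↦ (ρ ζ : ℂ)) (isClosed_filledEllipse _ _)
    hinteg.ofReal hv_out
  simp only [div_eq_mul_inv]
  rw [setIntegral_filledEllipse_eq_integral_circleAverage hd.ne' hR hkernel,
    integral_Ioc_eq_integral_Ioo, ← integral_complex_ofReal, mul_assoc, ← integral_mul_const,
    ← integral_const_mul]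
  refine setIntegral_congr_fun measurableSet_Ioo fun t ht ↦ ?_
  have hcircle : circleAverage (fun u ↦ normSq (d * (1 - (u ^ 2)⁻¹)) •
      ((ρ (joukowski d u) : ℂ) * (joukowski d v - joukowski d u)⁻¹)) 0 t =
      m t • (d * (1 + ((t : ℂ) ^ 4)⁻¹) * v⁻¹) := by
    rw [← circleAverage_normSq_mul_inv_joukowski_sub hd.ne' ht.1 (ht.2.trans hv),
      ← Real.circleAverage_fun_smul]
    refine Real.circleAverage_congr_sphere fun u hu ↦ ?_
    have hut : ‖u‖ = t :=
      (mem_sphere_zero_iff_norm.1 hu).trans (abs_of_pos (zero_lt_one.trans ht.1))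
    rw [hm u (hut ▸ ht.1) (hut ▸ ht.2), hut, real_smul, real_smul, mul_left_comm]
  refine (congrArg ((2 * Real.pi * t) • ·) hcircle).trans ?_
  simp only [real_smul]
  push_cast
  ring

end CauchyTransform

section ImagePolynomial

open Polynomial

theorem coeffs_eq_zero_of_quadratic_mul_quadratic_add_eq_zero {A : Type*} [CommRing A]
    {a₂ a₁ a₀ b₂ b₁ b₀ k : A}
    (h : (C a₂ * X ^ 2 + C a₁ * X + C a₀) * (C b₂ * X ^ 2 + C b₁ * X + C b₀) + C k * X ^ 2 = 0) :
    a₂ * b₂ = 0 ∧ a₂ * b₁ + a₁ * b₂ = 0 ∧ a₂ * b₀ + a₁ * b₁ + a₀ * b₂ + k = 0 ∧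
      a₁ * b₀ + a₀ * b₁ = 0 ∧ a₀ * b₀ = 0 := by
  have hexpand : C (a₂ * b₂) * X ^ 4 + C (a₂ * b₁ + a₁ * b₂) * X ^ 3 +
      C (a₂ * b₀ + a₁ * b₁ + a₀ * b₂ + k) * X ^ 2 + C (a₁ * b₀ + a₀ * b₁) * X ^ 1 +
        C (a₀ * b₀) * X ^ 0 = 0 := by
    rw [← h]
    simp only [map_add, map_mul]
    ring
  have hcoeff (n : ℕ) := congrArg (coeff · n) hexpand
  simp only [coeff_add, coeff_C_mul_X_pow, coeff_zero] at hcoeff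
  exact ⟨by simpa using hcoeff 4, by simpa using hcoeff 3, by simpa using hcoeff 2,
    by simpa using hcoeff 1, by simpa using hcoeff 0⟩

variable {γ ω u : ℂ} {κ : ℝ}

/-- The quartic satisfied by the Joukowski coordinate `u` of a bright image, for shear `γ`, source
`d * ω` and total mass `d ^ 2 * κ`. The image equation and its conjugate form a linear system for
`conj u` and `(conj u)⁻¹`; it gives the two quadratic factors the values `-κ * conj u * u` and
`κ * (conj u)⁻¹ * u`. -/
noncomputable def imagePolynomial (γ ω : ℂ) (κ : ℝ) : ℂ[X] :=
  (C (1 - (conj γ + κ) * γ) * X ^ 2 + C (-(ω + (conj γ + κ) * conj ω)) * X +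
      C (1 - (conj γ + κ) * (γ + κ))) *
    (C (1 - conj γ * γ) * X ^ 2 + C (-(ω + conj γ * conj ω)) * X + C (1 - conj γ * (γ + κ))) +
  C ((κ : ℂ) ^ 2) * X ^ 2

theorem natDegree_imagePolynomial_le (γ ω : ℂ) (κ : ℝ) : (imagePolynomial γ ω κ).natDegree ≤ 4 := by
  unfold imagePolynomial
  compute_degree

/-- The Joukowski coordinates of the bright images, for shear `γ`, source `d * ω` and total mass
`d ^ 2 * κ`. The boundary of the lens is the circle `‖u‖ = R`. -/
def exteriorImages (R : ℝ) (γ ω : ℂ) (κ : ℝ) : Set ℂ :=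
  {u | R < ‖u‖ ∧ conj u + (conj u)⁻¹ = γ * u + (γ + κ) * u⁻¹ + conj ω}

theorem isRoot_imagePolynomial (hu : u ≠ 0)
    (h : conj u + (conj u)⁻¹ = γ * u + (γ + κ) * u⁻¹ + conj ω) :
    (imagePolynomial γ ω κ).IsRoot u := by
  have hconj : u + u⁻¹ = conj γ * conj u + (conj γ + κ) * (conj u)⁻¹ + ω := by
    simpa using congrArg conj h
  have hv : conj u ≠ 0 := by simpa
  have hsolve : κ * conj u * u = -((1 - (conj γ + κ) * γ) * u ^ 2 +
      -(ω + (conj γ + κ) * conj ω) * u + (1 - (conj γ + κ) * (γ + κ))) := by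
    linear_combination (conj γ + κ) * u * h + u * hconj +
      ((conj γ + κ) * (γ + κ) - 1) * mul_inv_cancel₀ hu
  have hsolve_inv : κ * (conj u)⁻¹ * u = (1 - conj γ * γ) * u ^ 2 +
      -(ω + conj γ * conj ω) * u + (1 - conj γ * (γ + κ)) := by
    linear_combination -u * hconj - conj γ * u * h + (1 - conj γ * (γ + κ)) * mul_inv_cancel₀ hu
  simp only [IsRoot.def, imagePolynomial, eval_add, eval_mul, eval_C, eval_X, eval_pow]
  rw [← hsolve_inv, ← neg_eq_iff_eq_neg.2 hsolve]
  linear_combination (-(κ : ℂ) ^ 2 * u ^ 2) * mul_inv_cancel₀ hv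

theorem exists_real_of_imagePolynomial_eq_zero (hκ : κ ≠ 0) (h : imagePolynomial γ ω κ = 0) :
    ∃ g : ℝ, γ = g ∧ ω = 0 ∧ g * g ≠ 1 ∧ g * (g + κ) = 1 := by
  have hκC : (κ : ℂ) ≠ 0 := ofReal_ne_zero.2 hκ
  obtain ⟨h₄, h₃, h₂, h₁, h₀⟩ := coeffs_eq_zero_of_quadratic_mul_quadratic_add_eq_zero h
  have hconj : conj (1 - (conj γ + κ) * γ) = 1 - conj γ * (γ + κ) := by simp [mul_comm]
  have hlead : 1 - (conj γ + κ) * γ = 0 := by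
    by_contra hlead
    have hlast : 1 - conj γ * (γ + κ) ≠ 0 := hconj ▸ (_root_.map_ne_zero conj).2 hlead
    have hnorm : 1 - conj γ * γ = 0 := (mul_eq_zero.1 h₄).resolve_left hlead
    have hlin : -(ω + conj γ * conj ω) = 0 := by
      rw [hnorm, mul_zero, add_zero] at h₃
      exact (mul_eq_zero.1 h₃).resolve_left hlead
    rw [hlin, hnorm, ← hconj, mul_conj, mul_zero, mul_zero, add_zero, add_zero] at h₂
    norm_cast at h₂
    exact (add_pos_of_nonneg_of_pos (normSq_nonneg _) (by positivity)).ne' h₂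
  have hlast : 1 - conj γ * (γ + κ) = 0 := by rw [← hconj, hlead, map_zero]
  have hreal : conj γ = γ := mul_right_cancel₀ hκC (by linear_combination hlead - hlast)
  have hnorm : 1 - conj γ * γ ≠ 0 := fun hnorm ↦ by
    have hγ : conj γ * κ = 0 := by linear_combination hnorm - hlast
    simp [(mul_eq_zero.1 hγ).resolve_right hκC] at hlast
  have hlin₁ : -(ω + (conj γ + κ) * conj ω) = 0 := by
    rw [hlead, zero_mul, zero_add] at h₃
    exact (mul_eq_zero.1 h₃).resolve_right hnorm
  have hmid : 1 - (conj γ + κ) * (γ + κ) ≠ 0 := fun hmid ↦ by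
    simp [hlin₁, hlead, hmid, hκ] at h₂
  have hlin₂ : -(ω + conj γ * conj ω) = 0 := by
    rw [hlast, mul_zero, zero_add] at h₁
    exact (mul_eq_zero.1 h₁).resolve_left hmid
  have hω : κ * conj ω = 0 := by linear_combination hlin₂ - hlin₁
  obtain ⟨g, rfl⟩ := conj_eq_iff_real.1 hreal
  rw [conj_ofReal, sub_ne_zero] at hnorm
  rw [conj_ofReal, sub_eq_zero] at hlast
  exact ⟨g, rfl, by simpa [hκ] using hω, mod_cast hnorm.symm, mod_cast hlast.symm⟩

end ImagePolynomial

section BrightImages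

variable {R κ : ℝ} {γ ω : ℂ}

theorem ncard_exteriorImages_le_four_of_imagePolynomial_ne_zero (hR : 0 ≤ R)
    (h : imagePolynomial γ ω κ ≠ 0) : (exteriorImages R γ ω κ).ncard ≤ 4 := by
  have hsub : exteriorImages R γ ω κ ⊆ (imagePolynomial γ ω κ).roots.toFinset := fun u hu ↦ by
    simpa using ⟨h, isRoot_imagePolynomial (norm_pos_iff.1 (hR.trans_lt hu.1)) hu.2⟩
  calc
    (exteriorImages R γ ω κ).ncard ≤ (imagePolynomial γ ω κ).roots.toFinset.card :=
      Set.ncard_coe_finset _ ▸ Set.ncard_le_ncard hsub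
    _ ≤ (imagePolynomial γ ω κ).roots.card := Multiset.toFinset_card_le _
    _ ≤ 4 := (Polynomial.card_roots' _).trans (natDegree_imagePolynomial_le γ ω κ)

/-- Here the image equation reads `conj u + (conj u)⁻¹ = g * u + (g * u)⁻¹`, so `conj u` is `g * u`,
which is impossible for its modulus, or `(g * u)⁻¹`. -/
theorem mem_exteriorImages_iff_of_mul_eq_one {g : ℝ} (hR : 0 ≤ R) (hg : g * g ≠ 1)
    (hgκ : g * (g + κ) = 1) {u : ℂ} :
    u ∈ exteriorImages R g 0 κ ↔ R < ‖u‖ ∧ g * ‖u‖ ^ 2 = 1 := by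
  refine and_congr_right fun hRu ↦ ?_
  have hu : u ≠ 0 := norm_pos_iff.1 (hR.trans_lt hRu)
  have hg0 : g ≠ 0 := left_ne_zero_of_mul_eq_one hgκ
  have hginv : ((g : ℂ) + κ) * u⁻¹ = (g * u)⁻¹ := by
    rw [mul_inv, ← ofReal_add, ← ofReal_inv, eq_inv_of_mul_eq_one_right hgκ]
  have hne : conj u ≠ g * u := fun h ↦ hg <| by
    have hnorm : |g| = 1 := by
      simpa [hu] using (congrArg norm h).symm
    rw [← abs_mul_abs_self, hnorm, one_mul]
  rw [hginv, map_zero, add_zero, add_inv_eq_add_inv_iff (by simpa) (by simp [hg0, hu]),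
    or_iff_right hne, mul_left_comm, conj_mul', ← ofReal_pow, ← ofReal_mul, ofReal_eq_one]

theorem ncard_exteriorImages_le_four (hR : 0 ≤ R) (hκ : κ ≠ 0)
    (hfin : (exteriorImages R γ ω κ).Finite) : (exteriorImages R γ ω κ).ncard ≤ 4 := by
  by_cases h : imagePolynomial γ ω κ = 0
  · obtain ⟨g, rfl, rfl, hg, hgκ⟩ := exists_real_of_imagePolynomial_eq_zero hκ h
    suffices hempty : exteriorImages R g 0 κ = ∅ by simp [hempty]
    refine Set.eq_empty_of_forall_notMem fun u hu ↦ ?_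
    have hcircle := infinite_sphere_zero_norm (rank_real_complex ▸ Cardinal.one_lt_two)
      (norm_pos_iff.1 (hR.trans_lt hu.1))
    refine hcircle (hfin.subset fun u' hu' ↦ ?_)
    rwa [mem_exteriorImages_iff_of_mul_eq_one hR hg hgκ, mem_sphere_zero_iff_norm.1 hu',
      ← mem_exteriorImages_iff_of_mul_eq_one hR hg hgκ]
  · exact ncard_exteriorImages_le_four_of_imagePolynomial_ne_zero hR h

/-- The solutions outside `Ω` of the lens equation for the mass density `ρ` on `Ω`, with external
shear `γ` and a source at `w`. -/
def brightImages (Ω : Set ℂ) (ρ : ℂ → ℝ) (γ w : ℂ) : Set ℂ :=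
  {z | z ∉ Ω ∧ conj z - (∫ ζ in Ω, (ρ ζ : ℂ) / (z - ζ)) - γ * z = conj w}

theorem brightImages_eq_image_joukowski {d : ℝ} (hd : d ≠ 0) (hR : 1 < R) {ρ : ℂ → ℝ}
    (hκ : ∀ v : ℂ, R < ‖v‖ →
      ∫ ζ in filledEllipse (d * (R + R⁻¹)) (d * (R - R⁻¹)), (ρ ζ : ℂ) / (joukowski d v - ζ) =
        d * κ * v⁻¹) (w : ℂ) :
    brightImages (filledEllipse (d * (R + R⁻¹)) (d * (R - R⁻¹))) ρ γ w =
      joukowski d '' exteriorImages R γ (w / d) κ := by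
  have hdC : (d : ℂ) ≠ 0 := ofReal_ne_zero.2 hd
  have hiff (u : ℂ) (hu : R < ‖u‖) :
      joukowski d u ∈ brightImages (filledEllipse (d * (R + R⁻¹)) (d * (R - R⁻¹))) ρ γ w ↔
        u ∈ exteriorImages R γ (w / d) κ := by
    have hu_out := (joukowski_mem_filledEllipse_iff hd hR (hR.trans hu).le).not.2 hu.not_ge
    have hscale : conj (joukowski d u) - d * κ * u⁻¹ - γ * joukowski d u - conj w =
        d * (conj u + (conj u)⁻¹ - (γ * u + (γ + κ) * u⁻¹ + conj (w / d))) := by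
      simp only [joukowski, map_mul, map_add, map_inv₀, map_div₀, conj_ofReal]
      field_simp
      ring
    rw [brightImages, Set.mem_ofPred_eq, and_iff_right hu_out, hκ u hu, ← sub_eq_zero, hscale,
      mul_eq_zero, or_iff_right hdC, sub_eq_zero, exteriorImages, Set.mem_ofPred_eq,
      and_iff_right hu]
  ext z
  constructor
  · intro hz
    obtain ⟨u, hu, rfl⟩ := (image_joukowski_norm_gt hd hR).ge hz.1
    exact ⟨u, (hiff u hu).1 hz, rfl⟩
  · rintro ⟨u, hu, rfl⟩
    exact (hiff u hu.1).2 hu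

theorem subsingleton_brightImages_of_integral_eq_zero {Ω : Set ℂ}
    (hΩ : Bornology.IsBounded Ω) {ρ : ℂ → ℝ} {w : ℂ}
    (hzero : ∀ z ∉ Ω, ∫ ζ in Ω, (ρ ζ : ℂ) / (z - ζ) = 0) (hfin : (brightImages Ω ρ γ w).Finite) :
    (brightImages Ω ρ γ w).Subsingleton := by
  let L : ℂ →ₗ[ℝ] ℂ := conjLIE.toLinearMap - LinearMap.mulLeft ℝ γ
  have heq : brightImages Ω ρ γ w = L ⁻¹' {conj w} \ Ω := by
    ext z
    simp +contextual [brightImages, L, and_comm, hzero]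
  rw [heq] at hfin ⊢
  exact (subsingleton_preimage_of_finite_diff L _ hΩ hfin).anti Set.sdiff_subset

theorem confocal_density_lens_at_most_four_bright_images_general
    {a b : ℝ} (hb : 0 < b) (hab : b < a) {ρ : ℂ → ℝ} (hinteg : IntegrableOn ρ (filledEllipse a b))
    (hρ : IsConfocallyConstant a b ρ) {γ w : ℂ}
    (hfin : (brightImages (filledEllipse a b) ρ γ w).Finite) :
    (brightImages (filledEllipse a b) ρ γ w).ncard ≤ 4 := by
  have hbdd := isBounded_filledEllipse (hb.trans hab).ne' hb.ne'
  obtain ⟨d, R, hd, hR, rfl, rfl⟩ := exists_joukowski_semiaxes hb hab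
  obtain ⟨κ, hκ⟩ := exists_cauchyTransform_joukowski_eq hd hR hinteg hρ
  have hinj : Set.InjOn (joukowski d) (exteriorImages R γ (w / d) κ) :=
    (injOn_joukowski hd.ne').mono fun u hu ↦ hR.trans hu.1
  have himage := brightImages_eq_image_joukowski (γ := γ) hd.ne' hR hκ w
  by_cases hκ0 : κ = 0
  · have hsub := subsingleton_brightImages_of_integral_eq_zero hbdd (fun z hz ↦ ?_) hfin
    · exact ((Set.ncard_le_one hfin).2 fun _ hz _ hz' ↦ hsub hz hz').trans (by norm_num)
    · obtain ⟨v, hv, rfl⟩ := (image_joukowski_norm_gt hd.ne' hR).ge hz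
      simp [hκ v hv, hκ0]
  · rw [himage, hinj.ncard_image]
    exact ncard_exteriorImages_le_four (by linarith) hκ0 (.of_finite_image (himage ▸ hfin) hinj)

end BrightImages

/-- An elliptic lens whose mass density is constant on the ellipses confocal with the
boundary produces at most 4 bright images outside the ellipse. -/
theorem confocal_density_lens_at_most_four_bright_images
    (a b : ℝ) (hb : 0 < b) (hab : b < a)
    (c : ℝ) (hc : c = Real.sqrt (a ^ 2 - b ^ 2))
    (Ω : Set ℂ) (hΩ : Ω = {p : ℂ | p.re ^ 2 / a ^ 2 + p.im ^ 2 / b ^ 2 ≤ 1})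
    (ρ : ℂ → ℝ) (hnonneg : ∀ ζ, 0 ≤ ρ ζ) (hinteg : Integrable ρ)
    (hvanish : ∀ ζ ∉ Ω, ρ ζ = 0)
    (hconfocal : ∃ m : ℝ → ℝ, ∀ lam : ℝ, -b ^ 2 < lam → lam < 0 →
      ∀ ζ : ℂ, ζ.re ^ 2 / (a ^ 2 + lam) + ζ.im ^ 2 / (b ^ 2 + lam) = 1 → ρ ζ = m lam)
    (γ : ℝ) (w : ℂ)
    (S : Set ℂ)
    (hS : S = {z : ℂ | z ∉ Ω ∧
      starRingEnd ℂ z - (∫ ζ in Ω, (ρ ζ : ℂ) / (z - ζ)) - (γ : ℂ) * z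
        = starRingEnd ℂ w})
    (hfin : S.Finite) :
    S.ncard ≤ 4 := by
  subst hΩ hS
  exact confocal_density_lens_at_most_four_bright_images_general hb hab hinteg.integrableOn
    hconfocal hfin
end
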